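/- arXiv:2201.01345 — 3 statements merged into one kernel-verified Lean document; each statement's English description precedes it below -/
import Mathlib

section
/- (Theorem D, Matricial Real Nullstellensatz) For any matrix polynomials P₁, …, P_m, Q ∈ M_n(ℝ[x₁, …, x_d]) the following are equivalent: (1) for every a ∈ ℝ^d and every vector v ∈ ℝ^n such that P₁(a)v = ⋯ = P_m(a)v = 0, one has Q(a)v = 0; (2) Q belongs to every real left ideal of M_n(ℝ[x₁, …, x_d]) that contains P₁, …, P_m. -/
section Frozen
open MvPolynomial Matrix

/-- A left ideal `I` of the matrix ring `Mₙ(ℝ[x₁,…,x_d])`, equipped with the transpose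
involution, is *real* if whenever `(A 0)ᵀ * A 0 + ⋯ + (A (k-1))ᵀ * A (k-1) ∈ I`,
each `A i` lies in `I`.  (In Mathlib, `Ideal` means left ideal.) -/
def Ideal.IsRealLeftIdealT {R : Type*} [CommRing R] {n : ℕ}
    (I : Ideal (Matrix (Fin n) (Fin n) R)) : Prop :=
  ∀ (k : ℕ) (A : Fin k → Matrix (Fin n) (Fin n) R),
    (∑ i, (A i)ᵀ * A i) ∈ I → ∀ i, A i ∈ I

/-- Entrywise evaluation of a matrix polynomial at a real point. -/
noncomputable def evalMat {d n : ℕ} (a : Fin d → ℝ)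
    (P : Matrix (Fin n) (Fin n) (MvPolynomial (Fin d) ℝ)) : Matrix (Fin n) (Fin n) ℝ :=
  fun i j => eval a (P i j)

end Frozen

section PartA
open Polynomial

/-- polynomial intermediate value property -/
def RC (K : Type*) [Field K] [LinearOrder K] : Prop :=
  ∀ (f : K[X]) (a b : K), a < b → f.eval a * f.eval b < 0 → ∃ c, a < c ∧ c < b ∧ f.eval c = 0

section RCbasic
variable {K : Type*} [Field K] [LinearOrder K] [IsStrictOrderedRing K]

theorem RC.same_sign (h : RC K) (f : K[X]) {a b : K} (hab : a ≤ b)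
    (hn : ∀ c, a ≤ c → c ≤ b → f.eval c ≠ 0) : 0 < f.eval a * f.eval b := by
  rcases hab.eq_or_lt with rfl | hlt
  · exact mul_self_pos.2 (hn a le_rfl le_rfl)
  · by_contra hcon
    rcases (not_lt.1 hcon).lt_or_eq with h1 | h1
    · obtain ⟨c, h2, h3, h4⟩ := h f a b hlt h1
      exact hn c h2.le h3.le h4
    · rcases mul_eq_zero.1 h1 with h2 | h2
      · exact hn a le_rfl hab h2
      · exact hn b hab le_rfl h2

theorem RC.rolle (h : RC K) (f : K[X]) {a b : K} (hab : a < b) (ha : f.eval a = 0)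
    (hb : f.eval b = 0) : ∃ c, a < c ∧ c < b ∧ (derivative f).eval c = 0 := by
  classical
  by_cases hf : f = 0
  · subst hf
    obtain ⟨c, h1, h2⟩ := exists_between hab
    exact ⟨c, h1, h2, by simp⟩
  -- next root
  let T := f.roots.toFinset.filter (fun x => a < x ∧ x ≤ b)
  have hT : T.Nonempty := ⟨b, by simp [T, hf, hb, hab]⟩
  let b' := T.min' hT
  have hb'T : b' ∈ T := T.min'_mem hT
  have hmem : ∀ x, x ∈ T ↔ f.eval x = 0 ∧ a < x ∧ x ≤ b := by
    intro x; simp [T, hf]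
  obtain ⟨hb0, hab', hb'b⟩ := (hmem b').1 hb'T
  have hno : ∀ c, a < c → c < b' → f.eval c ≠ 0 := by
    intro c h1 h2 h3
    have : c ∈ T := (hmem c).2 ⟨h3, h1, h2.le.trans hb'b⟩
    exact absurd (T.min'_le c this) (not_le.2 h2)
  obtain ⟨q, hq, hqa⟩ := exists_eq_pow_rootMultiplicity_mul_and_not_dvd f hf a
  have hq0 : q ≠ 0 := by rintro rfl; simp at hqa
  obtain ⟨g, hg, hgb⟩ := exists_eq_pow_rootMultiplicity_mul_and_not_dvd q hq0 b'
  have hm : 0 < rootMultiplicity a f := (rootMultiplicity_pos hf).2 ha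
  have hq_a : q.eval a ≠ 0 := by rwa [dvd_iff_isRoot] at hqa
  have hg_b : g.eval b' ≠ 0 := by rwa [dvd_iff_isRoot] at hgb
  have hqb : q.eval b' = 0 := by
    rw [hq] at hb0
    simp only [eval_mul, eval_pow, eval_sub, eval_X, eval_C] at hb0
    exact (mul_eq_zero.1 hb0).resolve_left (pow_ne_zero _ (sub_ne_zero.2 hab'.ne'))
  have hn : 0 < rootMultiplicity b' q := (rootMultiplicity_pos hq0).2 hqb
  obtain ⟨m, hm'⟩ := Nat.exists_eq_succ_of_ne_zero hm.ne'
  obtain ⟨n, hn'⟩ := Nat.exists_eq_succ_of_ne_zero hn.ne'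
  rw [hm'] at hq
  rw [hn'] at hg
  have hfg : f = (X - C a) ^ (m+1) * ((X - C b') ^ (n+1) * g) := by rw [← hg]; exact hq
  have hga : g.eval a ≠ 0 := by
    intro h0; apply hq_a; rw [hg]; simp [h0]
  have hgn : ∀ c, a ≤ c → c ≤ b' → g.eval c ≠ 0 := by
    intro c h1 h2 h3
    rcases h1.eq_or_lt with rfl | h1
    · exact hga h3
    rcases h2.eq_or_lt with rfl | h2
    · exact hg_b h3
    exact hno c h1 h2 (by rw [hfg]; simp [h3])
  have hs := h.same_sign g hab'.le hgn
  let H : K[X] := C ((m:K)+1) * (X - C b') * g + C ((n:K)+1) * (X - C a) * g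
    + (X - C a) * (X - C b') * derivative g
  have hder : derivative f = (X - C a)^m * (X - C b')^n * H := by
    rw [hfg]
    simp only [derivative_mul, derivative_pow, derivative_sub, derivative_X, derivative_C, H]
    simp
    ring
  have hHa : H.eval a = ((m:K)+1) * (a - b') * g.eval a := by simp [H]
  have hHb : H.eval b' = ((n:K)+1) * (b' - a) * g.eval b' := by simp [H]
  have hneg : H.eval a * H.eval b' < 0 := by
    rw [hHa, hHb]
    have h1 : (0:K) < (m:K)+1 := by positivity
    have h2 : (0:K) < (n:K)+1 := by positivity
    have h3 : 0 < b' - a := sub_pos.2 hab'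
    have : ((m:K)+1) * (a - b') * g.eval a * (((n:K)+1) * (b' - a) * g.eval b')
      = - ((((m:K)+1) * ((n:K)+1)) * ((b' - a) * (b' - a)) * (g.eval a * g.eval b')) := by ring
    rw [this]
    have : 0 < (((m:K)+1) * ((n:K)+1)) * ((b' - a) * (b' - a)) * (g.eval a * g.eval b') := by
      positivity
    linarith
  obtain ⟨c, h1, h2, h3⟩ := h H a b' hab' hneg
  exact ⟨c, h1, h2.trans_le hb'b, by rw [hder]; simp [h3]⟩

/-- roots are bounded by elements of the coefficient field -/
theorem root_bound {S : Type*} [Field S] [LinearOrder S] [IsStrictOrderedRing S]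
    (i : S →+* K) (hi : StrictMono i) (f : S[X]) (hf : f ≠ 0) :
    ∃ M : S, ∀ α : K, f.eval₂ i α = 0 → i (-M) < α ∧ α < i M := by
  set m := f.natDegree with hm
  have habs : ∀ x, |i x| = i |x| := by
    intro x
    rcases le_total 0 x with h | h
    · rw [abs_of_nonneg h, abs_of_nonneg (by simpa using hi.monotone h)]
    · rw [abs_of_nonpos h, abs_of_nonpos (by simpa using hi.monotone h), map_neg]
  refine ⟨1 + ∑ k ∈ Finset.range m, |f.coeff k / f.leadingCoeff| + 1, ?_⟩
  intro α hα
  have hl : i f.leadingCoeff ≠ 0 := by simpa using hf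
  have hB : 0 ≤ ∑ k ∈ Finset.range m, i |f.coeff k / f.leadingCoeff| := by
    apply Finset.sum_nonneg; intro k _; rw [← habs]; positivity
  suffices hs : |α| ≤ 1 + ∑ k ∈ Finset.range m, i |f.coeff k / f.leadingCoeff| by
    have := abs_le.1 hs
    constructor
    · simp only [map_neg, map_add, map_one, map_sum]; linarith [this.1]
    · simp only [map_add, map_one, map_sum]; linarith [this.2]
  by_cases h1 : |α| ≤ 1
  · linarith
  push Not at h1
  have h2 : α ^ m = - ∑ k ∈ Finset.range m, i (f.coeff k / f.leadingCoeff) * α ^ k := by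
    rw [eval₂_eq_sum_range, Finset.sum_range_succ] at hα
    have h3 : f.coeff f.natDegree = f.leadingCoeff := rfl
    rw [h3] at hα
    have h4 : ∑ k ∈ Finset.range m, i (f.coeff k / f.leadingCoeff) * α ^ k =
      (∑ k ∈ Finset.range m, i (f.coeff k) * α ^ k) / i f.leadingCoeff := by
      rw [Finset.sum_div]
      apply Finset.sum_congr rfl
      intro k _
      rw [map_div₀]; ring
    rw [h4]
    field_simp
    linear_combination hα
  have hm0 : m ≠ 0 := by
    intro h0
    rw [h0] at h2
    simp at h2
  obtain ⟨k, hk⟩ := Nat.exists_eq_succ_of_ne_zero hm0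
  have h5 : |α| ^ m ≤ (∑ j ∈ Finset.range m, i |f.coeff j / f.leadingCoeff|) * |α| ^ k := by
    rw [← abs_pow, h2, abs_neg, Finset.sum_mul]
    refine (Finset.abs_sum_le_sum_abs _ _).trans (Finset.sum_le_sum ?_)
    intro j hj
    rw [abs_mul, habs, abs_pow]
    have : |α| ^ j ≤ |α| ^ k := pow_le_pow_right₀ h1.le (by have := Finset.mem_range.1 hj; omega)
    gcongr
    rw [← habs]; positivity
  have h6 : 0 < |α| ^ k := by positivity
  have h7 : |α| ^ m = |α| * |α| ^ k := by rw [hk, pow_succ]; ring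
  rw [h7] at h5
  have := le_of_mul_le_mul_right h5 h6
  linarith
end RCbasic

end PartA

section PartB
open Polynomial

section core
variable {S K R' : Type*} [Field S] [LinearOrder S] [IsStrictOrderedRing S]
  [Field K] [LinearOrder K] [IsStrictOrderedRing K]
  [Field R'] [LinearOrder R'] [IsStrictOrderedRing R']

theorem core_interval (i : S →+* K) (hi : StrictMono i) (α : K) (lb ub : S)
    (hl : i lb < α) (hu : α < i ub) (hαS : ∀ s, i s ≠ α) (g : S[X]) (hg : g ≠ 0) :
    ∃ u v : S, lb ≤ u ∧ v ≤ ub ∧ i u < α ∧ α < i v ∧ ∀ s, u < s → s < v → g.eval s ≠ 0 := by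
  classical
  let lo := insert lb (g.roots.toFinset.filter (fun x => i x < α))
  let hi' := insert ub (g.roots.toFinset.filter (fun x => α < i x))
  have hlo : lo.Nonempty := ⟨lb, by simp [lo]⟩
  have hhi : hi'.Nonempty := ⟨ub, by simp [hi']⟩
  refine ⟨lo.max' hlo, hi'.min' hhi, ?_, ?_, ?_, ?_, ?_⟩
  · exact lo.le_max' _ (by simp [lo])
  · exact hi'.min'_le _ (by simp [hi'])
  · have := lo.max'_mem hlo
    simp only [lo, Finset.mem_insert, Finset.mem_filter] at this
    rcases this with h | h
    · simp only [lo]; rw [h]; exact hl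
    · exact h.2
  · have := hi'.min'_mem hhi
    simp only [hi', Finset.mem_insert, Finset.mem_filter] at this
    rcases this with h | h
    · simp only [hi']; rw [h]; exact hu
    · exact h.2
  · intro s h1 h2 h3
    rcases lt_or_gt_of_ne (hαS s) with h | h
    · have : s ∈ lo := by simp [lo, hg, h3, h]
      exact absurd (lo.le_max' _ this) (not_le.2 h1)
    · have : s ∈ hi' := by simp [hi', hg, h3, h]
      exact absurd (hi'.min'_le _ this) (not_le.2 h2)

theorem core_key {L : Type*} [Field L] [LinearOrder L] [IsStrictOrderedRing L] (hL : RC L)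
    (k : S →+* L) (hk : StrictMono k) (r : S[X]) (hr0 : r ≠ 0) (u' v' s : S)
    (hs1 : u' < s) (hs2 : s < v') (hno' : ∀ s, u' < s → s < v' → r.eval s ≠ 0)
    (HL : ∀ α, r.eval₂ k α = 0 → ∃ s, k s = α)
    (β : L) (hβ1 : k u' < β) (hβ2 : β < k v') : (0 < r.eval₂ k β ↔ 0 < r.eval s) := by
  have hnoL : ∀ x, k u' < x → x < k v' → (r.map k).eval x ≠ 0 := by
    intro x h1 h2 h3
    rw [eval_map] at h3
    obtain ⟨s, rfl⟩ := HL x h3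
    rw [eval₂_at_apply, map_eq_zero] at h3
    exact hno' s (hk.lt_iff_lt.1 h1) (hk.lt_iff_lt.1 h2) h3
  have hpos : 0 < (r.map k).eval β * (r.map k).eval (k s) := by
    rcases le_total β (k s) with h | h
    · exact hL.same_sign _ h (fun c h1 h2 => hnoL c (hβ1.trans_le h1) (h2.trans_lt (hk hs2)))
    · rw [mul_comm]
      exact hL.same_sign _ h (fun c h1 h2 => hnoL c ((hk hs1).trans_le h1) (h2.trans_lt hβ2))
  rw [eval_map, eval_map, eval₂_at_apply] at hpos
  have : 0 < r.eval s ↔ 0 < k (r.eval s) := by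
    rw [← map_zero k, hk.lt_iff_lt]
  rw [this]
  constructor
  · intro h; exact (pos_iff_pos_of_mul_pos hpos).1 h
  · intro h; exact (pos_iff_pos_of_mul_pos hpos).2 h

theorem core (i : S →+* K) (j : S →+* R') (hi : StrictMono i) (hj : StrictMono j)
    (hK : RC K) (hR : RC R') (m : ℕ)
    (HK : ∀ g : S[X], g ≠ 0 → g.natDegree < m → ∀ α, g.eval₂ i α = 0 → ∃ s, i s = α)
    (HR : ∀ g : S[X], g ≠ 0 → g.natDegree < m → ∀ α, g.eval₂ j α = 0 → ∃ s, j s = α)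
    (f : S[X]) (hf : f ≠ 0) (hfm : f.natDegree = m) (α : K) (hα : f.eval₂ i α = 0)
    (hαS : ∀ s, i s ≠ α) :
    ∃ α' : R', ∀ p : S[X], (0 < p.eval₂ i α → 0 < p.eval₂ j α') ∧
      (p.eval₂ i α = 0 → p.eval₂ j α' = 0) := by
  classical
  have HK' : ∀ g : S[X], g ≠ 0 → g.natDegree < m → g.eval₂ i α ≠ 0 := by
    intro g h1 h2 h3
    obtain ⟨s, hs⟩ := HK g h1 h2 α h3
    exact hαS s hs
  have hm : 0 < m := by
    by_contra h0
    have h0 : f.natDegree = 0 := by omega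
    rw [eq_C_of_natDegree_eq_zero h0] at hα hf
    simp at hα hf
    exact hf hα
  have hfS : ∀ s, f.eval s ≠ 0 := by
    intro s hs
    obtain ⟨g, hg⟩ := dvd_iff_isRoot.2 hs
    have hg0 : g ≠ 0 := by rintro rfl; simp at hg; exact hf hg
    have hdeg : g.natDegree < m := by
      rw [hg, natDegree_mul (X_sub_C_ne_zero s) hg0, natDegree_X_sub_C] at hfm
      omega
    apply HK' g hg0 hdeg
    rw [hg, eval₂_mul] at hα
    refine (mul_eq_zero.1 hα).resolve_left ?_
    simp only [eval₂_sub, eval₂_X, eval₂_C]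
    exact sub_ne_zero.2 (hαS s).symm
  have hd0 : derivative f ≠ 0 := by
    intro h0
    have := derivative_eq_zero.1 h0
    omega
  have hdd : (derivative f).natDegree < m := hfm ▸ natDegree_derivative_lt (by omega)
  have hopp : ∀ u v : S, i u < α → α < i v →
      (∀ s, u < s → s < v → (derivative f).eval s ≠ 0) → f.eval u * f.eval v < 0 := by
    intro u v hu hv hno
    have hnoK : ∀ x, i u < x → x < i v → (derivative f).eval₂ i x ≠ 0 := by
      intro x h1 h2 h3
      obtain ⟨s, rfl⟩ := HK _ hd0 hdd x h3
      rw [eval₂_at_apply, map_eq_zero] at h3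
      exact hno s (hi.lt_iff_lt.1 h1) (hi.lt_iff_lt.1 h2) h3
    have hfK : (f.map i).IsRoot α := by rw [IsRoot, eval_map]; exact hα
    obtain ⟨g, hg⟩ := dvd_iff_isRoot.2 hfK
    have hgα : g.eval α ≠ 0 := by
      have h1 : (derivative (f.map i)).eval α ≠ 0 := by
        rw [derivative_map, eval_map]; exact hnoK α hu hv
      rw [hg] at h1
      simpa using h1
    have hroot : ∀ x, g.eval x = 0 → f.eval₂ i x = 0 := by
      intro x hx
      rw [← eval_map, hg]; simp [hx]
    have hgn : ∀ x, i u ≤ x → x ≤ i v → g.eval x ≠ 0 := by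
      intro x h1 h2 h3
      have h4 := hroot x h3
      rcases h1.eq_or_lt with rfl | h1
      · rw [eval₂_at_apply, map_eq_zero] at h4; exact hfS _ h4
      rcases h2.eq_or_lt with rfl | h2
      · rw [eval₂_at_apply, map_eq_zero] at h4; exact hfS _ h4
      rw [← eval_map] at h4
      rcases lt_trichotomy x α with h | h | h
      · obtain ⟨c, h5, h6, h7⟩ := hK.rolle (f.map i) h h4 hfK
        rw [derivative_map, eval_map] at h7
        exact hnoK c (h1.trans h5) (h6.trans hv) h7
      · exact hgα (h ▸ h3)
      · obtain ⟨c, h5, h6, h7⟩ := hK.rolle (f.map i) h hfK h4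
        rw [derivative_map, eval_map] at h7
        exact hnoK c (hu.trans h5) (h6.trans h2) h7
    have hs := hK.same_sign g (hu.trans hv).le hgn
    have h1 : ∀ s, i (f.eval s) = (i s - α) * g.eval (i s) := by
      intro s
      rw [← eval₂_at_apply, ← eval_map, hg]; simp
    have h2 : i (f.eval u * f.eval v) < i 0 := by
      rw [map_mul, h1, h1, map_zero]
      have : (i u - α) * g.eval (i u) * ((i v - α) * g.eval (i v)) =
        - ((α - i u) * (i v - α) * (g.eval (i u) * g.eval (i v))) := by ring
      rw [this]
      have h3 := sub_pos.2 hu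
      have h4 := sub_pos.2 hv
      have : 0 < ((α - i u) * (i v - α) * (g.eval (i u) * g.eval (i v))) := by positivity
      linarith
    exact hi.lt_iff_lt.1 h2
  have hex : ∀ u v : S, i u < α → α < i v →
      (∀ s, u < s → s < v → (derivative f).eval s ≠ 0) →
      ∃ x, j u < x ∧ x < j v ∧ f.eval₂ j x = 0 := by
    intro u v hu hv hno
    have h1 := hopp u v hu hv hno
    have h2 := hj h1
    rw [map_mul, map_zero, ← eval₂_at_apply, ← eval₂_at_apply, ← eval_map, ← eval_map] at h2
    obtain ⟨c, h3, h4, h5⟩ := hR (f.map j) (j u) (j v) (hj (hi.lt_iff_lt.1 (hu.trans hv))) h2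
    exact ⟨c, h3, h4, by rwa [← eval_map]⟩
  obtain ⟨M, hM⟩ := root_bound i hi f hf
  obtain ⟨u, v, -, -, hu, hv, hno⟩ := core_interval i hi α (-M) M (hM α hα).1 (hM α hα).2 hαS
    (derivative f) hd0
  obtain ⟨α', hα'1, hα'2, hα'⟩ := hex u v hu hv hno
  refine ⟨α', fun p => ?_⟩
  set r := p % f with hr
  have hpr : p = r + f * (p / f) := (EuclideanDomain.mod_add_div p f).symm
  have hpα : p.eval₂ i α = r.eval₂ i α := by
    conv_lhs => rw [hpr]
    rw [eval₂_add, eval₂_mul, hα]; simp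
  have hpα' : p.eval₂ j α' = r.eval₂ j α' := by
    conv_lhs => rw [hpr]
    rw [eval₂_add, eval₂_mul, hα']; simp
  have hrd : r.natDegree < m := by
    rw [← hfm]; exact natDegree_mod_lt p (by omega)
  rw [hpα, hpα']
  refine ⟨fun hp => ?_, fun hp => ?_⟩
  swap
  · have : r = 0 := by
      by_contra h0
      exact HK' r h0 hrd hp
    rw [this]; simp
  have hr0 : r ≠ 0 := by intro h0; rw [h0] at hp; simp at hp
  obtain ⟨u', v', huu, hvv, hu', hv', hno'⟩ := core_interval i hi α u v hu hv hαS r hr0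
  obtain ⟨α'', h1, h2, h3⟩ := hex u' v' hu' hv' (fun s h1 h2 => hno s (huu.trans_lt h1) (h2.trans_le hvv))
  have hnoR : ∀ x, j u < x → x < j v → (derivative f).eval₂ j x ≠ 0 := by
    intro x h1 h2 h3
    obtain ⟨s, rfl⟩ := HR _ hd0 hdd x h3
    rw [eval₂_at_apply, map_eq_zero] at h3
    exact hno s (hj.lt_iff_lt.1 h1) (hj.lt_iff_lt.1 h2) h3
  have heq : α'' = α' := by
    have h1' : j u < α'' := (hj.monotone huu).trans_lt h1
    have h2' : α'' < j v := h2.trans_le (hj.monotone hvv)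
    rw [← eval_map] at h3 hα'
    rcases lt_trichotomy α'' α' with h | h | h
    · obtain ⟨c, h5, h6, h7⟩ := hR.rolle (f.map j) h h3 hα'
      rw [derivative_map, eval_map] at h7
      exact absurd h7 (hnoR c (h1'.trans h5) (h6.trans hα'2))
    · exact h
    · obtain ⟨c, h5, h6, h7⟩ := hR.rolle (f.map j) h hα' h3
      rw [derivative_map, eval_map] at h7
      exact absurd h7 (hnoR c (hα'1.trans h5) (h6.trans h2'))
  rw [heq] at h1 h2
  have huv' : u' < v' := hi.lt_iff_lt.1 (hu'.trans hv')
  obtain ⟨s, hs1, hs2⟩ := exists_between huv'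
  exact (core_key hR j hj r hr0 u' v' s hs1 hs2 hno' (HR r hr0 hrd) α' h1 h2).2
    ((core_key hK i hi r hr0 u' v' s hs1 hs2 hno' (HK r hr0 hrd) α hu' hv').1 hp)
end core

end PartB

section PartC
open Polynomial IntermediateField

theorem exists_hom_adjoin {S K R' : Type*} [Field S] [Field K] [Field R'] [Algebra S K]
    [Algebra S R'] (α : K) (α' : R') (h : ∀ p : S[X], aeval α p = 0 ↔ aeval α' p = 0) :
    ∃ ψ : S⟮α⟯ →ₐ[S] R', ∀ (x : S⟮α⟯) (r s : S[X]), (x : K) = aeval α r / aeval α s →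
      aeval α s ≠ 0 → ψ x = aeval α' r / aeval α' s := by
  have hrep : ∀ x : S⟮α⟯, ∃ rs : S[X] × S[X], (x : K) = aeval α rs.1 / aeval α rs.2 ∧
      aeval α rs.2 ≠ 0 := by
    intro x
    obtain ⟨r, s, h1⟩ := (mem_adjoin_simple_iff S (x : K)).1 x.2
    by_cases h0 : aeval α s = 0
    · exact ⟨(0, 1), by simp [h1, h0], by simp⟩
    · exact ⟨(r, s), h1, h0⟩
  choose c hc hc0 using hrep
  have wd : ∀ (x : S⟮α⟯) (r s : S[X]), (x : K) = aeval α r / aeval α s →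
      aeval α s ≠ 0 → aeval α' (c x).1 / aeval α' (c x).2 = aeval α' r / aeval α' s := by
    intro x r s h1 h2
    have h3 := hc0 x
    have h4 : aeval α' s ≠ 0 := fun h0 => h2 ((h s).2 h0)
    have h5 : aeval α' (c x).2 ≠ 0 := fun h0 => h3 ((h _).2 h0)
    have h6 := hc x
    rw [h1, div_eq_div_iff h2 h3] at h6
    have h7 : aeval α (r * (c x).2 - (c x).1 * s) = 0 := by simp [h6]
    rw [h] at h7
    rw [div_eq_div_iff h5 h4]
    simp only [map_sub, map_mul] at h7
    linear_combination -h7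
  have hne : ∀ x, aeval α' (c x).2 ≠ 0 := fun x h0 => hc0 x ((h _).2 h0)
  refine ⟨{ toFun := fun x => aeval α' (c x).1 / aeval α' (c x).2
            map_one' := ?_, map_mul' := ?_, map_zero' := ?_, map_add' := ?_, commutes' := ?_ },
    fun x r s h1 h2 => wd x r s h1 h2⟩
  · rw [wd 1 1 1 (by simp) (by simp)]; simp
  · intro x y
    rw [wd (x * y) ((c x).1 * (c y).1) ((c x).2 * (c y).2)]
    · simp only [map_mul]; rw [div_mul_div_comm]
    · push_cast; rw [hc x, hc y]; simp only [map_mul]; rw [div_mul_div_comm]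
    · simp [hc0]
  · rw [wd 0 0 1 (by simp) (by simp)]; simp
  · intro x y
    rw [wd (x + y) ((c x).1 * (c y).2 + (c x).2 * (c y).1) ((c x).2 * (c y).2)]
    · simp only [map_mul, map_add]; rw [div_add_div _ _ (hne x) (hne y)]
    · push_cast; rw [hc x, hc y]; simp only [map_mul, map_add]
      rw [div_add_div _ _ (hc0 x) (hc0 y)]
    · simp [hc0]
  · intro s
    rw [wd _ (C s) 1 (by simp) (by simp)]; simp

section zorn
variable {F K R' : Type*} [Field F]
  [Field K] [LinearOrder K] [IsStrictOrderedRing K]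
  [Field R'] [LinearOrder R'] [IsStrictOrderedRing R'] [Algebra F K] [Algebra F R']

/-- positivity preserving lifts -/
def LPos (L : Lifts F K R') : Prop := ∀ x : L.carrier, 0 < (x : K) → 0 < L.emb x

theorem lift_extend (L : Lifts F K R') (α : K) (α' : R')
    (h : ∀ p : L.carrier[X], (0 < p.eval₂ (algebraMap L.carrier K) α →
      0 < p.eval₂ (L.emb : L.carrier →+* R') α') ∧
      (p.eval₂ (algebraMap L.carrier K) α = 0 → p.eval₂ (L.emb : L.carrier →+* R') α' = 0)) :
    ∃ L' : Lifts F K R', L ≤ L' ∧ LPos L' ∧ α ∈ L'.carrier := by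
  let _ : Algebra L.carrier R' := (L.emb : L.carrier →+* R').toAlgebra
  have h' : ∀ p : L.carrier[X], 0 < aeval α p → 0 < aeval α' p := fun p => (h p).1
  have hneg : ∀ p : L.carrier[X], aeval α p < 0 → aeval α' p < 0 := by
    intro p hp
    have := h' (-p) (by simpa using hp)
    simpa using this
  have h0 : ∀ p : L.carrier[X], aeval α p = 0 ↔ aeval α' p = 0 := by
    intro p
    rcases lt_trichotomy (aeval α p) 0 with h1 | h1 | h1
    · have := hneg p h1
      exact ⟨fun h => absurd h h1.ne, fun h => absurd h this.ne⟩
    · exact ⟨fun _ => (h p).2 h1, fun _ => h1⟩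
    · have := h' p h1
      exact ⟨fun h => absurd h h1.ne', fun h => absurd h this.ne'⟩
  obtain ⟨ψ, hψ⟩ := exists_hom_adjoin α α' h0
  refine ⟨⟨(L.carrier⟮α⟯).restrictScalars F,
    { (ψ : L.carrier⟮α⟯ →+* R') with
      commutes' := fun s => ?_ }⟩, ⟨?_, ?_⟩, ?_, ?_⟩
  · have h1 := ψ.commutes (algebraMap F L.carrier s)
    have h2 : algebraMap L.carrier R' (algebraMap F L.carrier s) = algebraMap F R' s :=
      L.emb.commutes s
    rw [h2] at h1
    exact h1
  · intro x hx
    exact (L.carrier⟮α⟯).algebraMap_mem ⟨x, hx⟩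
  · intro x
    exact ψ.commutes x
  · intro x hx
    obtain ⟨r, s, hrs⟩ := (mem_adjoin_simple_iff L.carrier (x : K)).1 x.2
    have hs : aeval α s ≠ 0 := by
      intro h0; rw [hrs, h0] at hx; simp at hx
    have h1 := hψ x r s hrs hs
    have h2 : 0 < aeval α (r * s) := by
      rw [map_mul]
      rw [hrs] at hx
      rcases div_pos_iff.1 hx with ⟨h1, h2⟩ | ⟨h1, h2⟩
      · exact mul_pos h1 h2
      · exact mul_pos_of_neg_of_neg h1 h2
    have h3 := h' _ h2
    change 0 < ψ x
    rw [h1]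
    rw [map_mul] at h3
    rcases mul_pos_iff.1 h3 with ⟨h1, h2⟩ | ⟨h1, h2⟩
    · exact div_pos h1 h2
    · exact div_pos_of_neg_of_neg h1 h2
  · exact mem_adjoin_simple_self L.carrier α

theorem lift_zorn (L0 : Lifts F K R') (h0 : LPos L0) :
    ∃ L : Lifts F K R', L0 ≤ L ∧ LPos L ∧ ∀ L', L ≤ L' → LPos L' → L'.carrier ≤ L.carrier := by
  obtain ⟨L, h1, h2⟩ := zorn_le_nonempty₀ {L : Lifts F K R' | LPos L} (by
    intro c hc hch y hy
    refine ⟨Lifts.union c hch, ?_, fun z hz => Lifts.le_union c hch hz⟩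
    intro x hx
    have hmem := (Lifts.carrier_union c hch).le x.2
    have : Nonempty c := ⟨⟨y, hy⟩⟩
    have hdir : Directed (· ≤ ·) (fun i : c => i.1.carrier) := by
      intro a b
      rcases hch.total a.2 b.2 with h | h
      · exact ⟨b, h.1, le_rfl⟩
      · exact ⟨a, le_rfl, h.1⟩
    rw [← SetLike.mem_coe, IntermediateField.coe_iSup_of_directed hdir, Set.mem_iUnion] at hmem
    obtain ⟨i, hi⟩ := hmem
    obtain ⟨h3, h4⟩ := Lifts.le_union c hch i.2
    have h5 := h4 ⟨x, hi⟩
    have h6 : inclusion h3 ⟨x, hi⟩ = x := rfl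
    rw [h6] at h5
    rw [h5]
    exact hc i.2 _ hx) L0 h0
  exact ⟨L, h1, h2.1, fun L' h3 h4 => (h2.2 h4 h3).1⟩

theorem lift_alg (hK : RC K) (hR : RC R') (L0 : Lifts F K R') (h0 : LPos L0) :
    ∃ L : Lifts F K R', L0 ≤ L ∧ LPos L ∧ ∀ (α : K) (p : L.carrier[X]), p ≠ 0 →
      p.eval₂ (algebraMap L.carrier K) α = 0 → α ∈ L.carrier := by
  obtain ⟨L, h1, h2, h3⟩ := lift_zorn L0 h0
  refine ⟨L, h1, h2, ?_⟩
  let i : L.carrier →+* K := algebraMap L.carrier K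
  let j : L.carrier →+* R' := L.emb
  have hi : StrictMono i := fun a b h => h
  have hj : StrictMono j := by
    intro a b hab
    have : 0 < L.emb (b - a) := h2 (b - a) (by push_cast; exact sub_pos.2 hab)
    rw [map_sub] at this
    exact sub_pos.1 this
  have hall : ∀ m : ℕ, (∀ g : L.carrier[X], g ≠ 0 → g.natDegree < m → ∀ α, g.eval₂ i α = 0 →
      ∃ s, i s = α) ∧ (∀ g : L.carrier[X], g ≠ 0 → g.natDegree < m → ∀ α, g.eval₂ j α = 0 →
      ∃ s, j s = α) := by
    intro m
    induction m with
    | zero => exact ⟨fun g _ h => absurd h (by omega), fun g _ h => absurd h (by omega)⟩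
    | succ m ih =>
      obtain ⟨HK, HR⟩ := ih
      constructor
      · intro g hg hgm α hα
        by_cases hlt : g.natDegree < m
        · exact HK g hg hlt α hα
        by_contra hcon
        push Not at hcon
        obtain ⟨α', hα'⟩ := core i j hi hj hK hR m HK HR g hg (by omega) α hα hcon
        obtain ⟨L', h4, h5, h6⟩ := lift_extend L α α' hα'
        exact hcon ⟨α, h3 L' h4 h5 h6⟩ rfl
      · intro g hg hgm α hα
        by_cases hlt : g.natDegree < m
        · exact HR g hg hlt α hα
        by_contra hcon
        push Not at hcon
        obtain ⟨α', hα'⟩ := core j i hj hi hR hK m HR HK g hg (by omega) α hα hcon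
        have hpos : ∀ p : L.carrier[X], (0 < p.eval₂ i α' → 0 < p.eval₂ j α) ∧
            (p.eval₂ i α' = 0 → p.eval₂ j α = 0) := by
          intro p
          have hn := (hα' (-p)).1
          simp only [eval₂_neg, Left.neg_pos_iff] at hn
          rcases lt_trichotomy (p.eval₂ j α) 0 with h | h | h
          · have := hn h
            exact ⟨fun h' => absurd h' this.le.not_gt, fun h' => absurd h' this.ne⟩
          · have := (hα' p).2 h
            exact ⟨fun h' => absurd this h'.ne', fun _ => h⟩
          · have := (hα' p).1 h
            exact ⟨fun _ => h, fun h' => absurd h' this.ne'⟩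
        obtain ⟨L', h4, h5, h6⟩ := lift_extend L α' α hpos
        have hmem := h3 L' h4 h5 h6
        have h7 := (hpos (X - C ⟨α', hmem⟩)).2 (by simp [i])
        simp only [eval₂_sub, eval₂_X, eval₂_C] at h7
        exact hcon _ (sub_eq_zero.1 h7).symm
  intro α p hp hα
  obtain ⟨s, hs⟩ := (hall (p.natDegree + 1)).1 p hp (by omega) α hα
  rw [← hs]; exact s.2
end zorn

end PartC

section PartD
open Polynomial IntermediateField

theorem germ_eval {ι R : Type*} [Field R] (U : Ultrafilter ι) (F : (ι → R)[X]) (a : ι → R) :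
    (F.map (Filter.Germ.coeRingHom (U : Filter ι))).eval (a : (U : Filter ι).Germ R) =
      ((fun x => (F.map (Pi.evalRingHom _ x)).eval (a x) : ι → R) : (U : Filter ι).Germ R) := by
  have h1 : (a : (U : Filter ι).Germ R) = Filter.Germ.coeRingHom (U : Filter ι) a := rfl
  rw [h1, eval_map, eval₂_at_apply]
  have h2 : F.eval a = (fun x => (F.map (Pi.evalRingHom _ x)).eval (a x) : ι → R) := by
    funext x
    have h3 : a x = Pi.evalRingHom _ x a := rfl
    rw [h3, eval_map, eval₂_at_apply]; rfl
  rw [h2]; rfl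

theorem germ_RC {ι R : Type*} [Field R] [LinearOrder R] [IsStrictOrderedRing R] (h : RC R)
    (U : Ultrafilter ι) : RC ((U : Filter ι).Germ R) := by
  classical
  intro f a b hab hneg
  obtain ⟨F, rfl⟩ := Polynomial.map_surjective (Filter.Germ.coeRingHom (U : Filter ι))
    (fun x => Filter.Germ.inductionOn x (fun y => ⟨y, rfl⟩)) f
  induction a using Filter.Germ.inductionOn with | _ a => ?_
  induction b using Filter.Germ.inductionOn with | _ b => ?_
  rw [germ_eval, germ_eval] at hneg
  have h1 : ∀ᶠ x in (U : Filter ι), a x < b x := Filter.Germ.coe_lt.1 hab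
  have h2 : ∀ᶠ x in (U : Filter ι), (F.map (Pi.evalRingHom _ x)).eval (a x) *
    (F.map (Pi.evalRingHom _ x)).eval (b x) < 0 := Filter.Germ.coe_lt.1 hneg
  have h3 : ∀ᶠ x in (U : Filter ι), ∃ c, a x < c ∧ c < b x ∧
      (F.map (Pi.evalRingHom (fun _ => R) x)).eval c = 0 := by
    filter_upwards [h1, h2] with x h1 h2
    exact h _ _ _ h1 h2
  obtain ⟨c, hc⟩ := h3.choice
  refine ⟨(c : (U : Filter ι).Germ R), ?_, ?_, ?_⟩
  · exact Filter.Germ.coe_lt.2 (hc.mono fun x hx => hx.1)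
  · exact Filter.Germ.coe_lt.2 (hc.mono fun x hx => hx.2.1)
  · rw [germ_eval]
    exact Filter.Germ.coe_eq.2 (hc.mono fun x hx => hx.2.2)

section step
variable {k K : Type*} [Field k] [Field K] [LinearOrder K] [IsStrictOrderedRing K] [Algebra k K]

/-- relatively algebraically closed -/
def RelAC (R : IntermediateField k K) : Prop :=
  ∀ (α : K) (p : R[X]), p ≠ 0 → p.eval₂ (algebraMap R K) α = 0 → α ∈ R

theorem RelAC.rc (hK : RC K) (R : IntermediateField k K) (hR : RelAC R) : RC R := by
  intro f a b hab hneg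
  have h1 : ((f.map (algebraMap R K)).eval (a : K)) * ((f.map (algebraMap R K)).eval (b : K)) < 0 := by
    have h2 : ∀ x : R, (f.map (algebraMap R K)).eval (x : K) = (f.eval x : R) := by
      intro x
      have : (x : K) = algebraMap R K x := rfl
      rw [this, eval_map, eval₂_at_apply]; rfl
    rw [h2, h2]
    exact_mod_cast hneg
  obtain ⟨c, h2, h3, h4⟩ := hK _ _ _ (show (a : K) < b from hab) h1
  rw [eval_map] at h4
  have hf : f ≠ 0 := by rintro rfl; simp at hneg
  have hc := hR c f hf h4
  refine ⟨⟨c, hc⟩, h2, h3, ?_⟩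
  have : c = algebraMap R K ⟨c, hc⟩ := rfl
  rw [this, eval₂_at_apply, map_eq_zero] at h4
  exact h4

theorem cut_ultrafilter (hK : RC K) (R : IntermediateField k K) (hR : RelAC R) (t : K)
    (ht : t ∉ R) : ∃ U : Ultrafilter R, ∀ p : R[X], 0 < p.eval₂ (algebraMap R K) t →
      ∀ᶠ c in (U : Filter R), 0 < p.eval c := by
  classical
  obtain ⟨U, hU⟩ := Ultrafilter.exists_ultrafilter_of_finite_inter_nonempty
    {A : Set R | ∃ p : R[X], 0 < p.eval₂ (algebraMap R K) t ∧ A = {c | 0 < p.eval c}} (by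
    intro T hT
    have hT' : ∀ A : T, ∃ p : R[X], 0 < p.eval₂ (algebraMap R K) t ∧ A.1 = {c | 0 < p.eval c} :=
      fun A => hT A.2
    choose p hp hpA using hT'
    let rt : Finset R := Finset.univ.biUnion (fun A : T => (p A).roots.toFinset)
    obtain ⟨c, hc1, hc2⟩ := Order.exists_between_finsets (rt.filter (fun x : R => (x : K) < t))
      (rt.filter (fun x : R => t < (x : K))) (by
        intro x hx y hy
        have h1 := (Finset.mem_filter.1 hx).2
        have h2 := (Finset.mem_filter.1 hy).2
        exact h1.trans h2)
    refine ⟨c, ?_⟩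
    rintro A hA
    change A ∈ T at hA
    let A' : T := ⟨A, hA⟩
    have hAA : A = {c | 0 < (p A').eval c} := hpA A'
    rw [hAA]
    have hp0 : p A' ≠ 0 := by intro h0; have := hp A'; rw [h0] at this; simp at this
    have hroot : ∀ x : K, ((p A').map (algebraMap R K)).eval x = 0 → ∃ y ∈ rt, (y : K) = x := by
      intro x hx
      rw [eval_map] at hx
      have hxR := hR x _ hp0 hx
      refine ⟨⟨x, hxR⟩, ?_, rfl⟩
      have : x = algebraMap R K ⟨x, hxR⟩ := rfl
      rw [this, eval₂_at_apply, map_eq_zero] at hx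
      simp only [rt, Finset.mem_biUnion]
      exact ⟨A', Finset.mem_univ _, by simp [hp0, hx]⟩
    have hsign : 0 < ((p A').map (algebraMap R K)).eval (c : K) *
        ((p A').map (algebraMap R K)).eval t := by
      rcases le_total (c : K) t with h | h
      · apply hK.same_sign _ h
        intro x h1 h2 h3
        obtain ⟨y, hy, rfl⟩ := hroot x h3
        have : (y : K) < t := lt_of_le_of_ne h2 (fun h => ht (h ▸ y.2))
        exact absurd (hc1 y (Finset.mem_filter.2 ⟨hy, this⟩)) (not_lt.2 h1)
      · rw [mul_comm]
        apply hK.same_sign _ h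
        intro x h1 h2 h3
        obtain ⟨y, hy, rfl⟩ := hroot x h3
        have : t < (y : K) := lt_of_le_of_ne h1 (fun h => ht (h ▸ y.2))
        exact absurd (hc2 y (Finset.mem_filter.2 ⟨hy, this⟩)) (not_lt.2 h2)
    have h4 := hp A'
    rw [← eval_map] at h4
    have h5 := (pos_iff_pos_of_mul_pos hsign).2 h4
    have h6 : (c : K) = algebraMap R K c := rfl
    rw [h6, eval_map, eval₂_at_apply] at h5
    exact h5)
  refine ⟨U, fun p hp => ?_⟩
  exact hU ⟨p, hp, rfl⟩

theorem al_step (hK : RC K) (R : IntermediateField k K) (hR : RelAC R) (t : K) (ht : t ∉ R) :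
    ∃ R₁ : IntermediateField k K, R ≤ R₁ ∧ RelAC R₁ ∧ t ∈ R₁ ∧
      ∀ (ι : Type) (g h : MvPolynomial ι k) (z : ι → R₁), MvPolynomial.aeval z g = 0 →
        MvPolynomial.aeval z h ≠ 0 → ∃ z' : ι → R, MvPolynomial.aeval z' g = 0 ∧
          MvPolynomial.aeval z' h ≠ 0 := by
  classical
  obtain ⟨U, hU⟩ := cut_ultrafilter hK R hR t ht
  let G := (U : Filter R).Germ R
  let cst : R →+* G := (Filter.Germ.coeRingHom (U : Filter R)).comp (Pi.constRingHom R R)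
  let _ : Algebra R G := cst.toAlgebra
  have hG : RC G := germ_RC (hR.rc hK) U
  let τ : G := ((fun x => x : R → R) : G)
  have hev : ∀ p : R[X], p.eval₂ (algebraMap R G) τ = ((fun x => p.eval x : R → R) : G) := by
    intro p
    have h1 : p.eval₂ (algebraMap R G) τ =
      ((p.map (Pi.constRingHom R R)).map (Filter.Germ.coeRingHom (U : Filter R))).eval τ := by
      rw [Polynomial.map_map, eval_map]; rfl
    rw [h1]
    have h2 := germ_eval U (p.map (Pi.constRingHom R R)) (fun x => x)
    refine h2.trans ?_
    congr 1
    funext x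
    rw [Polynomial.map_map]
    have : (Pi.evalRingHom (fun _ => R) x).comp (Pi.constRingHom R R) = RingHom.id R := rfl
    rw [this, Polynomial.map_id]
  have hbot : ∀ x : R, (⊥ : Lifts R K G).emb (algebraMap R _ x) = algebraMap R G x :=
    fun x => AlgHom.commutes _ x
  obtain ⟨L1, -, hL1, htL⟩ := lift_extend (⊥ : Lifts R K G) t τ (by
    intro p
    obtain ⟨q, rfl⟩ : ∃ q : R[X], p = q.map (algebraMap R (⊥ : Lifts R K G).carrier) := by
      obtain ⟨q, hq⟩ := Polynomial.map_surjective (algebraMap R (⊥ : Lifts R K G).carrier)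
        (by
          intro x
          obtain ⟨y, hy⟩ := IntermediateField.mem_bot.1 x.2
          exact ⟨y, Subtype.ext hy⟩) p
      exact ⟨q, hq.symm⟩
    have e1 : (q.map (algebraMap R (⊥ : Lifts R K G).carrier)).eval₂
        (algebraMap (⊥ : Lifts R K G).carrier K) t = q.eval₂ (algebraMap R K) t := by
      rw [eval₂_map]; rfl
    have e2 : (q.map (algebraMap R (⊥ : Lifts R K G).carrier)).eval₂
        ((⊥ : Lifts R K G).emb : (⊥ : Lifts R K G).carrier →+* G) τ =
          q.eval₂ (algebraMap R G) τ := by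
      rw [eval₂_map]
      congr 1
      ext x
      exact hbot x
    rw [e1, e2, hev]
    refine ⟨fun hp => ?_, fun hp => ?_⟩
    · exact Filter.Germ.coe_lt.2 (hU q hp)
    · have : q = 0 := by
        by_contra h0
        exact ht (hR t q h0 hp)
      subst this
      simp
      rfl)
  obtain ⟨L, hLL, hLP, hLA⟩ := lift_alg hK hG L1 hL1
  refine ⟨L.carrier.restrictScalars k, ?_, ?_, ?_, ?_⟩
  · intro x hx
    exact L.carrier.algebraMap_mem ⟨x, hx⟩
  · exact hLA
  · exact hLL.1 htL
  · intro ι g h z hg hh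
    let e : L.carrier.restrictScalars k →+* G := (L.emb : L.carrier →+* G)
    have he : ∀ c : k, e (algebraMap k _ c) = algebraMap R G (algebraMap k R c) :=
      fun c => L.emb.commutes (algebraMap k R c)
    have hlift : ∀ x : ι, ∃ y : R → R, ((y : R → R) : G) = e (z x) :=
      fun x => Quotient.inductionOn' (e (z x)) (fun y => ⟨y, rfl⟩)
    choose y hy using hlift
    have hlos : ∀ q : MvPolynomial ι k, e (MvPolynomial.aeval z q) =
        ((fun x => MvPolynomial.aeval (fun i => y i x) q : R → R) : G) := by
      intro q
      let φ : MvPolynomial ι k →+* (R → R) :=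
        RingHom.pi (fun x => (MvPolynomial.aeval (fun i => y i x) : MvPolynomial ι k →ₐ[k] R).toRingHom)
      have : e.comp (MvPolynomial.aeval z : MvPolynomial ι k →ₐ[k] _).toRingHom =
          (Filter.Germ.coeRingHom (U : Filter R)).comp φ := by
        apply MvPolynomial.ringHom_ext
        · intro c
          simp only [RingHom.comp_apply]
          have h1 : (MvPolynomial.aeval z : MvPolynomial ι k →ₐ[k] _).toRingHom (MvPolynomial.C c)
            = algebraMap k _ c := by simp
          rw [h1, he]
          have h2 : φ (MvPolynomial.C c) = fun _ => algebraMap k R c := by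
            funext x; exact MvPolynomial.aeval_C _ c
          rw [h2]; rfl
        · intro i
          simp only [RingHom.comp_apply]
          have h1 : (MvPolynomial.aeval z : MvPolynomial ι k →ₐ[k] _).toRingHom (MvPolynomial.X i)
            = z i := by simp
          rw [h1, ← hy]
          have h2 : φ (MvPolynomial.X i) = y i := by
            funext x; exact MvPolynomial.aeval_X _ i
          rw [h2]; rfl
      exact congrArg (fun f => f q) this
    have h1 : ∀ᶠ x in (U : Filter R), MvPolynomial.aeval (fun i => y i x) g = 0 := by
      apply Filter.Germ.coe_eq.1
      rw [← hlos, hg, map_zero]; rfl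
    have h2 : ¬ ∀ᶠ x in (U : Filter R), MvPolynomial.aeval (fun i => y i x) h = 0 := by
      intro hcon
      apply hh
      have h3 := Filter.Germ.coe_eq.2 hcon
      have h4 := hlos h
      rw [h3] at h4
      exact (map_eq_zero e).1 (h4.trans rfl)
    rw [← Ultrafilter.eventually_not] at h2
    obtain ⟨x, hx1, hx2⟩ := (h1.and h2).exists
    exact ⟨fun i => y i x, hx1, hx2⟩

theorem artin_lang_aux (hK : RC K) (ι : Type) [Finite ι] (g h : MvPolynomial ι k)
    (R : IntermediateField k K) (hR : RelAC R) (z : ι → K) (hg : MvPolynomial.aeval z g = 0)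
    (hh : MvPolynomial.aeval z h ≠ 0) :
    ∃ z' : ι → R, MvPolynomial.aeval z' g = 0 ∧ MvPolynomial.aeval z' h ≠ 0 := by
  classical
  cases nonempty_fintype ι
  have main : ∀ (T : Finset ι) (R : IntermediateField k K), RelAC R → (∀ i ∉ T, z i ∈ R) →
      ∃ z' : ι → R, MvPolynomial.aeval z' g = 0 ∧ MvPolynomial.aeval z' h ≠ 0 := by
    intro T
    induction T using Finset.induction_on with
    | empty =>
      intro R _ hz
      have hval : ∀ q : MvPolynomial ι k, ((MvPolynomial.aeval (fun i => (⟨z i, hz i (by simp)⟩ : R)) q : R) : K)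
          = MvPolynomial.aeval z q := by
        intro q
        have := MvPolynomial.map_aeval (fun i => (⟨z i, hz i (by simp)⟩ : R)) (algebraMap R K) q
        exact this
      refine ⟨fun i => ⟨z i, hz i (by simp)⟩, ?_, ?_⟩
      · apply Subtype.ext
        rw [hval, hg]; rfl
      · intro h0
        apply hh
        rw [← hval, h0]; rfl
    | insert i T hi ih =>
      intro R hR hz
      by_cases hiR : z i ∈ R
      · apply ih R hR
        intro j hj
        by_cases hij : j = i
        · rw [hij]; exact hiR
        · exact hz j (by simp [hij, hj])
      · obtain ⟨R₁, h1, h2, h3, h4⟩ := al_step hK R hR (z i) hiR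
        obtain ⟨z', h5, h6⟩ := ih R₁ h2 (by
          intro j hj
          by_cases hij : j = i
          · rw [hij]; exact h3
          · exact h1 (hz j (by simp [hij, hj])))
        exact h4 ι g h z' h5 h6
  exact main Finset.univ R hR (by simp)
end step

end PartD

section PartE
open Polynomial IntermediateField

theorem sumsq_reduce {S : Type*} [Field S] (h : S[X]) (hd : h.natDegree ≠ 0) {q : S[X]}
    (hq : IsSumSq q) : ∃ q' : S[X], IsSumSq q' ∧ h ∣ q - q' ∧
      q'.natDegree ≤ 2 * (h.natDegree - 1) := by
  induction hq with
  | zero => exact ⟨0, IsSumSq.zero, by simp, by simp⟩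
  | sq_add p hs ih =>
    obtain ⟨s', h1, h2, h3⟩ := ih
    rename_i s
    refine ⟨(p % h) * (p % h) + s', IsSumSq.sq_add _ h1, ?_, ?_⟩
    · have e : p * p + s - ((p % h) * (p % h) + s') =
        (p - p % h) * (p + p % h) + (s - s') := by ring
      rw [e]
      refine dvd_add (Dvd.dvd.mul_right ?_ _) h2
      exact ⟨p / h, by linear_combination -(EuclideanDomain.div_add_mod p h)⟩
    · have h4 := Polynomial.natDegree_mod_lt p hd
      refine (Polynomial.natDegree_add_le _ _).trans (max_le ?_ h3)
      refine (Polynomial.natDegree_mul_le).trans ?_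
      omega

theorem sumsq_eval {S : Type*} [Field S] [LinearOrder S] [IsStrictOrderedRing S] {q : S[X]}
    (hq : IsSumSq q) (a : S) : 0 ≤ Polynomial.eval a q := by
  induction hq with
  | zero => simp
  | sq_add p hs ih => 
    rw [Polynomial.eval_add, Polynomial.eval_mul]
    exact add_nonneg (mul_self_nonneg _) ih

theorem sign_natDegree {S : Type*} [Field S] [LinearOrder S] [IsStrictOrderedRing S]
    (a b : S) (h : S[X]) (hs : h.eval a * h.eval b < 0) : h.natDegree ≠ 0 := by
  intro h0
  obtain ⟨c, rfl⟩ := Polynomial.natDegree_eq_zero.1 h0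
  simp only [Polynomial.eval_C] at hs
  exact absurd hs (not_lt.2 (mul_self_nonneg c))

theorem descent {S : Type*} [Field S] [LinearOrder S] [IsStrictOrderedRing S] (a b : S) :
    ∀ (N : ℕ) (h q : S[X]), h.natDegree = N → h.eval a * h.eval b < 0 → IsSumSq q →
      ¬ h ∣ 1 + q := by
  intro N
  induction N using Nat.strong_induction_on with
  | _ N ih =>
    intro h q hN hs hq hdvd
    have hd := sign_natDegree a b h hs
    obtain ⟨q', h1, h2, h3⟩ := sumsq_reduce h hd hq
    have h4 : h ∣ 1 + q' := by
      have : 1 + q' = (1 + q) - (q - q') := by ring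
      rw [this]; exact dvd_sub hdvd h2
    obtain ⟨h', h5⟩ := h4
    have ev : ∀ c : S, 0 < h.eval c * h'.eval c := by
      intro c
      rw [← Polynomial.eval_mul, ← h5, Polynomial.eval_add, Polynomial.eval_one]
      have := sumsq_eval h1 c
      linarith
    have hne : h ≠ 0 := by rintro rfl; simp at hd
    have hne' : h' ≠ 0 := by rintro rfl; have := ev a; simp at this
    have hdeg : h.natDegree + h'.natDegree ≤ 2 * (h.natDegree - 1) := by
      rw [← Polynomial.natDegree_mul hne hne', ← h5]
      refine (Polynomial.natDegree_add_le _ _).trans (max_le (by simp) h3)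
    refine ih h'.natDegree (by omega) h' q' rfl ?_ h1 ⟨h, by rw [h5, mul_comm]⟩
    have e := mul_pos (ev a) (ev b)
    have e2 : 0 < (h.eval a * h.eval b) * (h'.eval a * h'.eval b) := by
      calc _ < _ := e
        _ = _ := by ring
    by_contra hcon
    exact absurd e2 (not_lt.2 (mul_nonpos_of_nonpos_of_nonneg hs.le (not_lt.1 hcon)))

theorem rc_of_max {S Ω : Type*} [Field S] [LinearOrder S] [IsStrictOrderedRing S] [Field Ω]
    [Algebra S Ω] [IsAlgClosed Ω]
    (hmax : ∀ β : Ω, β ∉ (algebraMap S Ω).range → ∃ q : S[X], IsSumSq q ∧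
      Polynomial.aeval β (1 + q) = 0) : RC S := by
  intro f a b hab hs
  obtain ⟨N, hN⟩ : ∃ N, f.natDegree = N := ⟨_, rfl⟩
  induction N using Nat.strong_induction_on generalizing f with
  | _ N ih =>
    have hd := sign_natDegree a b f hs
    have hf0 : f ≠ 0 := by rintro rfl; simp at hd
    by_cases hirr : Irreducible f
    · obtain ⟨β, hβ⟩ := IsAlgClosed.exists_aeval_eq_zero Ω f
        (by intro h; exact hd (Polynomial.natDegree_eq_of_degree_eq_some h))
      by_cases hm : β ∈ (algebraMap S Ω).range
      · obtain ⟨c, rfl⟩ := hm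
        have hc : f.eval c = 0 := by
          rw [Polynomial.aeval_algebraMap_apply] at hβ
          have := (algebraMap S Ω).injective (hβ.trans (map_zero _).symm)
          rwa [Polynomial.coe_aeval_eq_eval] at this
        obtain ⟨g, hg⟩ := Polynomial.dvd_iff_isRoot.2 hc
        have hu : IsUnit g := by
          rcases hirr.isUnit_or_isUnit hg with h | h
          · exact absurd h (Polynomial.not_isUnit_X_sub_C c)
          · exact h
        obtain ⟨u, hu1, rfl⟩ := Polynomial.isUnit_iff.1 hu
        have hlt : (a - c) * (b - c) < 0 := by
          have e : f.eval a * f.eval b = (a - c) * (b - c) * (u * u) := by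
            rw [hg]; simp; ring
          rw [e] at hs
          by_contra hcon
          exact absurd hs (not_lt.2 (mul_nonneg (not_lt.1 hcon) (mul_self_nonneg u)))
        refine ⟨c, ?_, ?_, hc⟩
        · by_contra hcon
          exact absurd hlt (not_lt.2 (mul_nonneg (by linarith) (by linarith)))
        · by_contra hcon
          exact absurd hlt (not_lt.2 (mul_nonneg_of_nonpos_of_nonpos (by linarith) (by linarith)))
      · obtain ⟨q, hq, hq0⟩ := hmax β hm
        have h1 : minpoly S β ∣ 1 + q := minpoly.dvd _ _ hq0
        have hint : IsIntegral S β := by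
          rw [← isAlgebraic_iff_isIntegral]; exact ⟨f, hf0, hβ⟩
        have h2 : f ∣ minpoly S β :=
          ((minpoly.irreducible hint).associated_of_dvd hirr (minpoly.dvd _ _ hβ)).symm.dvd
        exact absurd (h2.trans h1) (descent a b _ f q rfl hs hq)
    · have hnu : ¬ IsUnit f := fun h => hd (Polynomial.natDegree_eq_zero_of_isUnit h)
      rw [irreducible_iff] at hirr
      push Not at hirr
      obtain ⟨g, h, rfl, hg, hh⟩ := hirr hnu
      have hg0 := left_ne_zero_of_mul hf0
      have hh0 := right_ne_zero_of_mul hf0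
      have dg : g.natDegree ≠ 0 := fun h0 => hg (Polynomial.isUnit_iff_degree_eq_zero.2
        (by rw [Polynomial.degree_eq_natDegree hg0, h0]; rfl))
      have dh : h.natDegree ≠ 0 := fun h0 => hh (Polynomial.isUnit_iff_degree_eq_zero.2
        (by rw [Polynomial.degree_eq_natDegree hh0, h0]; rfl))
      rw [Polynomial.natDegree_mul hg0 hh0] at hN
      have e : (g * h).eval a * (g * h).eval b =
        (g.eval a * g.eval b) * (h.eval a * h.eval b) := by
          simp only [Polynomial.eval_mul]; ring
      rw [e] at hs
      rcases mul_neg_iff.1 hs with ⟨_, h1⟩ | ⟨h1, _⟩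
      · obtain ⟨c, h2, h3, h4⟩ := ih h.natDegree (by omega) h h1 rfl
        exact ⟨c, h2, h3, by rw [Polynomial.eval_mul, h4, mul_zero]⟩
      · obtain ⟨c, h2, h3, h4⟩ := ih g.natDegree (by omega) g h1 rfl
        exact ⟨c, h2, h3, by rw [Polynomial.eval_mul, h4, zero_mul]⟩

theorem sumsq_sqrt {S Ω : Type*} [Field S] [Field Ω] [Algebra S Ω] (a : S) (β : Ω)
    (hβ : β * β = algebraMap S Ω a) (q : S[X]) (hq : IsSumSq q) :
    ∃ u v w : S, IsSumSq u ∧ IsSumSq v ∧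
      Polynomial.aeval β q = algebraMap S Ω (u + a * v) + algebraMap S Ω w * β := by
  have lin : ∀ p : S[X], ∃ x y : S, Polynomial.aeval β p = algebraMap S Ω x + algebraMap S Ω y * β := by
    intro p
    induction p using Polynomial.induction_on' with
    | add p q hp hq =>
      obtain ⟨x, y, h⟩ := hp
      obtain ⟨x', y', h'⟩ := hq
      exact ⟨x + x', y + y', by simp only [map_add, h, h']; ring⟩
    | monomial n c =>
      induction n with
      | zero => exact ⟨c, 0, by simp⟩
      | succ n ih =>
        obtain ⟨x, y, h⟩ := ih
        refine ⟨y * a, x, ?_⟩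
        rw [Polynomial.aeval_monomial] at h ⊢
        rw [pow_succ, ← mul_assoc, h, map_mul, ← hβ]; ring
  induction hq with
  | zero => exact ⟨0, 0, 0, IsSumSq.zero, IsSumSq.zero, by simp⟩
  | sq_add p hs ih =>
    obtain ⟨u, v, w, hu, hv, h⟩ := ih
    obtain ⟨x, y, hp⟩ := lin p
    refine ⟨x * x + u, y * y + v, 2 * (x * y) + w, IsSumSq.sq_add _ hu, IsSumSq.sq_add _ hv, ?_⟩
    rw [map_add, map_mul, hp, h]
    simp only [map_add, map_mul, ← hβ, map_ofNat]
    ring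

theorem neg_sumsq {S Ω : Type*} [Field S] [Field Ω] [Algebra S Ω] [IsAlgClosed Ω]
    (hS : ¬ IsSumSq (-1 : S))
    (hmax : ∀ β : Ω, β ∉ (algebraMap S Ω).range → ∃ q : S[X], IsSumSq q ∧
      Polynomial.aeval β (1 + q) = 0) (a : S) : IsSumSq a ∨ IsSumSq (-a) := by
  obtain ⟨β, hβ⟩ := IsAlgClosed.exists_pow_nat_eq (algebraMap S Ω a) (n := 2) (by norm_num)
  rw [pow_two] at hβ
  by_cases hm : β ∈ (algebraMap S Ω).range
  · obtain ⟨c, rfl⟩ := hm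
    left
    rw [← map_mul] at hβ
    rw [← (algebraMap S Ω).injective hβ]
    exact IsSumSq.mul_self c
  · right
    obtain ⟨q, hq, hq0⟩ := hmax β hm
    obtain ⟨u, v, w, hu, hv, h⟩ := sumsq_sqrt a β hβ q hq
    rw [map_add, h, map_one] at hq0
    have hw : w = 0 := by
      by_contra hw
      apply hm
      have hw' : algebraMap S Ω w ≠ 0 := by simpa using hw
      refine ⟨-(1 + (u + a * v)) / w, ?_⟩
      rw [map_div₀, map_neg, map_add, map_one, div_eq_iff hw']
      linear_combination -hq0
    subst hw
    have e : 1 + (u + a * v) = 0 := by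
      apply (algebraMap S Ω).injective
      rw [map_add, map_one, map_zero]
      linear_combination hq0 - (by simp : (algebraMap S Ω 0) * β = 0)
    have hv0 : v ≠ 0 := by
      rintro rfl
      apply hS
      have : (-1 : S) = u := by linear_combination -e
      rwa [this]
    have : -a = (1 + u) * v * (v⁻¹ * v⁻¹) := by
      field_simp
      linear_combination -e
    rw [this]
    exact ((IsSumSq.one.add hu).mul hv).mul (IsSumSq.mul_self _)

theorem exists_order {S : Type*} [Field S] (hS : ¬ IsSumSq (-1 : S))
    (h : ∀ a : S, IsSumSq a ∨ IsSumSq (-a)) : ∃ _ : LinearOrder S, IsStrictOrderedRing S := by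
  classical
  let C : RingCone S :=
    { Subsemiring.sumSq S with
      eq_zero_of_mem_of_neg_mem' := by
        intro a h1 h2
        have h1 : IsSumSq a := Subsemiring.mem_sumSq.1 h1
        have h2 : IsSumSq (-a) := Subsemiring.mem_sumSq.1 h2
        by_contra h0
        apply hS
        have : (-1 : S) = (-a) * a * (a⁻¹ * a⁻¹) := by field_simp
        rw [this]
        exact (h2.mul h1).mul (IsSumSq.mul_self _) }
  haveI : HasMemOrNegMem C := ⟨fun a => (h a).imp Subsemiring.mem_sumSq.2 Subsemiring.mem_sumSq.2⟩
  letI o : LinearOrder S := LinearOrder.mkOfAddGroupCone C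
  haveI : IsOrderedRing S := IsOrderedRing.mkOfCone C
  exact ⟨o, IsOrderedRing.toIsStrictOrderedRing S⟩

end PartE

section PartE2
open Polynomial IntermediateField

theorem IsSumSq.mapHom {A B : Type*} [Semiring A] [Semiring B] (f : A →+* B) {a : A}
    (h : IsSumSq a) : IsSumSq (f a) := by
  induction h with
  | zero => rw [map_zero]; exact IsSumSq.zero
  | sq_add p hs ih => rw [map_add, map_mul]; exact IsSumSq.sq_add _ ih

theorem IsSumSq.lift_surj {A B : Type*} [Semiring A] [Semiring B] (f : A →+* B)
    (hf : Function.Surjective f) {b : B}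
    (h : IsSumSq b) : ∃ a, IsSumSq a ∧ f a = b := by
  induction h with
  | zero => exact ⟨0, IsSumSq.zero, map_zero _⟩
  | sq_add p hs ih =>
    obtain ⟨a, ha, rfl⟩ := ih
    obtain ⟨x, rfl⟩ := hf p
    exact ⟨x * x + a, IsSumSq.sq_add _ ha, by rw [map_add, map_mul]⟩

theorem exists_max_real (k Ω : Type*) [Field k] [Field Ω] [Algebra k Ω]
    (hk : ¬ IsSumSq (-1 : k)) :
    ∃ S : IntermediateField k Ω, ¬ IsSumSq (-1 : S) ∧
      ∀ T : IntermediateField k Ω, S ≤ T → ¬ IsSumSq (-1 : T) → T = S := by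
  obtain ⟨S, hS⟩ := zorn_le₀ {S : IntermediateField k Ω | ¬ IsSumSq (-1 : S)} (by
    intro c hc hchain
    rcases c.eq_empty_or_nonempty with rfl | hne
    · refine ⟨⊥, ?_, by simp⟩
      intro h
      have := h.mapHom (botEquiv k Ω : _ →+* k)
      rw [map_neg, map_one] at this
      exact hk this
    · refine ⟨sSup c, ?_, fun z hz => le_sSup hz⟩
      haveI : Nonempty c := hne.to_subtype
      have hdir : Directed (· ≤ ·) (fun x : c => (x : IntermediateField k Ω)) := by
        intro x y
        rcases hchain.total x.2 y.2 with h | h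
        · exact ⟨y, h, le_rfl⟩
        · exact ⟨x, le_rfl, h⟩
      have hcoe : ∀ x : Ω, x ∈ sSup c ↔ ∃ T : c, x ∈ (T : IntermediateField k Ω) := by
        intro x
        rw [sSup_eq_iSup', ← SetLike.mem_coe, coe_iSup_of_directed hdir, Set.mem_iUnion]; rfl
      have key : ∀ r : (sSup c : IntermediateField k Ω), IsSumSq r →
          ∃ (T : c) (r' : (T : IntermediateField k Ω)), IsSumSq r' ∧ (r' : Ω) = r := by
        intro r hr
        induction hr with
        | zero => exact ⟨Classical.arbitrary c, 0, IsSumSq.zero, rfl⟩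
        | sq_add p hs ih =>
          obtain ⟨T, r', h1, h2⟩ := ih
          obtain ⟨T', hT'⟩ := (hcoe p).1 p.2
          obtain ⟨U, hU1, hU2⟩ := hdir T T'
          refine ⟨U, ⟨p, hU2 hT'⟩ * ⟨p, hU2 hT'⟩ + inclusion hU1 r', IsSumSq.sq_add _ ?_, ?_⟩
          · exact h1.mapHom (inclusion hU1).toRingHom
          · push_cast
            rw [← h2]; rfl
      intro hr
      obtain ⟨T, r', h1, h2⟩ := key _ hr
      apply hc T.2
      have : r' = -1 := Subtype.ext (by rw [h2]; rfl)
      rwa [this] at h1)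
  exact ⟨S, hS.prop, fun T hST hT => le_antisymm (hS.le_of_ge hT hST) hST⟩

theorem exists_rc (k : Type) [Field k] (hk : ¬ IsSumSq (-1 : k)) :
    ∃ (K : Type) (_ : Field K) (_ : LinearOrder K) (_ : IsStrictOrderedRing K), 
      Nonempty (k →+* K) ∧ RC K := by
  obtain ⟨S, hS, hmaxS⟩ := exists_max_real k (AlgebraicClosure k) hk
  have hmax : ∀ β : AlgebraicClosure k, β ∉ (algebraMap S (AlgebraicClosure k)).range →
      ∃ q : S[X], IsSumSq q ∧ Polynomial.aeval β (1 + q) = 0 := by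
    intro β hβ
    have hint : IsIntegral S β := (Algebra.IsIntegral.isIntegral (R := k) β).tower_top
    have hT : IsSumSq (-1 : S⟮β⟯) := by
      by_contra hcon
      have := hmaxS (S⟮β⟯.restrictScalars k) (by
        intro x hx
        exact S⟮β⟯.algebraMap_mem ⟨x, hx⟩) hcon
      apply hβ
      have h2 : β ∈ S⟮β⟯.restrictScalars k := mem_adjoin_simple_self S β
      rw [this] at h2
      exact ⟨⟨β, h2⟩, rfl⟩
    have hsurj : Function.Surjective
        (Polynomial.aeval (AdjoinSimple.gen S β) : S[X] →ₐ[S] S⟮β⟯) := by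
      intro x
      have hx := x.2
      rw [← mem_toSubalgebra, adjoin_simple_toSubalgebra_of_isAlgebraic hint.isAlgebraic,
        Algebra.adjoin_singleton_eq_range_aeval] at hx
      obtain ⟨p, hp⟩ := hx
      refine ⟨p, Subtype.ext ?_⟩
      rw [← hp]
      have := (Polynomial.aeval_algebraMap_apply (AlgebraicClosure k) (AdjoinSimple.gen S β) p)
      rw [AdjoinSimple.algebraMap_gen] at this
      exact this.symm
    obtain ⟨q, h1, h2⟩ := IsSumSq.lift_surj
      (Polynomial.aeval (AdjoinSimple.gen S β) : S[X] →ₐ[S] S⟮β⟯).toRingHom hsurj hT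
    refine ⟨q, h1, ?_⟩
    have := (Polynomial.aeval_algebraMap_apply (AlgebraicClosure k) (AdjoinSimple.gen S β) q)
    rw [AdjoinSimple.algebraMap_gen] at this
    rw [map_add, map_one, this]
    have h3 : (Polynomial.aeval (AdjoinSimple.gen S β)) q = -1 := h2
    rw [h3, map_neg, map_one, add_neg_cancel]
  obtain ⟨o, ho⟩ := exists_order hS (neg_sumsq hS hmax)
  exact ⟨S, inferInstance, o, ho, ⟨algebraMap k S⟩, rc_of_max hmax⟩

end PartE2

section PartF
open IntermediateField

theorem quad_real {K : Type*} [Field K] [LinearOrder K] [IsStrictOrderedRing K] [Algebra ℝ K]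
    (α : K) (b c : ℝ) (h : α * α + algebraMap ℝ K b * α + algebraMap ℝ K c = 0) :
    ∃ x : ℝ, algebraMap ℝ K x = α := by
  have hD : (2 * α + algebraMap ℝ K b) * (2 * α + algebraMap ℝ K b)
      = algebraMap ℝ K (b * b - 4 * c) := by
    rw [map_sub, map_mul, map_mul, map_ofNat]
    linear_combination 4 * h
  rcases le_or_gt 0 (b * b - 4 * c) with h0 | h0
  · rw [← Real.mul_self_sqrt h0, map_mul] at hD
    rcases mul_self_eq_mul_self_iff.1 hD with h1 | h1
    · refine ⟨(Real.sqrt (b * b - 4 * c) - b) / 2, ?_⟩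
      rw [map_div₀, map_sub, map_ofNat]
      linear_combination -h1 / 2
    · refine ⟨(-Real.sqrt (b * b - 4 * c) - b) / 2, ?_⟩
      rw [map_div₀, map_sub, map_neg, map_ofNat]
      linear_combination -h1 / 2
  · exfalso
    have h1 : b * b - 4 * c = - (Real.sqrt (-(b * b - 4 * c)) * Real.sqrt (-(b * b - 4 * c))) := by
      rw [Real.mul_self_sqrt (by linarith)]; ring
    have h2 : Real.sqrt (-(b * b - 4 * c)) ≠ 0 := (Real.sqrt_pos.2 (by linarith)).ne'
    generalize Real.sqrt (-(b * b - 4 * c)) = t at h1 h2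
    rw [h1, map_neg, map_mul] at hD
    have h3 : algebraMap ℝ K t ≠ 0 := by simpa using h2
    have := mul_self_pos.2 h3
    have := mul_self_nonneg (2 * α + algebraMap ℝ K b)
    linarith

theorem alg_real {K : Type*} [Field K] [LinearOrder K] [IsStrictOrderedRing K] [Algebra ℝ K]
    (α : K) (h : IsAlgebraic ℝ α) : ∃ x : ℝ, algebraMap ℝ K x = α := by
  have hi := h.isIntegral
  have h2 := (minpoly.irreducible hi).natDegree_le_two
  have hm := minpoly.monic hi
  have h0 := minpoly.aeval ℝ α
  have hp := minpoly.natDegree_pos hi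
  generalize minpoly ℝ α = p at *
  obtain h1 | h1 : p.natDegree = 1 ∨ p.natDegree = 2 := by omega
  · rw [Polynomial.Monic, Polynomial.leadingCoeff, h1] at hm
    rw [Polynomial.aeval_eq_sum_range, h1] at h0
    simp [Finset.sum_range_succ, hm, Algebra.smul_def] at h0
    exact ⟨-p.coeff 0, by rw [map_neg]; linear_combination -h0⟩
  · rw [Polynomial.Monic, Polynomial.leadingCoeff, h1] at hm
    rw [Polynomial.aeval_eq_sum_range, h1] at h0
    simp [Finset.sum_range_succ, hm, Algebra.smul_def] at h0
    exact quad_real α (p.coeff 1) (p.coeff 0) (by linear_combination h0)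

theorem artin_lang_real (k : Type) [Field k] [Algebra ℝ k] (hk : ¬ IsSumSq (-1 : k))
    (ι : Type) [Finite ι] (g h : MvPolynomial ι ℝ) (z : ι → k)
    (hg : MvPolynomial.aeval z g = 0) (hh : MvPolynomial.aeval z h ≠ 0) :
    ∃ a : ι → ℝ, MvPolynomial.eval a g = 0 ∧ MvPolynomial.eval a h ≠ 0 := by
  obtain ⟨K, _, _, _, ⟨φ⟩, hK⟩ := exists_rc k hk
  letI : Algebra ℝ K := (φ.comp (algebraMap ℝ k)).toAlgebra
  let ψ : k →ₐ[ℝ] K := { φ with commutes' := fun r => rfl }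
  have hev : ∀ p : MvPolynomial ι ℝ, MvPolynomial.aeval (ψ ∘ z) p = ψ (MvPolynomial.aeval z p) := by
    intro p
    exact (MvPolynomial.comp_aeval_apply z ψ p).symm
  have hR : RelAC (⊥ : IntermediateField ℝ K) := by
    intro α p hp h0
    have h1 : IsAlgebraic (⊥ : IntermediateField ℝ K) α := ⟨p, hp, h0⟩
    have h2 : IsAlgebraic ℝ α := by
      haveI : Algebra.IsAlgebraic ℝ (⊥ : IntermediateField ℝ K) := inferInstance
      exact h1.restrictScalars ℝ
    exact mem_bot.2 (alg_real α h2)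
  obtain ⟨z', h1, h2⟩ := artin_lang_aux hK ι g h ⊥ hR (ψ ∘ z) (by rw [hev, hg, map_zero])
    (by rw [hev]; exact (map_ne_zero ψ).2 hh)
  have hev' : ∀ p : MvPolynomial ι ℝ, MvPolynomial.eval (fun i => botEquiv ℝ K (z' i)) p =
      botEquiv ℝ K (MvPolynomial.aeval z' p) := by
    intro p
    exact (MvPolynomial.comp_aeval_apply z' (botEquiv ℝ K).toAlgHom p).symm
  refine ⟨fun i => botEquiv ℝ K (z' i), by rw [hev', h1, map_zero], ?_⟩
  rw [hev']
  exact (map_ne_zero (botEquiv ℝ K)).2 h2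

end PartF

open MvPolynomial Matrix

section G
variable {A : Type*} [CommRing A] {n : ℕ}

theorem smul_mem_left (I : Ideal (Matrix (Fin n) (Fin n) A)) (f : A) {M : Matrix (Fin n) (Fin n) A}
    (h : M ∈ I) : f • M ∈ I := by
  have := I.mul_mem_left (f • (1 : Matrix (Fin n) (Fin n) A)) h
  rwa [smul_mul_assoc, one_mul] at this

/-- colon ideal by a scalar -/
def colonS (I : Ideal (Matrix (Fin n) (Fin n) A)) (f : A) : Ideal (Matrix (Fin n) (Fin n) A) where
  carrier := {M | f • M ∈ I}
  add_mem' := fun {a b} ha hb => by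
    have := I.add_mem ha hb
    rwa [← smul_add] at this
  zero_mem' := by simp
  smul_mem' := fun c M h => by
    have := I.mul_mem_left c h
    rw [mul_smul_comm] at this
    exact this

theorem colonS_real {I : Ideal (Matrix (Fin n) (Fin n) A)} (hI : I.IsRealLeftIdealT) (f : A) :
    (colonS I f).IsRealLeftIdealT := by
  intro k B hB
  refine hI k (fun i => f • B i) ?_
  have h : f • ∑ i, (B i)ᵀ * B i ∈ I := hB
  have h2 := smul_mem_left I f h
  convert h2 using 1
  simp [Finset.smul_sum, Matrix.transpose_smul]

/-- the conductor of Q -/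
def condJ (I : Ideal (Matrix (Fin n) (Fin n) A)) (Q : Matrix (Fin n) (Fin n) A) : Ideal A where
  carrier := {f | f • Q ∈ I}
  add_mem' := fun {a b} ha hb => by
    have := I.add_mem ha hb
    rwa [← add_smul] at this
  zero_mem' := by simp
  smul_mem' := fun c M h => by
    have := smul_mem_left I c h
    rw [smul_smul] at this
    exact this

theorem mem_condJ {I : Ideal (Matrix (Fin n) (Fin n) A)} {Q : Matrix (Fin n) (Fin n) A} {f : A} :
    f ∈ condJ I Q ↔ f • Q ∈ I := Iff.rfl

theorem exists_max_ideal (I₀ : Ideal (Matrix (Fin n) (Fin n) A)) (hI₀ : I₀.IsRealLeftIdealT)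
    (Q : Matrix (Fin n) (Fin n) A) (hQ : Q ∉ I₀) :
    ∃ I : Ideal (Matrix (Fin n) (Fin n) A), I₀ ≤ I ∧ I.IsRealLeftIdealT ∧ Q ∉ I ∧
      ∀ I' : Ideal (Matrix (Fin n) (Fin n) A), I'.IsRealLeftIdealT → Q ∉ I' → I ≤ I' → I' ≤ I := by
  obtain ⟨I, h1, h2⟩ := zorn_le_nonempty₀
    {I : Ideal (Matrix (Fin n) (Fin n) A) | I.IsRealLeftIdealT ∧ Q ∉ I} (by
      intro c hc hchain y hy
      have hmem : ∀ x, x ∈ sSup c ↔ ∃ T ∈ c, x ∈ T := fun x =>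
        Submodule.mem_sSup_of_directed ⟨y, hy⟩ hchain.directedOn
      refine ⟨sSup c, ⟨?_, ?_⟩, fun z hz => le_sSup hz⟩
      · intro k B hB i
        obtain ⟨T, hT, hB⟩ := (hmem _).1 hB
        exact (hmem _).2 ⟨T, hT, (hc hT).1 k B hB i⟩
      · intro h
        obtain ⟨T, hT, hB⟩ := (hmem _).1 h
        exact (hc hT).2 hB) I₀ ⟨hI₀, hQ⟩
  exact ⟨I, h1, h2.prop.1, h2.prop.2, fun I' ha hb hc => h2.le_of_ge ⟨ha, hb⟩ hc⟩

theorem condJ_prime {I : Ideal (Matrix (Fin n) (Fin n) A)} (hI : I.IsRealLeftIdealT)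
    {Q : Matrix (Fin n) (Fin n) A} (hQ : Q ∉ I)
    (hmax : ∀ I' : Ideal (Matrix (Fin n) (Fin n) A), I'.IsRealLeftIdealT → Q ∉ I' → I ≤ I' → I' ≤ I) :
    (condJ I Q).IsPrime := by
  constructor
  · intro h
    have : (1 : A) ∈ condJ I Q := by rw [h]; trivial
    rw [mem_condJ, one_smul] at this
    exact hQ this
  · intro f g hfg
    by_contra hcon
    push Not at hcon
    have := hmax (colonS I f) (colonS_real hI f) hcon.1 (fun M hM => smul_mem_left I f hM)
    apply hcon.2
    rw [mem_condJ]
    apply this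
    show f • g • Q ∈ I
    rw [smul_smul]; exact hfg

theorem sumsq_fin {c : A} (hc : IsSumSq c) : ∃ (k : ℕ) (a : Fin k → A), c = ∑ i, a i * a i := by
  induction hc with
  | zero => exact ⟨0, fun _ => 0, by simp⟩
  | sq_add p hs ih =>
    obtain ⟨k, a, rfl⟩ := ih
    exact ⟨k + 1, Fin.cons p a, by simp [Fin.sum_univ_succ]⟩

theorem condJ_real {I : Ideal (Matrix (Fin n) (Fin n) A)} (hI : I.IsRealLeftIdealT)
    {Q : Matrix (Fin n) (Fin n) A} {b c : A} (hc : IsSumSq c) (h : b * b + c ∈ condJ I Q) :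
    b ∈ condJ I Q := by
  obtain ⟨k, a, rfl⟩ := sumsq_fin hc
  have := hI (k + 1) (fun i => (Fin.cons b a : Fin (k+1) → A) i • Q) ?_ 0
  · simpa [mem_condJ] using this
  · rw [mem_condJ] at h
    have h2 := I.mul_mem_left Qᵀ h
    convert h2 using 1
    simp [Fin.sum_univ_succ, Matrix.transpose_smul, smul_smul, add_smul, Finset.sum_smul, mul_add,
      Finset.mul_sum]

theorem mul_Q_mem {I : Ideal (Matrix (Fin n) (Fin n) A)} {Q : Matrix (Fin n) (Fin n) A}
    (W : Matrix (Fin n) (Fin n) A) (hW : ∀ i j, W i j ∈ condJ I Q) : W * Q ∈ I := by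
  rw [Matrix.matrix_eq_sum_single W, Finset.sum_mul]
  refine I.sum_mem fun i _ => ?_
  rw [Finset.sum_mul]
  refine I.sum_mem fun j _ => ?_
  have := I.mul_mem_left (Matrix.single i j 1) (hW i j)
  convert this using 1
  rw [mul_smul_comm, ← smul_mul_assoc, Matrix.smul_single, smul_eq_mul, mul_one]

theorem no_relation {I : Ideal (Matrix (Fin n) (Fin n) A)} (hI : I.IsRealLeftIdealT)
    {Q : Matrix (Fin n) (Fin n) A} {s : A} (hs : s ∉ condJ I Q) (T : Matrix (Fin n) (Fin n) A)
    (hT : T ∈ I) (hw : ∀ i j, (s • Q - T) i j ∈ condJ I Q) : False := by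
  set w := s • Q - T with hwdef
  have h1 : wᵀ * w ∈ I := by
    have e : wᵀ * w = s • (wᵀ * Q) - wᵀ * T := by
      conv_lhs => rw [hwdef]
      rw [← hwdef, mul_sub, mul_smul_comm]
    rw [e]
    exact I.sub_mem (smul_mem_left I s (mul_Q_mem _ fun i j => hw j i)) (I.mul_mem_left _ hT)
  have h2 : w ∈ I := hI 1 (fun _ => w) (by simpa using h1) 0
  apply hs
  rw [mem_condJ]
  have : s • Q = w + T := by rw [hwdef]; abel
  rw [this]
  exact I.add_mem h2 hT

theorem exists_vec {k : Type*} [Field k] (π : A →+* k) {I : Ideal (Matrix (Fin n) (Fin n) A)}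
    (hI : I.IsRealLeftIdealT) {Q : Matrix (Fin n) (Fin n) A} (hker : ∀ a, π a = 0 ↔ a ∈ condJ I Q)
    (hfrac : ∀ x : k, ∃ a b : A, π b ≠ 0 ∧ π b * x = π a) :
    ∃ v : Fin n → k, (∀ M ∈ I, ∀ r, ∑ j, π (M r j) * v j = 0) ∧ ∃ r, ∑ j, π (Q r j) * v j ≠ 0 := by
  classical
  let U : Submodule k (Fin n → k) :=
    Submodule.span k {u | ∃ M ∈ I, ∃ r, u = fun j => π (M r j)}
  have hU : ∀ u ∈ U, ∃ s, π s ≠ 0 ∧ ∃ t : Fin n → A,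
      (∀ r, Matrix.vecMulVec (Pi.single r 1) t ∈ I) ∧ ∀ j, π s * u j = π (t j) := by
    intro u hu
    induction hu using Submodule.span_induction with
    | mem u hu =>
      obtain ⟨M, hM, i, rfl⟩ := hu
      refine ⟨1, by simp, M i, fun r => ?_, by simp⟩
      have := I.mul_mem_left (Matrix.single r i 1) hM
      convert this using 1
      ext a b
      by_cases h : a = r
      · subst h; simp [Matrix.vecMulVec]
      · simp [Matrix.vecMulVec, h]
    | zero => exact ⟨1, by simp, 0, by simp, by simp⟩
    | add x y _ _ hx hy =>
      obtain ⟨s, hs, t, h1, h2⟩ := hx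
      obtain ⟨s', hs', t', h1', h2'⟩ := hy
      refine ⟨s * s', by simp [hs, hs'], s' • t + s • t', fun r => ?_, fun j => ?_⟩
      · rw [Matrix.vecMulVec_add, Matrix.vecMulVec_smul, Matrix.vecMulVec_smul]
        exact I.add_mem (smul_mem_left I _ (h1 r)) (smul_mem_left I _ (h1' r))
      · simp only [Pi.add_apply, Pi.smul_apply, smul_eq_mul, map_add, map_mul, ← h2, ← h2']
        ring
    | smul c x _ hx =>
      obtain ⟨s, hs, t, h1, h2⟩ := hx
      obtain ⟨a, b, hb, hab⟩ := hfrac c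
      refine ⟨b * s, by simp [hs, hb], a • t, fun r => ?_, fun j => ?_⟩
      · rw [Matrix.vecMulVec_smul]
        exact smul_mem_left I _ (h1 r)
      · simp only [Pi.smul_apply, smul_eq_mul, map_mul, ← h2, ← hab]
        ring
  have hex : ∃ r, (fun j => π (Q r j)) ∉ U := by
    by_contra hcon
    push Not at hcon
    choose s hs t h1 h2 using fun r => hU _ (hcon r)
    have hsp : (∏ r, s r) ∉ condJ I Q := by
      rw [← hker, map_prod]
      exact Finset.prod_ne_zero_iff.2 fun r _ => hs r
    refine no_relation hI hsp
      (∑ r, (∏ r' ∈ Finset.univ.erase r, s r') • Matrix.vecMulVec (Pi.single r 1) (t r))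
      (I.sum_mem fun r _ => smul_mem_left I _ (h1 r r)) ?_
    intro i j
    rw [← hker]
    have e : (∑ r, (∏ r' ∈ Finset.univ.erase r, s r') •
        Matrix.vecMulVec (Pi.single r (1 : A)) (t r)) i j =
        (∏ r' ∈ Finset.univ.erase i, s r') * t i j := by
      rw [Matrix.sum_apply, Finset.sum_eq_single i]
      · simp [Matrix.vecMulVec]
      · intro b _ hb
        simp [Matrix.vecMulVec, hb.symm]
      · simp
    rw [Matrix.sub_apply, e, Matrix.smul_apply, smul_eq_mul, map_sub, map_mul, map_mul, ← h2 i j,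
      ← Finset.mul_prod_erase _ _ (Finset.mem_univ i), map_mul]
    ring
  obtain ⟨r, hr⟩ := hex
  obtain ⟨f, hf1, hf2⟩ := Submodule.exists_le_ker_of_notMem hr
  have hf : ∀ u : Fin n → k, f u = ∑ j, u j * f (Pi.single j 1) := by
    intro u
    conv_lhs => rw [pi_eq_sum_univ' u, map_sum]
    simp only [map_smul, smul_eq_mul]
  refine ⟨fun j => f (Pi.single j 1), ?_, r, ?_⟩
  · intro M hM r
    rw [← hf (fun j => π (M r j))]
    exact hf2 (Submodule.subset_span ⟨M, hM, r, rfl⟩)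
  · rw [← hf (fun j => π (Q r j))]
    exact hf1

theorem not_sumsq_frac {k : Type*} [Field k] (π : A →+* k) {I : Ideal (Matrix (Fin n) (Fin n) A)}
    (hI : I.IsRealLeftIdealT) {Q : Matrix (Fin n) (Fin n) A} (hker : ∀ a, π a = 0 ↔ a ∈ condJ I Q)
    (hfrac : ∀ x : k, ∃ a b : A, π b ≠ 0 ∧ π b * x = π a) : ¬ IsSumSq (-1 : k) := by
  have key : ∀ x : k, IsSumSq x → ∃ b c, π b ≠ 0 ∧ IsSumSq c ∧ π (b * b) * x = π c := by
    intro x hx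
    induction hx with
    | zero => exact ⟨1, 0, by simp, IsSumSq.zero, by simp⟩
    | sq_add p hs ih =>
      obtain ⟨b, c, h1, h2, h3⟩ := ih
      obtain ⟨a1, b1, h4, h5⟩ := hfrac p
      refine ⟨b1 * b, (a1 * b) * (a1 * b) + b1 * b1 * c, by simp [h1, h4],
        IsSumSq.sq_add _ ((IsSumSq.mul_self _).mul h2), ?_⟩
      simp only [map_mul, map_add, ← h3, ← h5]
      ring
  intro h
  obtain ⟨b, c, h1, h2, h3⟩ := key _ h
  apply h1
  rw [hker]
  apply condJ_real hI h2
  rw [← hker, map_add, ← h3]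
  ring
end G

theorem easy_dir {d n : ℕ} (a : Fin d → ℝ) (v : Fin n → ℝ) :
    ∃ I : Ideal (Matrix (Fin n) (Fin n) (MvPolynomial (Fin d) ℝ)), I.IsRealLeftIdealT ∧
      ∀ M, M ∈ I ↔ (evalMat a M).mulVec v = 0 := by
  have hev : ∀ M : Matrix (Fin n) (Fin n) (MvPolynomial (Fin d) ℝ), evalMat a M = M.map (MvPolynomial.eval a) := fun M => rfl
  refine ⟨{ carrier := {M | (evalMat a M).mulVec v = 0}
            add_mem' := fun {x y} hx hy => ?_
            zero_mem' := ?_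
            smul_mem' := fun c x hx => ?_ }, ?_, fun M => Iff.rfl⟩
  · simp only [Set.mem_setOf_eq, hev] at *
    rw [Matrix.map_add _ (map_add _), Matrix.add_mulVec, hx, hy, add_zero]
  · simp [hev]
  · simp only [Set.mem_setOf_eq, hev] at *
    rw [smul_eq_mul, Matrix.map_mul, ← Matrix.mulVec_mulVec, hx, Matrix.mulVec_zero]
  · intro k B hB
    have hB : (evalMat a (∑ i, (B i)ᵀ * B i)).mulVec v = 0 := hB
    have e : evalMat a (∑ i, (B i)ᵀ * B i) = ∑ i, (evalMat a (B i))ᵀ * evalMat a (B i) := by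
      ext i j
      simp [evalMat, Matrix.sum_apply, Matrix.mul_apply]
    rw [e, Matrix.sum_mulVec] at hB
    have h2 : ∑ i, (evalMat a (B i)).mulVec v ⬝ᵥ (evalMat a (B i)).mulVec v = 0 := by
      have := congrArg (fun w => v ⬝ᵥ w) hB
      simp only [dotProduct_zero, dotProduct_sum] at this
      rw [← this]
      refine Finset.sum_congr rfl fun i _ => ?_
      rw [← Matrix.mulVec_mulVec, Matrix.dotProduct_mulVec v, Matrix.vecMul_transpose]
    intro i
    have h3 := (Finset.sum_eq_zero_iff_of_nonneg (fun i _ => by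
      exact Finset.sum_nonneg fun j _ => mul_self_nonneg _)).1 h2 i (Finset.mem_univ i)
    exact dotProduct_self_eq_zero.1 h3

/-- **Matricial Real Nullstellensatz (Theorem D).** -/
theorem matricial_real_nullstellensatz (d n m : ℕ)
    (P : Fin m → Matrix (Fin n) (Fin n) (MvPolynomial (Fin d) ℝ))
    (Q : Matrix (Fin n) (Fin n) (MvPolynomial (Fin d) ℝ)) :
    (∀ (a : Fin d → ℝ) (v : Fin n → ℝ),
        (∀ i, (evalMat a (P i)).mulVec v = 0) → (evalMat a Q).mulVec v = 0) ↔
      (∀ I : Ideal (Matrix (Fin n) (Fin n) (MvPolynomial (Fin d) ℝ)),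
        I.IsRealLeftIdealT → (∀ i, P i ∈ I) → Q ∈ I) := by
  constructor
  · intro H I₀ hI₀ hP
    by_contra hQ₀
    obtain ⟨I, hle, hI, hQ, hmax⟩ := exists_max_ideal I₀ hI₀ Q hQ₀
    have hprime := condJ_prime hI hQ hmax
    let k := FractionRing (MvPolynomial (Fin d) ℝ ⧸ condJ I Q)
    let π : MvPolynomial (Fin d) ℝ →ₐ[ℝ] k :=
      (IsScalarTower.toAlgHom ℝ (MvPolynomial (Fin d) ℝ ⧸ condJ I Q) k).comp
        (Ideal.Quotient.mkₐ ℝ (condJ I Q))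
    have hπ : ∀ a, π a = algebraMap (MvPolynomial (Fin d) ℝ ⧸ condJ I Q) k
      (Ideal.Quotient.mk (condJ I Q) a) := fun a => rfl
    have hker : ∀ a, π.toRingHom a = 0 ↔ a ∈ condJ I Q := by
      intro a
      change π a = 0 ↔ _
      rw [hπ, ← Ideal.Quotient.eq_zero_iff_mem]
      exact (FaithfulSMul.algebraMap_eq_zero_iff _ k)
    have hfrac : ∀ x : k, ∃ a b, π.toRingHom b ≠ 0 ∧ π.toRingHom b * x = π.toRingHom a := by
      intro x
      obtain ⟨a, b, hb, rfl⟩ := IsFractionRing.div_surjective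
        (A := MvPolynomial (Fin d) ℝ ⧸ condJ I Q) x
      obtain ⟨a, rfl⟩ := Ideal.Quotient.mk_surjective a
      obtain ⟨b, rfl⟩ := Ideal.Quotient.mk_surjective b
      have hb0 : π b ≠ 0 := by
        rw [hπ]
        exact (FaithfulSMul.algebraMap_eq_zero_iff _ k).not.2 (nonZeroDivisors.ne_zero hb)
      refine ⟨a, b, hb0, ?_⟩
      change π b * (π a / π b) = π a
      rw [mul_div_cancel₀ _ hb0]
    have hk := not_sumsq_frac π.toRingHom hI hker hfrac
    obtain ⟨v, hv1, r, hv2⟩ := exists_vec π.toRingHom hI hker hfrac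
    let z : Fin d ⊕ Fin n → k := Sum.elim (fun i => π (MvPolynomial.X i)) v
    let L : Matrix (Fin n) (Fin n) (MvPolynomial (Fin d) ℝ) → Fin n →
        MvPolynomial (Fin d ⊕ Fin n) ℝ := fun M r =>
      ∑ j, MvPolynomial.rename Sum.inl (M r j) * MvPolynomial.X (Sum.inr j)
    have hL : ∀ M r, MvPolynomial.aeval z (L M r) = ∑ j, π (M r j) * v j := by
      intro M r
      simp only [L, map_sum, map_mul, MvPolynomial.aeval_X, MvPolynomial.aeval_rename]
      refine Finset.sum_congr rfl fun j _ => ?_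
      rw [MvPolynomial.aeval_unique π]
      rfl
    have hL' : ∀ M r (y : Fin d ⊕ Fin n → ℝ), MvPolynomial.eval y (L M r) =
        ((evalMat (y ∘ Sum.inl) M).mulVec (y ∘ Sum.inr)) r := by
      intro M r y
      simp only [L, map_sum, map_mul, MvPolynomial.eval_X, MvPolynomial.eval_rename]
      rfl
    obtain ⟨y, hy1, hy2⟩ := artin_lang_real k hk (Fin d ⊕ Fin n)
      (∑ i, ∑ s, L (P i) s * L (P i) s) (L Q r) z (by
        rw [map_sum]
        refine Finset.sum_eq_zero fun i _ => ?_
        rw [map_sum]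
        refine Finset.sum_eq_zero fun s _ => ?_
        have : MvPolynomial.aeval z (L (P i) s) = 0 := (hL _ _).trans (hv1 _ (hle (hP i)) s)
        rw [map_mul, this, mul_zero])
      (by rw [hL]; exact hv2)
    apply hy2
    rw [hL']
    rw [H (y ∘ Sum.inl) (y ∘ Sum.inr)]
    · rfl
    · intro i
      funext s
      rw [← hL']
      rw [map_sum] at hy1
      have h1 := (Finset.sum_eq_zero_iff_of_nonneg (fun i _ => by
        rw [map_sum]
        exact Finset.sum_nonneg fun j _ => by
          rw [map_mul]; exact mul_self_nonneg _)).1 hy1 i (Finset.mem_univ i)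
      rw [map_sum] at h1
      have h2 := (Finset.sum_eq_zero_iff_of_nonneg (fun i _ => by
          rw [map_mul]; exact mul_self_nonneg _)).1 h1 s (Finset.mem_univ s)
      rw [map_mul] at h2
      exact mul_self_eq_zero.1 h2
  · intro H a v hP
    obtain ⟨I, hI, hmem⟩ := easy_dir a v
    exact (hmem Q).1 (H I hI fun i => (hmem _).2 (hP i))
end

section
/- (Theorem E, First Matricial Quaternionic Nullstellensatz) For any quaternionic matrix polynomials P₁, …, P_m, Q ∈ M_n(ℍ_c[x₁, …, x_d]) the following are equivalent: (1) for every a ∈ ℝ^d and every vector v ∈ ℍ^n such that P₁(a)v = ⋯ = P_m(a)v = 0, one has Q(a)v = 0; (2) Q belongs to every real left ideal of M_n(ℍ_c[x₁, …, x_d]) that contains P₁, …, P_m. -/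
open MvPolynomial Matrix

/-- Evaluation of a quaternionic polynomial with central (commuting) variables at a real
point, performed componentwise. -/
noncomputable def evalQ {d : ℕ} (a : Fin d → ℝ) (p : Quaternion (MvPolynomial (Fin d) ℝ)) :
    Quaternion ℝ :=
  ⟨eval a p.re, eval a p.imI, eval a p.imJ, eval a p.imK⟩

/-- Entrywise evaluation of a quaternionic matrix polynomial at a real point. -/
noncomputable def evalMatQ {d n : ℕ} (a : Fin d → ℝ)
    (P : Matrix (Fin n) (Fin n) (Quaternion (MvPolynomial (Fin d) ℝ))) :
    Matrix (Fin n) (Fin n) (Quaternion ℝ) :=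
  fun i j => evalQ a (P i j)

/-- A left ideal `I` of the matrix ring over a ring `A` with involution, equipped with the
conjugate-transpose involution `ᴴ`, is *real* if whenever
`(A 0)ᴴ * A 0 + ⋯ + (A (k-1))ᴴ * A (k-1) ∈ I`, each `A i` lies in `I`.
(In Mathlib, `Ideal` means left ideal.) -/
def Ideal.IsRealLeftIdealH {A : Type*} [Ring A] [StarRing A] {n : ℕ}
    (I : Ideal (Matrix (Fin n) (Fin n) A)) : Prop :=
  ∀ (k : ℕ) (M : Fin k → Matrix (Fin n) (Fin n) A),
    (∑ i, (M i)ᴴ * M i) ∈ I → ∀ i, M i ∈ I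

namespace RN

set_option linter.unusedSectionVars false
set_option linter.style.haveILetI false

/-- Intermediate value property for polynomials. -/
def PIVT (F : Type) [Field F] [LinearOrder F] : Prop :=
  ∀ (p : Polynomial F) (a b : F), a < b → p.eval a * p.eval b < 0 →
    ∃ c, a < c ∧ c < b ∧ p.eval c = 0

section basic
variable {F : Type} [Field F] [LinearOrder F] [IsStrictOrderedRing F]

theorem PIVT.same_sign (hF : PIVT F) (p : Polynomial F) {a b : F} (hab : a ≤ b)
    (h : ∀ c, a ≤ c → c ≤ b → p.eval c ≠ 0) : 0 < p.eval a * p.eval b := by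
  rcases hab.eq_or_lt with rfl | hlt
  · exact mul_self_pos.mpr (h a le_rfl le_rfl)
  by_contra hcon
  have h1 : p.eval a * p.eval b ≠ 0 :=
    mul_ne_zero (h a le_rfl hab) (h b hab le_rfl)
  obtain ⟨c, h2, h3, h4⟩ := hF p a b hlt (lt_of_le_of_ne (not_lt.mp hcon) h1)
  exact h c h2.le h3.le h4

/-- positivity is transported along an interval without roots -/
theorem PIVT.pos_of_pos (hF : PIVT F) (p : Polynomial F) {a b : F}
    (h : ∀ c, min a b ≤ c → c ≤ max a b → p.eval c ≠ 0) (ha : 0 < p.eval a) : 0 < p.eval b := by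
  rcases le_total a b with hab | hab
  · have := hF.same_sign p hab (fun c h1 h2 => h c (by simpa [hab] using h1) (by simpa [hab] using h2))
    exact (pos_iff_pos_of_mul_pos this).mp ha
  · have := hF.same_sign p hab (fun c h1 h2 => h c (by simpa [hab] using h1) (by simpa [hab] using h2))
    exact (pos_iff_pos_of_mul_pos this).mpr ha

theorem eval_derivative_of_eq {f g : Polynomial F} {a : F}
    (h : f = (Polynomial.X - Polynomial.C a) * g) : f.derivative.eval a = g.eval a := by
  subst h; simp [Polynomial.derivative_mul]

/-- Weak Rolle -/
theorem PIVT.rolle (hF : PIVT F) (f : Polynomial F) (hf : f ≠ 0)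
    (hs : ∀ c, f.eval c = 0 → f.derivative.eval c ≠ 0) {a b : F} (hab : a < b)
    (ha : f.eval a = 0) (hb : f.eval b = 0) :
    ∃ c, a < c ∧ c < b ∧ f.derivative.eval c = 0 := by
  classical
  let s := f.roots.toFinset.filter (fun x => a < x)
  have hsne : s.Nonempty := ⟨b, by simp [s, hf, hb, hab]⟩
  set b' := s.min' hsne with hb'
  have hb's : b' ∈ s := s.min'_mem hsne
  have hb'1 : a < b' := (Finset.mem_filter.mp hb's).2
  have hb'0 : f.eval b' = 0 := by
    have := (Finset.mem_filter.mp hb's).1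
    simpa [hf] using this
  have hb'b : b' ≤ b := s.min'_le b (by simp [s, hf, hb, hab])
  obtain ⟨g1, hg1⟩ := Polynomial.dvd_iff_isRoot.mpr (show f.IsRoot a from ha)
  have hg1b : g1.IsRoot b' := by
    have : (b' - a) * g1.eval b' = 0 := by rw [← hb'0, hg1]; simp
    exact (mul_eq_zero.mp this).resolve_left (sub_ne_zero.mpr hb'1.ne')
  obtain ⟨g, hg⟩ := Polynomial.dvd_iff_isRoot.mpr hg1b
  have e1 : f.derivative.eval a = (a - b') * g.eval a := by
    rw [eval_derivative_of_eq hg1, hg]; simp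
  have e2 : f.derivative.eval b' = (b' - a) * g.eval b' := by
    rw [eval_derivative_of_eq (g := (Polynomial.X - Polynomial.C a) * g) (by rw [hg1, hg]; ring)]
    simp
  have hpos : 0 < g.eval a * g.eval b' := by
    apply hF.same_sign g hb'1.le
    intro c h1 h2 h3
    have hfc : f.eval c = 0 := by rw [hg1, hg]; simp [h3]
    rcases h1.eq_or_lt with rfl | h1
    · exact hs a ha (by rw [e1, h3, mul_zero])
    · have : c ∈ s := by simp [s, hf, hfc, h1]
      have := s.min'_le c this
      have hc : c = b' := le_antisymm h2 this
      exact hs b' hb'0 (by rw [e2, ← hc, h3, mul_zero])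
  obtain ⟨c, h1, h2, h3⟩ := hF f.derivative a b' hb'1 (by
    rw [e1, e2]
    have : 0 < (b' - a) * (b' - a) := mul_self_pos.mpr (sub_ne_zero.mpr hb'1.ne')
    nlinarith [mul_pos this hpos])
  exact ⟨c, h1, h2.trans_le hb'b, h3⟩

/-- sign change around a simple root -/
theorem PIVT.sign_change (hF : PIVT F) (f : Polynomial F) (hf : f ≠ 0)
    (hs : ∀ c, f.eval c = 0 → f.derivative.eval c ≠ 0) {a b t : F} (hat : a < t) (htb : t < b)
    (ht : f.eval t = 0) (ha : f.eval a ≠ 0) (hb : f.eval b ≠ 0)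
    (hd : ∀ c, a < c → c < b → f.derivative.eval c ≠ 0) : f.eval a * f.eval b < 0 := by
  obtain ⟨g, hg⟩ := Polynomial.dvd_iff_isRoot.mpr (show f.IsRoot t from ht)
  have hpos : 0 < g.eval a * g.eval b := by
    apply hF.same_sign g (hat.trans htb).le
    intro c h1 h2 h3
    have hfc : f.eval c = 0 := by rw [hg]; simp [h3]
    have h1' : a < c := lt_of_le_of_ne h1 (by rintro rfl; exact ha hfc)
    have h2' : c < b := lt_of_le_of_ne h2 (by rintro rfl; exact hb hfc)
    rcases lt_trichotomy c t with hc | rfl | hc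
    · obtain ⟨e, he1, he2, he3⟩ := hF.rolle f hf hs hc hfc ht
      exact hd e (h1'.trans he1) (he2.trans htb) he3
    · exact hd c hat htb (by rw [eval_derivative_of_eq hg, h3])
    · obtain ⟨e, he1, he2, he3⟩ := hF.rolle f hf hs hc ht hfc
      exact hd e (hat.trans he1) (he2.trans h2') he3
  have ea : f.eval a = (a - t) * g.eval a := by rw [hg]; simp
  have eb : f.eval b = (b - t) * g.eval b := by rw [hg]; simp
  rw [ea, eb]
  have : 0 < (t - a) * (b - t) := mul_pos (sub_pos.mpr hat) (sub_pos.mpr htb)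
  nlinarith [mul_pos this hpos]

/-- a bound for roots -/
theorem root_bound {k : Type} [Field k] (i : k →+* F) (f : Polynomial k) (hf : f.Monic) (t : F)
    (ht : f.eval₂ i t = 0) : ∃ c : k, |t| < i c := by
  refine ⟨2 + ∑ m ∈ Finset.range f.natDegree, ((f.coeff m) ^ 2 + 1), ?_⟩
  have hco : ∀ m, |i (f.coeff m)| ≤ i ((f.coeff m)^2 + 1) := by
    intro m
    rw [map_add, map_pow, map_one]
    rw [abs_le]; constructor <;> nlinarith [sq_nonneg (i (f.coeff m) - 1), sq_nonneg (i (f.coeff m) + 1)]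
  have hnn : ∀ m, 0 ≤ i ((f.coeff m)^2 + 1) := fun m => (abs_nonneg _).trans (hco m)
  have hS : 0 ≤ ∑ m ∈ Finset.range f.natDegree, i ((f.coeff m)^2 + 1) :=
    Finset.sum_nonneg fun m _ => hnn m
  rw [map_add, map_sum, map_ofNat]
  by_contra hcon
  push Not at hcon
  have h1 : 1 ≤ |t| := by linarith
  have hpos : 0 < |t| := by linarith
  rw [hf.as_sum] at ht
  simp only [Polynomial.eval₂_add, Polynomial.eval₂_pow, Polynomial.eval₂_X,
    Polynomial.eval₂_finsetSum, Polynomial.eval₂_mul, Polynomial.eval₂_C] at ht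
  have h2 : t ^ f.natDegree = - ∑ m ∈ Finset.range f.natDegree, i (f.coeff m) * t ^ m := by
    linarith
  have h3 : |t| ^ f.natDegree ≤
      ∑ m ∈ Finset.range f.natDegree, i ((f.coeff m)^2+1) * |t| ^ (f.natDegree - 1) := by
    rw [← abs_pow, h2, abs_neg]
    refine (Finset.abs_sum_le_sum_abs _ _).trans (Finset.sum_le_sum fun m hm => ?_)
    rw [abs_mul, abs_pow]
    have := Finset.mem_range.mp hm
    exact mul_le_mul (hco m) (pow_le_pow_right₀ h1 (by omega)) (by positivity) (hnn m)
  rw [← Finset.sum_mul] at h3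
  rcases Nat.eq_zero_or_pos f.natDegree with h0 | h0
  · rw [h0] at h3; simp at h3; linarith
  · have h4 : |t| ^ f.natDegree = |t| * |t| ^ (f.natDegree - 1) := by
      rw [← pow_succ']; congr 1; omega
    rw [h4] at h3
    have := le_of_mul_le_mul_right h3 (by positivity)
    linarith

end basic

section ext

/-- two embeddings of a field in ordered fields inducing the same order -/
def Compat {k F G : Type} [Field k] [Field F] [LinearOrder F] [Field G] [LinearOrder G]
    (i : k →+* F) (j : k →+* G) : Prop := ∀ x, 0 < i x ↔ 0 < j x

theorem Compat.of_imp {k F G : Type} [Field k] [Field F] [LinearOrder F] [IsStrictOrderedRing F]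
    [Field G] [LinearOrder G] [IsStrictOrderedRing G]
    {i : k →+* F} {j : k →+* G} (h : ∀ x, 0 < i x → 0 < j x) : Compat i j := by
  intro x
  refine ⟨h x, fun hx => ?_⟩
  by_contra hcon
  rcases (not_lt.mp hcon).eq_or_lt with h0 | h0
  · have : x = 0 := i.injective (by rw [h0, map_zero])
    subst this; simp at hx
  · have := h (-x) (by rw [map_neg]; linarith)
    rw [map_neg] at this; linarith

/-- there is a common extension whose images contain the given sets -/
def HasExt {k F G : Type} [Field k] [Field F] [LinearOrder F] [Field G] [LinearOrder G]
    (i : k →+* F) (j : k →+* G) (s : Set F) (s' : Set G) : Prop :=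
  ∃ (K : Type) (_ : Field K) (e : k →+* K) (i' : K →+* F) (j' : K →+* G),
    i'.comp e = i ∧ j'.comp e = j ∧ Compat i' j' ∧ s ⊆ Set.range i' ∧ s' ⊆ Set.range j'

/-- elements of degree at most `n` can be adjoined -/
def PStep (n : ℕ) : Prop :=
  ∀ (F G k : Type) [Field F] [LinearOrder F] [IsStrictOrderedRing F]
    [Field G] [LinearOrder G] [IsStrictOrderedRing G] [Field k],
    PIVT F → PIVT G → ∀ (i : k →+* F) (j : k →+* G), Compat i j →
    ∀ (f : Polynomial k) (t : F), f ≠ 0 → f.natDegree ≤ n → f.eval₂ i t = 0 →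
    HasExt i j {t} ∅

variable {k F G : Type} [Field F] [LinearOrder F] [IsStrictOrderedRing F]
    [Field G] [LinearOrder G] [IsStrictOrderedRing G] [Field k]

theorem HasExt.symm {i : k →+* F} {j : k →+* G} {s s'} (h : HasExt i j s s') : HasExt j i s' s := by
  obtain ⟨K, _, e, i', j', h1, h2, h3, h4, h5⟩ := h
  exact ⟨K, _, e, j', i', h2, h1, fun x => (h3 x).symm, h5, h4⟩

theorem HasExt.of_trans {K : Type} [Field K] {e : k →+* K} {i : k →+* F} {j : k →+* G}
    {i' : K →+* F} {j' : K →+* G} (h1 : i'.comp e = i) (h2 : j'.comp e = j) {s s'}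
    (h : HasExt i' j' s s') : HasExt i j (Set.range i' ∪ s) (Set.range j' ∪ s') := by
  obtain ⟨L, _, e', i'', j'', g1, g2, g3, g4, g5⟩ := h
  refine ⟨L, _, e'.comp e, i'', j'', by rw [← RingHom.comp_assoc, g1, h1],
    by rw [← RingHom.comp_assoc, g2, h2], g3, Set.union_subset ?_ g4, Set.union_subset ?_ g5⟩
  · rw [← g1]; rintro _ ⟨x, rfl⟩; exact ⟨e' x, rfl⟩
  · rw [← g2]; rintro _ ⟨x, rfl⟩; exact ⟨e' x, rfl⟩

theorem HasExt.mono {i : k →+* F} {j : k →+* G} {s s' t t'} (h : HasExt i j s s')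
    (h1 : t ⊆ s) (h2 : t' ⊆ s') : HasExt i j t t' := by
  obtain ⟨K, _, e, i', j', g1, g2, g3, g4, g5⟩ := h
  exact ⟨K, _, e, i', j', g1, g2, g3, h1.trans g4, h2.trans g5⟩

theorem PStep.finset {n : ℕ} (hP : PStep n) (hF : PIVT F) (hG : PIVT G)
    (i : k →+* F) (j : k →+* G) (hij : Compat i j) (s : Finset F)
    (hs : ∀ t ∈ s, ∃ f : Polynomial k, f ≠ 0 ∧ f.natDegree ≤ n ∧ f.eval₂ i t = 0) :
    HasExt i j s ∅ := by
  classical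
  induction s using Finset.induction_on with
  | empty => exact ⟨k, _, RingHom.id k, i, j, rfl, rfl, hij, by simp, by simp⟩
  | insert a s ha ih =>
    obtain ⟨K, _, e, i', j', h1, h2, h3, h4, h5⟩ := ih fun t ht => hs t (Finset.mem_insert_of_mem ht)
    obtain ⟨f, hf0, hfn, hft⟩ := hs a (Finset.mem_insert_self _ _)
    have := hP F G K hF hG i' j' h3 (f.map e) a
      ((Polynomial.map_ne_zero_iff e.injective).mpr hf0) (by rwa [Polynomial.natDegree_map])
      (by rw [Polynomial.eval₂_map, h1, hft])
    refine (HasExt.of_trans h1 h2 this).mono ?_ (by simp)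
    intro x hx
    rcases Finset.mem_insert.mp hx with rfl | hx
    · right; rfl
    · left; exact h4 hx

theorem PStep.both {n : ℕ} (hP : PStep n) (hF : PIVT F) (hG : PIVT G)
    (i : k →+* F) (j : k →+* G) (hij : Compat i j) (s : Finset F) (s' : Finset G)
    (hs : ∀ t ∈ s, ∃ f : Polynomial k, f ≠ 0 ∧ f.natDegree ≤ n ∧ f.eval₂ i t = 0)
    (hs' : ∀ t ∈ s', ∃ f : Polynomial k, f ≠ 0 ∧ f.natDegree ≤ n ∧ f.eval₂ j t = 0) :
    HasExt i j s s' := by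
  obtain ⟨K, _, e, i', j', h1, h2, h3, h4, h5⟩ := hP.finset hF hG i j hij s hs
  have := (hP.finset hG hF j' i' (fun x => (h3 x).symm) s' (fun t ht => by
    obtain ⟨f, hf0, hfn, hft⟩ := hs' t ht
    exact ⟨f.map e, (Polynomial.map_ne_zero_iff e.injective).mpr hf0,
      by rwa [Polynomial.natDegree_map], by rw [Polynomial.eval₂_map, h2, hft]⟩)).symm
  refine (HasExt.of_trans h1 h2 this).mono ?_ ?_
  · exact h4.trans Set.subset_union_left
  · exact Set.subset_union_right

theorem HasExt.adjoin (i : k →+* F) (j : k →+* G) (f : Polynomial k) (hf : Irreducible f)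
    (t : F) (t' : G) (ht : f.eval₂ i t = 0) (ht' : f.eval₂ j t' = 0)
    (h : ∀ g : Polynomial k, 0 < g.eval₂ i t → 0 < g.eval₂ j t') : HasExt i j {t} ∅ := by
  haveI : Fact (Irreducible f) := ⟨hf⟩
  refine ⟨AdjoinRoot f, inferInstance, AdjoinRoot.of f, AdjoinRoot.lift i t ht,
    AdjoinRoot.lift j t' ht', by ext; simp, by ext; simp, Compat.of_imp ?_, ?_, by simp⟩
  · intro x
    obtain ⟨g, rfl⟩ := AdjoinRoot.mk_surjective x
    simpa using h g
  · rintro _ rfl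
    exact ⟨AdjoinRoot.root f, by simp⟩

theorem sep_of_irreducible [CharZero k] (i : k →+* F) (f : Polynomial k) (hf : Irreducible f) :
    ∀ c, (f.map i).eval c = 0 → (f.map i).derivative.eval c ≠ 0 := by
  intro c h1 h2
  have hsep : (f.map i).Separable := hf.separable.map
  obtain ⟨u, v, huv⟩ := hsep
  have := congrArg (Polynomial.eval c) huv
  rw [Polynomial.eval_add, Polynomial.eval_mul, Polynomial.eval_mul, h1, h2] at this
  simp at this

theorem pstep (n : ℕ) : PStep n := by
  classical
  induction n with
  | zero =>
    intro F G k _ _ _ _ _ _ _ hF hG i j hij f t hf hn ht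
    rw [Polynomial.eq_C_of_natDegree_le_zero hn] at ht hf
    simp at ht
    simp [ht] at hf
  | succ n ih =>
    intro F G k _ _ _ _ _ _ _ hF hG i j hij f₀ t hf₀ hn₀ ht₀
    haveI : CharZero k := ⟨fun a b h => by simpa using congrArg i h⟩
    -- pass to an irreducible factor
    obtain ⟨f, hf, hfn, ht⟩ : ∃ f : Polynomial k, Irreducible f ∧ f.natDegree ≤ n + 1 ∧
        f.eval₂ i t = 0 := by
      letI : Algebra k F := i.toAlgebra
      have hint : IsIntegral k t := isAlgebraic_iff_isIntegral.mp ⟨f₀, hf₀, ht₀⟩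
      exact ⟨minpoly k t, minpoly.irreducible hint,
        (Polynomial.natDegree_le_of_dvd (minpoly.dvd k t ht₀) hf₀).trans hn₀, minpoly.aeval k t⟩
    clear hf₀ hn₀ ht₀ f₀
    by_cases hlow : f.natDegree ≤ n
    · exact ih F G k hF hG i j hij f t hf.ne_zero hlow ht
    have hdeg : f.natDegree = n + 1 := by omega
    by_contra hcon
    -- witnesses
    have hw : ∀ t' : G, f.eval₂ j t' = 0 → ∃ h : Polynomial k, h ≠ 0 ∧ h.natDegree ≤ n ∧
        0 < h.eval₂ i t ∧ ¬ 0 < h.eval₂ j t' := by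
      intro t' ht'
      by_contra hno
      push Not at hno
      refine hcon (HasExt.adjoin i j f hf t t' ht ht' fun g hg => ?_)
      have e1 : (g % f).eval₂ i t = g.eval₂ i t := by
        conv_rhs => rw [← EuclideanDomain.mod_add_div g f]
        simp [Polynomial.eval₂_mul, ht]
      have e2 : (g % f).eval₂ j t' = g.eval₂ j t' := by
        conv_rhs => rw [← EuclideanDomain.mod_add_div g f]
        simp [Polynomial.eval₂_mul, ht']
      rw [← e2]
      apply hno
      · intro h0; rw [← e1, h0] at hg; simp at hg
      · have := Polynomial.natDegree_mod_lt g (q := f) (by omega)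
        omega
      · rwa [e1]
    choose! h hh0 hhn hhpos hhneg using hw
    have hjf : f.map j ≠ 0 := (Polynomial.map_ne_zero_iff j.injective).mpr hf.ne_zero
    have hif : f.map i ≠ 0 := (Polynomial.map_ne_zero_iff i.injective).mpr hf.ne_zero
    let S : Finset (Polynomial k) := insert f.derivative ((f.map j).roots.toFinset.image h)
    have hS : ∀ g ∈ S, g ≠ 0 ∧ g.natDegree ≤ n := by
      intro g hg
      rcases Finset.mem_insert.mp hg with rfl | hg
      · refine ⟨fun h0 => ?_, ?_⟩
        · have := Polynomial.derivative_eq_zero.mp h0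
          omega
        · have := Polynomial.natDegree_derivative_lt (p := f) (by omega)
          omega
      · obtain ⟨t', ht', rfl⟩ := Finset.mem_image.mp hg
        have : f.eval₂ j t' = 0 := by
          simpa [hjf, Polynomial.eval_map] using ht'
        exact ⟨hh0 t' this, hhn t' this⟩
    let s : Finset F := S.biUnion fun g => (g.map i).roots.toFinset
    let s' : Finset G := S.biUnion fun g => (g.map j).roots.toFinset
    have hs : ∀ x, x ∈ s ↔ ∃ g ∈ S, g.eval₂ i x = 0 := by
      intro x
      simp only [s, Finset.mem_biUnion, Multiset.mem_toFinset]
      refine exists_congr fun g => and_congr_right fun hg => ?_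
      rw [Polynomial.mem_roots ((Polynomial.map_ne_zero_iff i.injective).mpr (hS g hg).1),
        Polynomial.IsRoot, Polynomial.eval_map]
    have hs' : ∀ x, x ∈ s' ↔ ∃ g ∈ S, g.eval₂ j x = 0 := by
      intro x
      simp only [s', Finset.mem_biUnion, Multiset.mem_toFinset]
      refine exists_congr fun g => and_congr_right fun hg => ?_
      rw [Polynomial.mem_roots ((Polynomial.map_ne_zero_iff j.injective).mpr (hS g hg).1),
        Polynomial.IsRoot, Polynomial.eval_map]
    obtain ⟨K, _, e, i', j', h1, h2, h3, h4, h5⟩ := PStep.both ih hF hG i j hij s s'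
      (fun x hx => by
        obtain ⟨g, hg, hg'⟩ := (hs x).mp hx
        exact ⟨g, (hS g hg).1, (hS g hg).2, hg'⟩)
      (fun x hx => by
        obtain ⟨g, hg, hg'⟩ := (hs' x).mp hx
        exact ⟨g, (hS g hg).1, (hS g hg).2, hg'⟩)
    have evi : ∀ (g : Polynomial k) (x : K), g.eval₂ i (i' x) = i' (g.eval₂ e x) := by
      intro g x
      rw [Polynomial.hom_eval₂, h1]
    have evj : ∀ (g : Polynomial k) (x : K), g.eval₂ j (j' x) = j' (g.eval₂ e x) := by
      intro g x
      rw [Polynomial.hom_eval₂, h2]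
    -- t is not in the range
    have htr : t ∉ Set.range i' := fun ht' =>
      hcon ⟨K, _, e, i', j', h1, h2, h3, by simpa using ht', by simp⟩
    -- f has no root in K
    have hfK : ∀ x : K, f.eval₂ e x ≠ 0 := by
      intro x hx
      have hroot : (f.map e).IsRoot x := by rwa [Polynomial.IsRoot, Polynomial.eval_map]
      obtain ⟨g, hg⟩ := Polynomial.dvd_iff_isRoot.mpr hroot
      have hfe : f.map e ≠ 0 := (Polynomial.map_ne_zero_iff e.injective).mpr hf.ne_zero
      have hg0 : g ≠ 0 := by rintro rfl; simp at hg; exact hf.ne_zero hg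
      have hgd : g.natDegree ≤ n := by
        have := congrArg Polynomial.natDegree hg
        rw [Polynomial.natDegree_map, Polynomial.natDegree_mul (Polynomial.X_sub_C_ne_zero x) hg0,
          Polynomial.natDegree_X_sub_C] at this
        omega
      have hgt : g.eval₂ i' t = 0 := by
        have h6 : (f.map e).eval₂ i' t = 0 := by rw [Polynomial.eval₂_map, h1, ht]
        rw [hg, Polynomial.eval₂_mul] at h6
        refine (mul_eq_zero.mp h6).resolve_left ?_
        simp only [Polynomial.eval₂_sub, Polynomial.eval₂_X, Polynomial.eval₂_C]
        exact sub_ne_zero.mpr fun h7 => htr ⟨x, h7.symm⟩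
      exact hcon ((HasExt.of_trans h1 h2
        (ih F G K hF hG i' j' h3 g t hg0 hgd hgt)).mono (by simp) (by simp))
    -- bounds
    obtain ⟨B, hB⟩ : ∃ B : K, |t| < i' B := by
      obtain ⟨c, hc⟩ := root_bound i (f * Polynomial.C f.leadingCoeff⁻¹)
        (Polynomial.monic_mul_leadingCoeff_inv hf.ne_zero) t (by simp [Polynomial.eval₂_mul, ht])
      exact ⟨e c, by rw [← RingHom.comp_apply, h1]; exact hc⟩
    rw [abs_lt] at hB
    let lo := (insert (i' (-B)) s).filter (· < t)
    let hi := (insert (i' B) s).filter (t < ·)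
    have hlo : lo.Nonempty := ⟨i' (-B), by simp [lo]; linarith⟩
    have hhi : hi.Nonempty := ⟨i' B, by simp [hi]; linarith⟩
    have hlom := lo.max'_mem hlo
    have hhim := hi.min'_mem hhi
    obtain ⟨cl, hcl⟩ : lo.max' hlo ∈ Set.range i' := by
      rcases Finset.mem_insert.mp (Finset.mem_filter.mp hlom).1 with h6 | h6
      · rw [h6]; exact ⟨_, rfl⟩
      · exact h4 h6
    obtain ⟨cr, hcr⟩ : hi.min' hhi ∈ Set.range i' := by
      rcases Finset.mem_insert.mp (Finset.mem_filter.mp hhim).1 with h6 | h6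
      · rw [h6]; exact ⟨_, rfl⟩
      · exact h4 h6
    have hclt : i' cl < t := by rw [hcl]; exact (Finset.mem_filter.mp hlom).2
    have hcrt : t < i' cr := by rw [hcr]; exact (Finset.mem_filter.mp hhim).2
    have hgap : ∀ x ∈ s, i' cl < x → x < i' cr → False := by
      intro x hx h6 h7
      rcases lt_trichotomy x t with h8 | h8 | h8
      · have : x ≤ lo.max' hlo := lo.le_max' x (by simp [lo, hx, h8])
        rw [← hcl] at this; exact absurd h6 (not_lt.mpr this)
      · exact htr (h8 ▸ h4 hx)
      · have : hi.min' hhi ≤ x := hi.min'_le x (by simp [hi, hx, h8])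
        rw [← hcr] at this; exact absurd h7 (not_lt.mpr this)
    -- sign change in F
    have hsc : (f.map i).eval (i' cl) * (f.map i).eval (i' cr) < 0 := by
      apply hF.sign_change (f.map i) hif (sep_of_irreducible i f hf) hclt hcrt
      · rwa [Polynomial.eval_map]
      · rw [Polynomial.eval_map, evi]; exact (map_ne_zero i').mpr (hfK _)
      · rw [Polynomial.eval_map, evi]; exact (map_ne_zero i').mpr (hfK _)
      · intro c hc1 hc2 hc3
        refine hgap c ((hs c).mpr ⟨f.derivative, Finset.mem_insert_self _ _, ?_⟩) hc1 hc2
        rwa [Polynomial.derivative_map, Polynomial.eval_map] at hc3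
    have hsc' : (f.map j).eval (j' cl) * (f.map j).eval (j' cr) < 0 := by
      rw [Polynomial.eval_map, Polynomial.eval_map, evi, evi, ← map_mul] at hsc
      rw [Polynomial.eval_map, Polynomial.eval_map, evj, evj, ← map_mul, ← neg_pos, ← map_neg, ← h3,
        map_neg, neg_pos]
      exact hsc
    have hlt' : ∀ a b : K, i' a < i' b ↔ j' a < j' b := by
      intro a b
      rw [← sub_pos, ← map_sub, h3, map_sub, sub_pos]
    have hlr : j' cl < j' cr := (hlt' _ _).mp (hclt.trans hcrt)
    obtain ⟨t', ht1, ht2, ht3⟩ := hG _ _ _ hlr hsc'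
    have ht'0 : f.eval₂ j t' = 0 := by rwa [Polynomial.eval_map] at ht3
    have hmem : h t' ∈ S := Finset.mem_insert_of_mem (Finset.mem_image_of_mem _ (by
      rw [Multiset.mem_toFinset, Polynomial.mem_roots hjf]; exact ht3))
    apply hhneg t' ht'0
    have hp := hhpos t' ht'0
    set m : K := (cl + cr) / 2 with hm
    have hmi : i' m = (i' cl + i' cr) / 2 := by rw [hm, map_div₀, map_add, map_ofNat]
    have hmj : j' m = (j' cl + j' cr) / 2 := by rw [hm, map_div₀, map_add, map_ofNat]
    have hmp : 0 < ((h t').map i).eval (i' m) := by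
      refine hF.pos_of_pos ((h t').map i) (a := t) ?_ (by rwa [Polynomial.eval_map])
      intro c hc1 hc2 hc3
      refine hgap c ((hs c).mpr ⟨h t', hmem, by rwa [Polynomial.eval_map] at hc3⟩) ?_ ?_
      · refine lt_of_lt_of_le (lt_min hclt ?_) hc1
        rw [hmi]; linarith
      · refine lt_of_le_of_lt hc2 (max_lt hcrt ?_)
        rw [hmi]; linarith
    have hmq : 0 < ((h t').map j).eval (j' m) := by
      rw [Polynomial.eval_map, evi] at hmp
      rw [Polynomial.eval_map, evj]
      exact (h3 _).mp hmp
    rw [← Polynomial.eval_map]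
    refine hG.pos_of_pos ((h t').map j) (a := j' m) ?_ hmq
    intro c hc1 hc2 hc3
    have hcs : c ∈ s' := (hs' c).mpr ⟨h t', hmem, by rwa [Polynomial.eval_map] at hc3⟩
    obtain ⟨x, rfl⟩ := h5 hcs
    have hx0 : (h t').eval₂ e x = 0 := by
      rw [Polynomial.eval_map, evj] at hc3
      exact (map_eq_zero j').mp hc3
    refine hgap (i' x) ((hs _).mpr ⟨h t', hmem, by rw [evi, hx0, map_zero]⟩) ?_ ?_
    · rw [hlt']
      refine lt_of_lt_of_le (lt_min ?_ ht1) hc1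
      rw [hmj]; linarith
    · rw [hlt']
      refine lt_of_le_of_lt hc2 (max_lt ?_ ht2)
      rw [hmj]; linarith

/-- algebraic extensions embed -/
theorem exists_hom (hF : PIVT F) (hG : PIVT G) (i : k →+* F) (j : k →+* G) (hij : Compat i j)
    (halg : ∀ t : F, ∃ f : Polynomial k, f ≠ 0 ∧ f.eval₂ i t = 0) :
    ∃ g : F →+* G, g.comp i = j := by
  letI : Algebra k F := i.toAlgebra
  letI : Algebra k G := j.toAlgebra
  haveI : Algebra.IsAlgebraic k F := ⟨fun t => by
    obtain ⟨f, h1, h2⟩ := halg t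
    exact ⟨f, h1, h2⟩⟩
  obtain ⟨g⟩ := Field.nonempty_algHom_of_exists_root (F := k) (E := F) (K := G) (fun t => by
    obtain ⟨f, h1, h2⟩ := halg t
    obtain ⟨K, _, e, i', j', g1, g2, g3, g4, g5⟩ :=
      pstep _ F G k hF hG i j hij f t h1 le_rfl h2
    obtain ⟨x, hx⟩ := g4 (Set.mem_singleton t)
    refine ⟨j' x, ?_⟩
    have h6 : (minpoly k t).eval₂ i t = 0 := minpoly.aeval k t
    change (minpoly k t).eval₂ j (j' x) = 0
    rw [← hx, ← g1, ← Polynomial.hom_eval₂, map_eq_zero] at h6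
    rw [← g2, ← Polynomial.hom_eval₂, hx] at *
    rw [h6, map_zero])
  exact ⟨g.toRingHom, g.comp_algebraMap⟩

/-- roots of polynomials over a PIVT field are already there -/
theorem root_mem_range {k : Type} [Field k] [LinearOrder k] [IsStrictOrderedRing k]
    (hk : PIVT k) (hF : PIVT F) (i : k →+* F) (hij : Compat i (RingHom.id k))
    (f : Polynomial k) (hf : f ≠ 0) (t : F) (ht : f.eval₂ i t = 0) : t ∈ Set.range i := by
  obtain ⟨K, _, e, i', j', g1, g2, g3, g4, g5⟩ :=
      pstep _ F k k hF hk i (RingHom.id k) hij f t hf le_rfl ht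
  obtain ⟨x, hx⟩ := g4 (Set.mem_singleton t)
  refine ⟨j' x, ?_⟩
  have : e (j' x) = x := j'.injective (by rw [← RingHom.comp_apply, g2]; rfl)
  rw [← hx, ← g1, RingHom.comp_apply, this]

end ext

section ultra

theorem PIVT.exists_sqrt {k : Type} [Field k] [LinearOrder k] [IsStrictOrderedRing k]
    (hk : PIVT k) {x : k} (hx : 0 < x) : ∃ y, y * y = x := by
  obtain ⟨c, _, _, hc⟩ := hk (Polynomial.X ^ 2 - Polynomial.C x) 0 (x + 1) (by linarith) (by
    simp only [Polynomial.eval_sub, Polynomial.eval_pow, Polynomial.eval_X, Polynomial.eval_C]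
    have : 0 < (x + 1) ^ 2 - x := by nlinarith
    nlinarith [mul_pos hx this])
  refine ⟨c, ?_⟩
  simp only [Polynomial.eval_sub, Polynomial.eval_pow, Polynomial.eval_X, Polynomial.eval_C] at hc
  linarith

theorem PIVT.compat {k F G : Type} [Field k] [LinearOrder k] [IsStrictOrderedRing k]
    [Field F] [LinearOrder F] [IsStrictOrderedRing F]
    [Field G] [LinearOrder G] [IsStrictOrderedRing G]
    (hk : PIVT k) (i : k →+* F) (j : k →+* G) : Compat i j := by
  apply Compat.of_imp
  intro x hx
  rcases lt_trichotomy 0 x with h | h | h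
  · obtain ⟨y, rfl⟩ := hk.exists_sqrt h
    rw [map_mul]
    exact mul_self_pos.mpr ((map_ne_zero j).mpr (by rintro rfl; simp at h))
  · subst h; simp at hx
  · obtain ⟨y, hy⟩ := hk.exists_sqrt (neg_pos.mpr h)
    have : i x = - (i y * i y) := by rw [← map_mul, hy, map_neg, neg_neg]
    nlinarith [mul_self_nonneg (i y)]

variable {k : Type} [Field k] [LinearOrder k] [IsStrictOrderedRing k] {ι : Type}
  (U : Ultrafilter ι)

theorem germ_poly (p : Polynomial (Filter.Germ (U : Filter ι) k)) :
    ∃ P : ι → Polynomial k, ∀ t : ι → k,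
      p.eval (t : Filter.Germ (U : Filter ι) k) =
        ((fun s => (P s).eval (t s) : ι → k) : Filter.Germ (U : Filter ι) k) := by
  induction p using Polynomial.induction_on' with
  | add p q hp hq =>
    obtain ⟨P, hP⟩ := hp
    obtain ⟨Q, hQ⟩ := hq
    refine ⟨fun s => P s + Q s, fun t => ?_⟩
    rw [Polynomial.eval_add, hP, hQ, ← Filter.Germ.coe_add]
    congr 1; ext s; simp
  | monomial n a =>
    induction a using Filter.Germ.inductionOn with
    | h a =>
      refine ⟨fun s => Polynomial.monomial n (a s), fun t => ?_⟩
      rw [Polynomial.eval_monomial, ← Filter.Germ.coe_pow, ← Filter.Germ.coe_mul]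
      congr 1; ext s; simp

theorem germ_pivt (hk : PIVT k) : PIVT (Filter.Germ (U : Filter ι) k) := by
  classical
  intro p a b hab hp
  obtain ⟨P, hP⟩ := germ_poly U p
  induction a using Filter.Germ.inductionOn with
  | h a =>
  induction b using Filter.Germ.inductionOn with
  | h b =>
  rw [hP, hP, ← Filter.Germ.coe_mul] at hp
  have h1 := Filter.Germ.coe_lt.mp hab
  have h2 : ∀ᶠ s in (U : Filter ι), (P s).eval (a s) * (P s).eval (b s) < 0 :=
    Filter.Germ.coe_lt.mp hp
  have h3 : ∀ᶠ s in (U : Filter ι), ∃ c, a s < c ∧ c < b s ∧ (P s).eval c = 0 := by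
    filter_upwards [h1, h2] with s h1 h2
    exact hk _ _ _ h1 h2
  obtain ⟨c, hc⟩ := h3.choice
  refine ⟨(c : Filter.Germ (U : Filter ι) k), ?_, ?_, ?_⟩
  · exact Filter.Germ.coe_lt.mpr (hc.mono fun s h => h.1)
  · exact Filter.Germ.coe_lt.mpr (hc.mono fun s h => h.2.1)
  · rw [hP]
    exact Filter.Germ.coe_eq.mpr (hc.mono fun s h => h.2.2)

/-- the diagonal -/
noncomputable def diag : k →+* Filter.Germ (U : Filter ι) k where
  toFun x := ((fun _ => x : ι → k) : Filter.Germ (U : Filter ι) k)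
  map_one' := rfl
  map_mul' _ _ := rfl
  map_zero' := rfl
  map_add' _ _ := rfl

theorem germ_mvpoly {d : ℕ} (f : MvPolynomial (Fin d) k) (β : Fin d → ι → k) :
    f.eval₂ (diag U) (fun m => (β m : Filter.Germ (U : Filter ι) k)) =
      ((fun s => f.eval (fun m => β m s) : ι → k) : Filter.Germ (U : Filter ι) k) := by
  induction f using MvPolynomial.induction_on with
  | C a =>
    rw [MvPolynomial.eval₂_C]; simp only [MvPolynomial.eval_C]; rfl
  | add p q hp hq =>
    rw [MvPolynomial.eval₂_add, hp, hq, ← Filter.Germ.coe_add]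
    congr 1; ext s; simp
  | mul_X p n hp =>
    rw [MvPolynomial.eval₂_mul, hp, MvPolynomial.eval₂_X, ← Filter.Germ.coe_mul]
    congr 1; ext s; simp

theorem germ_poly_const (f : Polynomial k) (β : ι → k) :
    f.eval₂ (diag U) (β : Filter.Germ (U : Filter ι) k) =
      ((fun s => f.eval (β s) : ι → k) : Filter.Germ (U : Filter ι) k) := by
  induction f using Polynomial.induction_on' with
  | add p q hp hq =>
    rw [Polynomial.eval₂_add, hp, hq, ← Filter.Germ.coe_add]
    congr 1; ext s; simp
  | monomial n a =>
    rw [Polynomial.eval₂_monomial, ← Filter.Germ.coe_pow]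
    change ((fun _ => a : ι → k) : Filter.Germ (U : Filter ι) k) * _ = _
    rw [← Filter.Germ.coe_mul]
    congr 1; ext s; simp

end ultra

section transfer
variable {k F : Type} [Field k] [LinearOrder k] [IsStrictOrderedRing k]
  [Field F] [LinearOrder F] [IsStrictOrderedRing F]

/-- the type of an element not in `k` is finitely satisfiable in `k` -/
theorem approx (hk : PIVT k) (hF : PIVT F) (i : k →+* F) (x : F) (hx : x ∉ Set.range i)
    (S : Finset (Polynomial k)) : ∃ y : k, ∀ p ∈ S, 0 < p.eval₂ i x → 0 < p.eval y := by
  classical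
  have hc : Compat i (RingHom.id k) := hk.compat _ _
  have hlt : ∀ a b : k, a < b → i a < i b := fun a b hab => by
    rw [← sub_pos, ← map_sub]; exact (hc _).mpr (sub_pos.mpr hab)
  let s : Finset F := S.biUnion fun g => (g.map i).roots.toFinset
  have hsr : ∀ c ∈ s, c ∈ Set.range i := by
    intro c hcs
    obtain ⟨g, hg, hgc⟩ := Finset.mem_biUnion.mp hcs
    have hg0 : g.map i ≠ 0 := by
      intro h0; rw [h0] at hgc; simp at hgc
    refine root_mem_range hk hF i hc g (fun h => hg0 (by simp [h])) c ?_
    rw [← Polynomial.eval_map]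
    exact (Polynomial.mem_roots hg0).mp (Multiset.mem_toFinset.mp hgc)
  suffices h : ∃ y : k, ∀ c ∈ s, min x (i y) ≤ c → c ≤ max x (i y) → False by
    obtain ⟨y, hy⟩ := h
    refine ⟨y, fun p hp hpx => ?_⟩
    have hp0 : p.map i ≠ 0 := by
      intro h0; rw [← Polynomial.eval_map, h0] at hpx; simp at hpx
    have : 0 < (p.map i).eval (i y) := by
      refine hF.pos_of_pos (p.map i) (a := x) ?_ (by rwa [Polynomial.eval_map])
      intro c h1 h2 h3
      refine hy c (Finset.mem_biUnion.mpr ⟨p, hp, ?_⟩) h1 h2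
      rw [Multiset.mem_toFinset, Polynomial.mem_roots hp0]; exact h3
    rw [Polynomial.eval_map, Polynomial.eval₂_at_apply] at this
    exact (hc _).mp this
  let lo := s.filter (· < x)
  let hi := s.filter (x < ·)
  have hne : ∀ c ∈ s, c < x ∨ x < c := fun c hcs =>
    lt_or_gt_of_ne (by rintro rfl; exact hx (hsr _ hcs))
  have h1 : ∃ l : k, (lo.Nonempty → i l < x) ∧ ∀ c ∈ lo, c ≤ i l := by
    by_cases h : lo.Nonempty
    · have hm := lo.max'_mem h
      obtain ⟨l, hl⟩ := hsr _ (Finset.mem_filter.mp hm).1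
      refine ⟨l, fun _ => by rw [hl]; exact (Finset.mem_filter.mp hm).2, fun c hc => ?_⟩
      rw [hl]; exact lo.le_max' c hc
    · exact ⟨0, fun h' => absurd h' h, fun c hc => absurd ⟨c, hc⟩ h⟩
  have h2 : ∃ l : k, (hi.Nonempty → x < i l) ∧ ∀ c ∈ hi, i l ≤ c := by
    by_cases h : hi.Nonempty
    · have hm := hi.min'_mem h
      obtain ⟨l, hl⟩ := hsr _ (Finset.mem_filter.mp hm).1
      refine ⟨l, fun _ => by rw [hl]; exact (Finset.mem_filter.mp hm).2, fun c hc => ?_⟩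
      rw [hl]; exact hi.min'_le c hc
    · exact ⟨0, fun h' => absurd h' h, fun c hc => absurd ⟨c, hc⟩ h⟩
  obtain ⟨l, hl1, hl2⟩ := h1
  obtain ⟨r, hr1, hr2⟩ := h2
  have key : ∀ y : k, (lo.Nonempty → i l < i y) → (hi.Nonempty → i y < i r) →
      ∀ c ∈ s, min x (i y) ≤ c → c ≤ max x (i y) → False := by
    intro y hy1 hy2 c hcs h3 h4
    rcases hne c hcs with h5 | h5
    · have hcl : c ∈ lo := Finset.mem_filter.mpr ⟨hcs, h5⟩
      have := hl2 c hcl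
      have := hy1 ⟨c, hcl⟩
      rcases min_le_iff.mp h3 with h6 | h6 <;> linarith
    · have hcl : c ∈ hi := Finset.mem_filter.mpr ⟨hcs, h5⟩
      have := hr2 c hcl
      have := hy2 ⟨c, hcl⟩
      rcases le_max_iff.mp h4 with h6 | h6 <;> linarith
  by_cases hA : lo.Nonempty <;> by_cases hB : hi.Nonempty
  · have hlr : l < r := by
      by_contra hcon
      rcases (not_lt.mp hcon).eq_or_lt with h | h
      · subst h; linarith [hl1 hA, hr1 hB]
      · linarith [hlt _ _ h, hl1 hA, hr1 hB]
    exact ⟨(l + r) / 2, key _ (fun _ => hlt _ _ (by linarith)) (fun _ => hlt _ _ (by linarith))⟩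
  · exact ⟨l + 1, key _ (fun _ => hlt _ _ (by linarith)) (fun h => absurd h hB)⟩
  · exact ⟨r - 1, key _ (fun h => absurd h hA) (fun _ => hlt _ _ (by linarith))⟩
  · exact ⟨0, key _ (fun h => absurd h hA) (fun h => absurd h hB)⟩

/-- transfer of solvability of systems -/
def Transfer {k F : Type} [Field k] [Field F] (i : k →+* F) (d : ℕ) (b : Fin d → F) : Prop :=
  ∀ (S : Finset (MvPolynomial (Fin d) k)) (s : MvPolynomial (Fin d) k),
    (∀ f ∈ S, f.eval₂ i b = 0) → s.eval₂ i b ≠ 0 →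
    ∃ a : Fin d → k, (∀ f ∈ S, f.eval a = 0) ∧ s.eval a ≠ 0

/-- the field `k(x)` with its two embeddings -/
theorem transfer_step (hk : PIVT k) (hF : PIVT F) (i : k →+* F) (x : F) (hx : x ∉ Set.range i) :
    ∃ (L : Subfield F), PIVT L ∧ x ∈ L ∧ ∃ (i₁ : k →+* L), L.subtype.comp i₁ = i ∧
      ∀ d (b : Fin d → L), Transfer i₁ d b := by
  classical
  have hc : Compat i (RingHom.id k) := hk.compat _ _
  choose y hy using approx hk hF i x hx
  let U : Ultrafilter (Finset (Polynomial k)) := Ultrafilter.of Filter.atTop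
  have hU : ∀ p : Polynomial k, ∀ᶠ S in (U : Filter (Finset (Polynomial k))), p ∈ S := by
    intro p
    refine Ultrafilter.of_le Filter.atTop ?_
    filter_upwards [Filter.eventually_ge_atTop {p}] with S hS
    exact hS (Finset.mem_singleton_self p)
  let G := Filter.Germ (U : Filter (Finset (Polynomial k))) k
  have hG : PIVT G := germ_pivt U hk
  let ξ : G := (y : Filter.Germ (U : Filter (Finset (Polynomial k))) k)
  have hpos : ∀ p : Polynomial k, 0 < p.eval₂ i x → 0 < p.eval₂ (diag U) ξ := by
    intro p hp
    rw [germ_poly_const]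
    exact Filter.Germ.coe_pos.mpr ((hU p).mono fun S hS => hy S p hS hp)
  let φ : Polynomial k →+* F := Polynomial.eval₂RingHom i x
  let ψ : Polynomial k →+* G := Polynomial.eval₂RingHom (diag U) ξ
  have hφ : Function.Injective φ := by
    rw [injective_iff_map_eq_zero]
    intro p hp
    by_contra h0
    exact hx (root_mem_range hk hF i hc p h0 x hp)
  have hψ : Function.Injective ψ := by
    rw [injective_iff_map_eq_zero]
    intro p hp
    by_contra h0
    have h1 : φ p ≠ 0 := (map_ne_zero_iff φ hφ).mpr h0
    rcases lt_or_gt_of_ne h1 with h2 | h2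
    · have := hpos (-p) (by rw [Polynomial.eval₂_neg]; exact neg_pos.mpr h2)
      rw [Polynomial.eval₂_neg] at this
      change 0 < - ψ p at this
      rw [hp] at this; simp at this
    · have := hpos p h2
      change 0 < ψ p at this
      rw [hp] at this; simp at this
  let K := FractionRing (Polynomial k)
  let I : K →+* F := IsFractionRing.lift hφ
  let J : K →+* G := IsFractionRing.lift hψ
  have hI : ∀ p : Polynomial k, I (algebraMap _ K p) = p.eval₂ i x := fun p =>
    IsFractionRing.lift_algebraMap hφ p
  have hJ : ∀ p : Polynomial k, J (algebraMap _ K p) = p.eval₂ (diag U) ξ := fun p =>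
    IsFractionRing.lift_algebraMap hψ p
  have hIJ : ∀ z, 0 < I z → 0 < J z := by
    intro z hz
    obtain ⟨p, q, hq, rfl⟩ := IsFractionRing.div_surjective (A := Polynomial k) z
    have hq0 : algebraMap (Polynomial k) K q ≠ 0 := by
      simpa using nonZeroDivisors.ne_zero hq
    have e : algebraMap (Polynomial k) K p / algebraMap _ K q =
        algebraMap _ K (p * q) / (algebraMap _ K q * algebraMap _ K q) := by
      rw [map_mul, mul_div_mul_right _ _ hq0]
    rw [e, map_div₀, hI, map_mul] at hz
    have h1 : 0 < (p * q).eval₂ i x := by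
      have hI0 : I (algebraMap _ K q) ≠ 0 := (map_ne_zero I).mpr hq0
      exact (div_pos_iff_of_pos_right (mul_self_pos.mpr hI0)).mp hz
    rw [e, map_div₀, hJ, map_mul]
    exact div_pos (hpos _ h1) (mul_self_pos.mpr ((map_ne_zero J).mpr hq0))
  letI : Algebra K F := I.toAlgebra
  let L := algebraicClosure K F
  have hLp : PIVT L.toSubfield := by
    intro p a b hab hp
    obtain ⟨c, h1, h2, h3⟩ := hF (p.map L.toSubfield.subtype) a b hab (by
      change Polynomial.eval (L.toSubfield.subtype a) _ * Polynomial.eval (L.toSubfield.subtype b) _ < 0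
      rw [Polynomial.eval_map_apply, Polynomial.eval_map_apply, ← map_mul]
      exact hp)
    have hcL : c ∈ L := by
      have : IsAlgebraic L c := by
        refine ⟨p, ?_, ?_⟩
        · rintro rfl; simp at hp
        · rw [Polynomial.eval_map] at h3; exact h3
      exact mem_algebraicClosure_iff.mpr (this.restrictScalars K)
    refine ⟨⟨c, hcL⟩, h1, h2, ?_⟩
    apply L.toSubfield.subtype.injective
    rw [← Polynomial.eval_map_apply, map_zero]; exact h3
  refine ⟨L.toSubfield, hLp, ?_, ?_⟩
  · have : x = algebraMap K F (algebraMap (Polynomial k) K Polynomial.X) := by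
      change x = I _
      rw [hI]; simp
    rw [this]
    exact L.algebraMap_mem _
  · have hmem : ∀ z : K, I z ∈ L.toSubfield := fun z => L.algebraMap_mem z
    let I₁ : K →+* L.toSubfield := I.codRestrict L.toSubfield hmem
    let kK : k →+* K := (algebraMap (Polynomial k) K).comp Polynomial.C
    have hIk : I.comp kK = i := by
      ext c; simp [kK, hI]
    refine ⟨I₁.comp kK, ?_, ?_⟩
    · rw [← hIk]; rfl
    · obtain ⟨g, hg⟩ := exists_hom hLp hG I₁ J (Compat.of_imp fun z hz => hIJ z hz) (by
        intro t
        obtain ⟨f, hf, hft⟩ := mem_algebraicClosure_iff.mp t.2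
        refine ⟨f, hf, ?_⟩
        apply L.toSubfield.subtype.injective
        rw [Polynomial.hom_eval₂, map_zero]
        exact hft)
      intro d b S s hS hs
      have hgk : g.comp (I₁.comp kK) = diag U := by
        rw [← RingHom.comp_assoc, hg]
        ext c
        simp only [RingHom.comp_apply, kK, hJ, Polynomial.eval₂_C]
      have hev : ∀ f : MvPolynomial (Fin d) k,
          g (f.eval₂ (I₁.comp kK) b) = f.eval₂ (diag U) (fun m => g (b m)) := by
        intro f
        rw [MvPolynomial.hom_eval₂, hgk]
        try rfl
      have hrep : ∀ z : G, ∃ β : Finset (Polynomial k) → k,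
          (β : Filter.Germ (U : Filter (Finset (Polynomial k))) k) = z := fun z =>
        Quotient.exists_rep z
      choose β hβ using fun m => hrep (g (b m))
      have hev' : ∀ f : MvPolynomial (Fin d) k, g (f.eval₂ (I₁.comp kK) b) =
        ((fun s => f.eval (fun m => β m s) : Finset (Polynomial k) → k) :
          Filter.Germ (U : Filter (Finset (Polynomial k))) k) := by
        intro f
        rw [hev, ← germ_mvpoly]
        congr 1; ext m; exact (hβ m).symm
      have h1 : ∀ᶠ w in (U : Filter (Finset (Polynomial k))), ∀ f ∈ S,
          f.eval (fun m => β m w) = 0 := by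
        rw [Filter.eventually_all_finset]
        intro f hf
        have := hev' f
        rw [hS f hf, map_zero] at this
        exact Filter.Germ.coe_eq.mp this.symm
      have h2 : ∀ᶠ w in (U : Filter (Finset (Polynomial k))), s.eval (fun m => β m w) ≠ 0 := by
        refine Ultrafilter.eventually_not.mpr fun h3 => ?_
        apply hs
        apply g.injective
        rw [hev', map_zero]
        exact Filter.Germ.coe_eq.mpr h3
      obtain ⟨w, hw1, hw2⟩ := (h1.and h2).exists
      exact ⟨fun m => β m w, hw1, hw2⟩

theorem transfer_main (r : ℕ) : ∀ (k F : Type) [Field k] [LinearOrder k] [IsStrictOrderedRing k]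
    [Field F] [LinearOrder F] [IsStrictOrderedRing F], PIVT k → PIVT F →
    ∀ (i : k →+* F) (T : Fin r → F) (d : ℕ) (b : Fin d → F),
    (∀ m, b m ∈ Subfield.closure (Set.range i ∪ Set.range T)) → Transfer i d b := by
  induction r with
  | zero =>
    intro k F _ _ _ _ _ _ hk hF i T d b hb
    have : ∀ m, ∃ c, i c = b m := by
      intro m
      have h1 : Subfield.closure (Set.range i ∪ Set.range T) ≤ i.fieldRange := by
        rw [Subfield.closure_le]
        rintro z (hz | ⟨m, _⟩)
        · exact hz
        · exact m.elim0
      exact h1 (hb m)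
    choose a ha using this
    obtain rfl : b = i ∘ a := by ext m; exact (ha m).symm
    intro S s hS hs
    have hev : ∀ f : MvPolynomial (Fin d) k, f.eval₂ i (i ∘ a) = i (f.eval a) := by
      intro f
      rw [MvPolynomial.eval₂_comp]
    exact ⟨a, fun f hf => (map_eq_zero i).mp (by rw [← hev, hS f hf]),
      fun h => hs (by rw [hev, h, map_zero])⟩
  | succ r ih =>
    intro k F _ _ _ _ _ _ hk hF i T d b hb
    by_cases hx : T 0 ∈ Set.range i
    · refine ih k F hk hF i (Fin.tail T) d b fun m => ?_
      have h1 : Subfield.closure (Set.range i ∪ Set.range T) ≤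
          Subfield.closure (Set.range i ∪ Set.range (Fin.tail T)) := by
        rw [Subfield.closure_le]
        rintro z (hz | ⟨m, rfl⟩)
        · exact Subfield.subset_closure (Or.inl hz)
        · refine Fin.cases ?_ (fun m => ?_) m
          · exact Subfield.subset_closure (Or.inl hx)
          · exact Subfield.subset_closure (Or.inr ⟨m, rfl⟩)
      exact h1 (hb m)
    · obtain ⟨L, hL, hxL, i₁, hi₁, htr⟩ := transfer_step hk hF i (T 0) hx
      have h1 : Subfield.closure (Set.range i ∪ Set.range T) ≤
          Subfield.closure (Set.range L.subtype ∪ Set.range (Fin.tail T)) := by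
        rw [Subfield.closure_le]
        rintro z (⟨z, rfl⟩ | ⟨m, rfl⟩)
        · refine Subfield.subset_closure (Or.inl ⟨i₁ z, ?_⟩)
          rw [← hi₁]; rfl
        · refine Fin.cases ?_ (fun m => ?_) m
          · exact Subfield.subset_closure (Or.inl ⟨⟨_, hxL⟩, rfl⟩)
          · exact Subfield.subset_closure (Or.inr ⟨m, rfl⟩)
      have h2 : Transfer L.subtype d b := ih L F hL hF L.subtype (Fin.tail T) d b fun m => h1 (hb m)
      intro S s hS hs
      classical
      obtain ⟨a, ha1, ha2⟩ := h2 (S.image (MvPolynomial.map i₁)) (MvPolynomial.map i₁ s) (by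
          intro f hf
          obtain ⟨f, hf', rfl⟩ := Finset.mem_image.mp hf
          rw [MvPolynomial.eval₂_map, hi₁]; exact hS f hf') (by
          rw [MvPolynomial.eval₂_map, hi₁]; exact hs)
      refine htr d a S s (fun f hf => ?_) ?_
      · rw [← MvPolynomial.eval_map]; exact ha1 _ (Finset.mem_image_of_mem _ hf)
      · rw [← MvPolynomial.eval_map]; exact ha2

end transfer

section rcf

theorem sumSq_map {A B : Type*} [CommRing A] [CommRing B] (f : A →+* B) {x : A} (h : IsSumSq x) :
    IsSumSq (f x) := by
  induction h with
  | zero => rw [map_zero]; exact .zero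
  | sq_add a _ ih => rw [map_add, map_mul]; exact .sq_add _ ih

/-- no proper formally real algebraic extension -/
def RMax (E : Type) [Field E] : Prop :=
  ∀ p : Polynomial E, Irreducible p → 2 ≤ p.natDegree → IsSumSq (-1 : AdjoinRoot p)

theorem exists_rmax (K : Type) [Field K] (hK : ¬ IsSumSq (-1 : K)) :
    ∃ (E : Type) (_ : Field E) (_ : K →+* E), ¬ IsSumSq (-1 : E) ∧ RMax E := by
  let Ω := AlgebraicClosure K
  let i : K →+* Ω := algebraMap K Ω
  let s : Set (Subfield Ω) := {E | ¬ IsSumSq (-1 : E)}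
  have h0 : i.fieldRange ∈ s := by
    intro h
    apply hK
    obtain e : K ≃+* i.fieldRange := RingHom.rangeRestrictFieldEquiv i
    have := sumSq_map (e.symm : i.fieldRange →+* K) h
    simpa using this
  obtain ⟨E, hiE, hE⟩ := zorn_le_nonempty₀ s (by
    intro c hc hch y hy
    refine ⟨sSup c, ?_, fun z hz => le_sSup hz⟩
    intro h
    have key : ∀ x : (sSup c : Subfield Ω), IsSumSq x →
        ∃ E ∈ c, ∃ x' : E, (x' : Ω) = x ∧ IsSumSq x' := by
      intro x hx
      induction hx with
      | zero => exact ⟨y, hy, 0, rfl, .zero⟩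
      | sq_add a _ ih =>
        obtain ⟨E, hE, x', hx', hs⟩ := ih
        obtain ⟨E', hE', ha⟩ := (Subfield.mem_sSup_of_directedOn ⟨y, hy⟩ hch.directedOn).mp a.2
        rcases hch.total hE hE' with hle | hle
        · refine ⟨E', hE', ⟨a, ha⟩ * ⟨a, ha⟩ + Subfield.inclusion hle x', ?_,
            .sq_add _ (sumSq_map _ hs)⟩
          change (a : Ω) * a + x' = _
          rw [hx']; rfl
        · refine ⟨E, hE, ⟨a, hle ha⟩ * ⟨a, hle ha⟩ + x', ?_, .sq_add _ hs⟩
          change (a : Ω) * a + x' = _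
          rw [hx']; rfl
    obtain ⟨E, hE, x', hx', hs⟩ := key _ h
    apply hc hE
    have : x' = -1 := Subtype.ext hx'
    rwa [this] at hs) _ h0
  refine ⟨E, inferInstance, i.codRestrict E fun x => hiE ⟨x, rfl⟩, hE.1, ?_⟩
  intro p hp hdeg
  by_contra hcon
  haveI : Fact (Irreducible p) := ⟨hp⟩
  obtain ⟨t, ht⟩ := IsAlgClosed.exists_eval₂_eq_zero E.subtype p (by
    intro h
    have : p.natDegree = 0 := Polynomial.natDegree_eq_of_degree_eq_some h
    omega)
  let j : AdjoinRoot p →+* Ω := AdjoinRoot.lift E.subtype t ht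
  have hj : j.fieldRange ∈ s := by
    intro h
    apply hcon
    obtain e : AdjoinRoot p ≃+* j.fieldRange := RingHom.rangeRestrictFieldEquiv j
    have := sumSq_map (e.symm : j.fieldRange →+* AdjoinRoot p) h
    simpa using this
  have hle : E ≤ j.fieldRange := fun x hx =>
    ⟨AdjoinRoot.of p ⟨x, hx⟩, AdjoinRoot.lift_of ht⟩
  have htE : t ∈ E := hE.2 hj hle ⟨AdjoinRoot.root p, AdjoinRoot.lift_root ht⟩
  have hroot : p.IsRoot ⟨t, htE⟩ := by
    apply E.subtype.injective
    rw [← Polynomial.eval₂_at_apply, map_zero]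
    exact ht
  have := Polynomial.degree_eq_one_of_irreducible_of_root hp hroot
  have : p.natDegree = 1 := Polynomial.natDegree_eq_of_degree_eq_some this
  omega

theorem sumSq_inv {E : Type} [Field E] {x : E} (h : IsSumSq x) : IsSumSq x⁻¹ := by
  by_cases hx : x = 0
  · simp [hx]
  · have : x⁻¹ = x * (x⁻¹ * x⁻¹) := by field_simp
    rw [this]; exact h.mul (.mul_self _)

theorem neg_sumSq {E : Type} [Field E] (h1 : ¬ IsSumSq (-1 : E)) (hE : RMax E) (a : E)
    (ha : ¬ IsSquare a) : IsSumSq (-a) := by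
  let p : Polynomial E := Polynomial.X ^ 2 - Polynomial.C a
  have hp : Irreducible p := X_pow_sub_C_irreducible_of_prime Nat.prime_two (fun b hb => ha ⟨b, by
    rw [← hb, sq]⟩)
  have hdeg : p.natDegree = 2 := Polynomial.natDegree_X_pow_sub_C
  have hmon : p.Monic := Polynomial.monic_X_pow_sub_C a two_ne_zero
  have hr : AdjoinRoot.root p * AdjoinRoot.root p = AdjoinRoot.of p a := by
    have := AdjoinRoot.eval₂_root p
    simp only [p, Polynomial.eval₂_sub, Polynomial.eval₂_pow, Polynomial.eval₂_X,
      Polynomial.eval₂_C] at this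
    rw [← sq]; exact sub_eq_zero.mp this
  have hrep : ∀ z : AdjoinRoot p, ∃ x y : E,
      z = AdjoinRoot.of p x + AdjoinRoot.of p y * AdjoinRoot.root p := by
    intro z
    obtain ⟨f, rfl⟩ := AdjoinRoot.mk_surjective z
    have h2 : (f %ₘ p).natDegree ≤ 1 := by
      have := Polynomial.natDegree_modByMonic_lt f hmon (by intro h; simp [h] at hdeg)
      omega
    obtain ⟨y, x, hxy⟩ := Polynomial.exists_eq_X_add_C_of_natDegree_le_one h2
    refine ⟨x, y, ?_⟩
    have h3 : AdjoinRoot.mk p f = AdjoinRoot.mk p (f %ₘ p) := by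
      rw [AdjoinRoot.mk_eq_mk]
      exact ⟨f /ₘ p, by linear_combination -(Polynomial.modByMonic_add_div f p)⟩
    rw [h3, hxy, map_add, map_mul, AdjoinRoot.mk_C, AdjoinRoot.mk_C, AdjoinRoot.mk_X, add_comm]
  have key : ∀ z : AdjoinRoot p, IsSumSq z → ∃ u v w : E, IsSumSq u ∧ IsSumSq v ∧
      z = AdjoinRoot.of p (u + a * v) + AdjoinRoot.of p w * AdjoinRoot.root p := by
    intro z hz
    induction hz with
    | zero => exact ⟨0, 0, 0, .zero, .zero, by simp⟩
    | sq_add b _ ih =>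
      obtain ⟨u, v, w, hu, hv, rfl⟩ := ih
      obtain ⟨x, y, rfl⟩ := hrep b
      refine ⟨x * x + u, y * y + v, 2 * x * y + w, .sq_add _ hu, .sq_add _ hv, ?_⟩
      simp only [map_add, map_mul, map_ofNat]
      linear_combination (AdjoinRoot.of p y) ^ 2 * hr
  obtain ⟨u, v, w, hu, hv, he⟩ := key _ (hE p hp hdeg.ge)
  have h0 : AdjoinRoot.mk p (Polynomial.C w * Polynomial.X + Polynomial.C (u + a * v + 1)) = 0 := by
    rw [map_add, map_mul, AdjoinRoot.mk_C, AdjoinRoot.mk_C, AdjoinRoot.mk_X, map_add _ _ 1, map_one]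
    linear_combination -he
  have h2 : Polynomial.C w * Polynomial.X + Polynomial.C (u + a * v + 1) = 0 := by
    refine Polynomial.eq_zero_of_dvd_of_natDegree_lt (AdjoinRoot.mk_eq_zero.mp h0) ?_
    rw [hdeg]
    exact Nat.lt_succ_of_le (Polynomial.natDegree_linear_le)
  have h3 : u + a * v + 1 = 0 := by
    have := congrArg (Polynomial.eval 0) h2
    simpa using this
  have hv0 : v ≠ 0 := by
    rintro rfl
    apply h1
    have : (-1 : E) = u := by linear_combination -h3
    rwa [this]
  have : -a = (u + 1) * v⁻¹ := by
    field_simp; linear_combination -h3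
  rw [this]
  exact (hu.add .one).mul (sumSq_inv hv)

theorem exists_order {E : Type} [Field E] (h1 : ¬ IsSumSq (-1 : E)) (hE : RMax E) :
    ∃ (_ : LinearOrder E), IsStrictOrderedRing E := by
  classical
  let C : RingCone E :=
    { Subsemiring.sumSq E with
      eq_zero_of_mem_of_neg_mem' := by
        intro a ha hb
        have ha : IsSumSq a := Subsemiring.mem_sumSq.mp ha
        have hb : IsSumSq (-a) := Subsemiring.mem_sumSq.mp hb
        by_contra h0
        apply h1
        have : (-1 : E) = -a * a⁻¹ := by field_simp
        rw [this]
        exact hb.mul (sumSq_inv ha) }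
  haveI : HasMemOrNegMem C := ⟨fun a => by
    by_cases h : IsSquare a
    · exact Or.inl (Subsemiring.mem_sumSq.mpr h.isSumSq)
    · exact Or.inr (Subsemiring.mem_sumSq.mpr (neg_sumSq h1 hE a h))⟩
  letI : LinearOrder E := LinearOrder.mkOfAddGroupCone C
  haveI : IsOrderedRing E := IsOrderedRing.mkOfCone C
  exact ⟨inferInstance, IsOrderedRing.toIsStrictOrderedRing E⟩

theorem rmax_pivt {F : Type} [Field F] [LinearOrder F] [IsStrictOrderedRing F] (hF : RMax F) :
    PIVT F := by
  suffices H : ∀ n, ∀ p : Polynomial F, p.natDegree = n → ∀ a b : F, a < b →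
      p.eval a * p.eval b < 0 → ∃ c, a < c ∧ c < b ∧ p.eval c = 0 from
    fun p a b => H _ p rfl a b
  intro n
  induction n using Nat.strong_induction_on with
  | _ n ih =>
  intro p hn a b hab hp
  have hp0 : p ≠ 0 := by rintro rfl; simp at hp
  rcases Nat.lt_or_ge n 2 with hn2 | hn2
  · obtain ⟨y, x, hxy⟩ := Polynomial.exists_eq_X_add_C_of_natDegree_le_one (p := p) (by omega)
    rw [hxy] at hp ⊢
    simp only [Polynomial.eval_add, Polynomial.eval_mul, Polynomial.eval_C, Polynomial.eval_X] at hp ⊢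
    have hy : y ≠ 0 := by
      rintro rfl
      nlinarith [mul_self_nonneg x]
    have hr : x = -y * (-x / y) := by field_simp
    generalize -x / y = r at hr
    subst hr
    have h2 : 0 < y * y := mul_self_pos.mpr hy
    have h3 : (a - r) * (b - r) < 0 := by
      have : (y * y) * ((a - r) * (b - r)) < 0 := by linarith
      exact (pos_iff_neg_of_mul_neg this).mp h2
    refine ⟨r, ?_, ?_, by ring⟩
    · by_contra h; push Not at h; nlinarith
    · by_contra h; push Not at h; nlinarith
  by_cases hirr : Irreducible p
  · have hrep : ∀ z : AdjoinRoot p, IsSumSq z → ∃ r : Polynomial F, AdjoinRoot.mk p r = z ∧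
        r.natDegree ≤ 2 * (n - 1) ∧ ∀ c, 0 ≤ r.eval c := by
      intro z hz
      induction hz with
      | zero => exact ⟨0, by simp⟩
      | sq_add b _ ih2 =>
        obtain ⟨r, rfl, hr1, hr2⟩ := ih2
        obtain ⟨f, rfl⟩ := AdjoinRoot.mk_surjective b
        have h2 : (f % p).natDegree < n := by
          rw [← hn]; exact Polynomial.natDegree_mod_lt f (by omega)
        have h3 : AdjoinRoot.mk p f = AdjoinRoot.mk p (f % p) := by
          rw [AdjoinRoot.mk_eq_mk]
          exact ⟨f / p, by linear_combination -(EuclideanDomain.div_add_mod f p)⟩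
        refine ⟨(f % p) * (f % p) + r, ?_, ?_, ?_⟩
        · rw [map_add, map_mul, h3]
        · refine Polynomial.natDegree_add_le_of_degree_le ?_ hr1
          refine Polynomial.natDegree_mul_le.trans ?_
          omega
        · intro c
          simp only [Polynomial.eval_add, Polynomial.eval_mul]
          exact add_nonneg (mul_self_nonneg _) (hr2 c)
    obtain ⟨r, hr, hr1, hr2⟩ := hrep _ (hF p hirr (by omega))
    have hdvd : p ∣ r + 1 := by
      rw [← AdjoinRoot.mk_eq_zero, map_add, hr, map_one]; ring
    obtain ⟨h, hh⟩ := hdvd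
    have hev : ∀ c, p.eval c * h.eval c = r.eval c + 1 := by
      intro c
      rw [← Polynomial.eval_mul, ← hh]; simp
    have hh0 : h ≠ 0 := by
      rintro rfl
      have := hev 0
      have := hr2 0
      simp at *; linarith
    have hdeg : h.natDegree < n := by
      have h4 := congrArg Polynomial.natDegree hh
      rw [Polynomial.natDegree_mul hp0 hh0] at h4
      have h5 : (r + 1).natDegree ≤ 2 * (n - 1) :=
        Polynomial.natDegree_add_le_of_degree_le hr1 (by simp)
      omega
    have hsign : h.eval a * h.eval b < 0 := by
      have h6 := hev a
      have h7 := hev b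
      have h8 : 0 < (p.eval a * p.eval b) * (h.eval a * h.eval b) := by
        have : (p.eval a * p.eval b) * (h.eval a * h.eval b) = (r.eval a + 1) * (r.eval b + 1) := by
          rw [← h6, ← h7]; ring
        rw [this]
        have := hr2 a
        have := hr2 b
        positivity
      exact (neg_iff_neg_of_mul_pos h8).mp hp
    obtain ⟨c, _, _, hc⟩ := ih _ hdeg h rfl a b hab hsign
    have := hev c
    have := hr2 c
    rw [hc] at *; linarith
  · have hnu : ¬ IsUnit p := by
      intro h
      have := Polynomial.natDegree_eq_zero_of_isUnit h
      omega
    rw [irreducible_iff] at hirr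
    push Not at hirr
    obtain ⟨f, g, hfg, hf, hg⟩ := hirr hnu
    have hf0 : f ≠ 0 := by rintro rfl; simp at hfg; exact hp0 hfg
    have hg0 : g ≠ 0 := by rintro rfl; simp at hfg; exact hp0 hfg
    have hpos : ∀ q : Polynomial F, q ≠ 0 → ¬ IsUnit q → 0 < q.natDegree := by
      intro q h0 hq
      exact Polynomial.natDegree_pos_iff_degree_pos.mpr (Polynomial.degree_pos_of_ne_zero_of_nonunit h0 hq)
    have hd := Polynomial.natDegree_mul hf0 hg0
    rw [← hfg, hn] at hd
    have h1 := hpos f hf0 hf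
    have h2 := hpos g hg0 hg
    rw [hfg, Polynomial.eval_mul, Polynomial.eval_mul] at hp
    have : (f.eval a * f.eval b) * (g.eval a * g.eval b) < 0 := by linarith
    rcases mul_neg_iff.mp this with ⟨_, h3⟩ | ⟨h3, _⟩
    · obtain ⟨c, hc1, hc2, hc⟩ := ih _ (by omega) g rfl a b hab h3
      exact ⟨c, hc1, hc2, by rw [hfg, Polynomial.eval_mul, hc, mul_zero]⟩
    · obtain ⟨c, hc1, hc2, hc⟩ := ih _ (by omega) f rfl a b hab h3
      exact ⟨c, hc1, hc2, by rw [hfg, Polynomial.eval_mul, hc, zero_mul]⟩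

theorem exists_rcf (K : Type) [Field K] (hK : ¬ IsSumSq (-1 : K)) :
    ∃ (F : Type) (_ : Field F) (_ : LinearOrder F) (_ : IsStrictOrderedRing F) (_ : K →+* F),
      PIVT F := by
  obtain ⟨E, _, i, h1, hE⟩ := exists_rmax K hK
  obtain ⟨_, _⟩ := exists_order h1 hE
  exact ⟨E, inferInstance, inferInstance, inferInstance, i, rmax_pivt hE⟩

end rcf

section rnull

theorem pivt_real : PIVT ℝ := by
  intro p a b hab hp
  have hcont : ContinuousOn (fun x => p.eval x) (Set.Icc a b) := p.continuous.continuousOn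
  rcases mul_neg_iff.mp hp with ⟨h1, h2⟩ | ⟨h1, h2⟩
  · obtain ⟨c, hc, h⟩ := intermediate_value_Ioo' hab.le hcont ⟨h2, h1⟩
    exact ⟨c, hc.1, hc.2, h⟩
  · obtain ⟨c, hc, h⟩ := intermediate_value_Ioo hab.le hcont ⟨h1, h2⟩
    exact ⟨c, hc.1, hc.2, h⟩

theorem exists_frac {R : Type} [CommRing R] (p : Ideal R) (hp : p.IsPrime) :
    ∃ (K : Type) (_ : Field K) (θ : R →+* K), (∀ x, θ x = 0 ↔ x ∈ p) ∧
      ∀ z : K, ∃ u v, v ∉ p ∧ z * θ v = θ u := by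
  let K := FractionRing (R ⧸ p)
  let θ : R →+* K :=
    (algebraMap (R ⧸ p) K).comp (Ideal.Quotient.mk p)
  have hθ : ∀ x, θ x = 0 ↔ x ∈ p := by
    intro x
    change algebraMap (R ⧸ p) K (Ideal.Quotient.mk p x) = 0 ↔ _
    rw [map_eq_zero_iff _ (IsFractionRing.injective _ K), Ideal.Quotient.eq_zero_iff_mem]
  have hfrac : ∀ z : K, ∃ u v, v ∉ p ∧ z * θ v = θ u := by
    intro z
    obtain ⟨u, v, hv, rfl⟩ := IsFractionRing.div_surjective (A := R ⧸ p) z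
    obtain ⟨u, rfl⟩ := Ideal.Quotient.mk_surjective u
    obtain ⟨v, rfl⟩ := Ideal.Quotient.mk_surjective v
    have hv0 : θ v ≠ 0 := by
      change algebraMap (R ⧸ p) K (Ideal.Quotient.mk p v) ≠ 0
      rw [Ne, map_eq_zero_iff _ (IsFractionRing.injective _ K)]
      exact nonZeroDivisors.ne_zero hv
    refine ⟨u, v, fun h => hv0 ((hθ v).mpr h), ?_⟩
    change θ u / θ v * θ v = θ u
    exact div_mul_cancel₀ _ hv0
  exact ⟨K, inferInstance, θ, hθ, hfrac⟩

theorem real_null {d : ℕ} (p : Ideal (MvPolynomial (Fin d) ℝ)) (hp : p.IsPrime)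
    (hreal : ∀ β γ : MvPolynomial (Fin d) ℝ, IsSumSq γ → β * β + γ ∈ p → β ∈ p)
    (s : MvPolynomial (Fin d) ℝ) (hs : s ∉ p) :
    ∃ a : Fin d → ℝ, (∀ f ∈ p, MvPolynomial.eval a f = 0) ∧ MvPolynomial.eval a s ≠ 0 := by
  obtain ⟨K, _, θ, hθ, hfrac⟩ := exists_frac p hp
  have hsum : ∀ z : K, IsSumSq z → ∃ γ δ, δ ∉ p ∧ IsSumSq γ ∧ z * (θ δ * θ δ) = θ γ := by
    intro z hz
    induction hz with
    | zero => exact ⟨0, 1, fun h => hp.ne_top ((Ideal.eq_top_iff_one p).mpr h), .zero, by simp⟩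
    | sq_add a _ ih =>
      obtain ⟨γ, δ, hδ, hγ, he⟩ := ih
      obtain ⟨u, v, hv, ha⟩ := hfrac a
      refine ⟨(u * δ) * (u * δ) + γ * (v * v), v * δ, fun h => (hp.mem_or_mem h).elim hv hδ,
        .sq_add _ (hγ.mul (.mul_self _)), ?_⟩
      simp only [map_add, map_mul]
      rw [← he, ← ha]; ring
  have hK : ¬ IsSumSq (-1 : K) := by
    intro h
    obtain ⟨γ, δ, hδ, hγ, he⟩ := hsum _ h
    apply hδ
    apply hreal δ γ hγ
    rw [← hθ, map_add, map_mul, ← he]; ring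
  obtain ⟨F, _, _, _, i, hF⟩ := exists_rcf K hK
  let i' : ℝ →+* F := (i.comp θ).comp MvPolynomial.C
  let b : Fin d → F := fun m => i (θ (MvPolynomial.X m))
  have hev : ∀ f : MvPolynomial (Fin d) ℝ, f.eval₂ i' b = i (θ f) := by
    intro f
    have : MvPolynomial.eval₂Hom i' b = i.comp θ := by
      apply MvPolynomial.ringHom_ext
      · intro r; simp [i']
      · intro m; simp [b]
    exact congrArg (fun g => g f) this
  obtain ⟨S, hS⟩ := (isNoetherian_def.mp (inferInstance : IsNoetherianRing (MvPolynomial (Fin d) ℝ))) p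
  obtain ⟨a, ha1, ha2⟩ := transfer_main d ℝ F pivt_real hF i' b d b
    (fun m => Subfield.subset_closure (Or.inr ⟨m, rfl⟩)) S s (by
      intro f hf
      rw [hev, (hθ f).mpr (hS ▸ Ideal.subset_span hf), map_zero]) (by
      rw [hev]
      exact (map_ne_zero i).mpr (fun h => hs ((hθ s).mp h)))
  refine ⟨a, fun f hf => ?_, ha2⟩
  have hle : p ≤ RingHom.ker (MvPolynomial.eval a) := by
    rw [← hS]
    exact Ideal.span_le.mpr fun f hf => ha1 f hf
  exact hle hf

end rnull

section final
variable {n : ℕ}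
variable {A B : Type} [CommRing A] [CommRing B]

/-- the matrix ring -/
abbrev Mt (n : ℕ) (A : Type) [CommRing A] : Type := Matrix (Fin n) (Fin n) (Quaternion A)

theorem smul_mem_I (I : Ideal (Mt n A)) (r : A) {M : Mt n A} (hM : M ∈ I) : r • M ∈ I := by
  rw [Algebra.smul_def]; exact I.mul_mem_left _ hM

/-- colon ideal -/
noncomputable def colon (I : Ideal (Mt n A)) (M : Mt n A) : Ideal (A) where
  carrier := {r | r • M ∈ I}
  add_mem' {r s} hr hs := by
    change (r + s) • M ∈ I
    rw [add_smul]; exact I.add_mem hr hs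
  zero_mem' := by change (0 : A) • M ∈ I; rw [zero_smul]; exact I.zero_mem
  smul_mem' r s hs := by
    change (r * s) • M ∈ I
    rw [mul_smul]; exact smul_mem_I I r hs

theorem mem_colon {I : Ideal (Mt n A)} {M : Mt n A} {r : A} : r ∈ colon I M ↔ r • M ∈ I := Iff.rfl

theorem exists_prime [IsNoetherianRing A] (I : Ideal (Mt n A)) (Q : Mt n A) (hQ : Q ∉ I) :
    ∃ c : A, c • Q ∉ I ∧ (colon I (c • Q)).IsPrime := by
  obtain ⟨J, ⟨c, hc, rfl⟩, hmax⟩ := set_has_maximal_iff_noetherian.mpr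
    (inferInstance : IsNoetherianRing A) {J | ∃ c : A, c • Q ∉ I ∧ colon I (c • Q) = J}
    ⟨_, 1, by rwa [one_smul], rfl⟩
  refine ⟨c, hc, ⟨?_, ?_⟩⟩
  · rw [Ne, Ideal.eq_top_iff_one, mem_colon, one_smul]; exact hc
  · intro r s hrs
    by_cases hs : s ∈ colon I (c • Q)
    · exact Or.inr hs
    left
    have hle : colon I (c • Q) ≤ colon I ((s * c) • Q) := by
      intro x hx
      rw [mem_colon] at hx ⊢
      have : x • (s * c) • Q = s • x • c • Q := by
        simp only [← mul_smul]; congr 1; ring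
      rw [this]; exact smul_mem_I I s hx
    have hnot := hmax _ ⟨s * c, by rw [mul_smul]; exact hs, rfl⟩
    have heq : colon I (c • Q) = colon I ((s * c) • Q) := by
      by_contra hne; exact hnot (lt_of_le_of_ne hle hne)
    rw [heq, mem_colon]
    rw [mem_colon] at hrs
    rwa [mul_smul, ← mul_smul r s]

theorem sumSq_fin {x : A} (h : IsSumSq x) :
    ∃ (k : ℕ) (g : Fin k → A), x = ∑ i, g i * g i := by
  induction h with
  | zero => exact ⟨0, Fin.elim0, by simp⟩
  | sq_add a _ ih =>
    obtain ⟨k, g, rfl⟩ := ih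
    exact ⟨k + 1, Fin.cons a g, by simp [Fin.sum_univ_succ]⟩

theorem conj_smul (r : A) (M : Mt n A) : (r • M)ᴴ = r • Mᴴ := by
  ext1 i j
  exact Quaternion.star_smul r (M j i)

theorem colon_real (I : Ideal (Mt n A)) (hI : I.IsRealLeftIdealH) (M : Mt n A) (β γ : A)
    (hγ : IsSumSq γ) (h : β * β + γ ∈ colon I M) : β ∈ colon I M := by
  obtain ⟨k, g, rfl⟩ := sumSq_fin hγ
  let g' : Fin (k + 1) → A := Fin.cons β g
  have h1 : ∑ i, g' i * g' i ∈ colon I M := by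
    simpa [g', Fin.sum_univ_succ] using h
  have h2 := hI (k + 1) (fun i => g' i • M) (by
    have : ∑ i, (g' i • M)ᴴ * (g' i • M) = Mᴴ * ((∑ i, g' i * g' i) • M) := by
      rw [Finset.sum_smul, Finset.mul_sum]
      refine Finset.sum_congr rfl fun i _ => ?_
      rw [conj_smul, smul_mul_smul_comm, mul_smul_comm]
    rw [this]
    exact I.mul_mem_left _ h1) 0
  exact h2

/-- quaternion components -/
def cq (l : Fin 4) (q : Quaternion A) : A := ![q.re, q.imI, q.imJ, q.imK] l

theorem cq_add (l : Fin 4) (p q : Quaternion A) :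
    cq l (p + q) = cq l p + cq l q := by fin_cases l <;> simp [cq]

theorem cq_smul (l : Fin 4) (r : A) (q : Quaternion A) :
    cq l (r • q) = r * cq l q := by fin_cases l <;> simp [cq]

/-- opaque-ish constructor -/
def mkq (a b c d : A) : Quaternion A := ⟨a, b, c, d⟩

@[simp] theorem mkq_re (a b c d : A) : (mkq a b c d).re = a := rfl
@[simp] theorem mkq_imI (a b c d : A) : (mkq a b c d).imI = b := rfl
@[simp] theorem mkq_imJ (a b c d : A) : (mkq a b c d).imJ = c := rfl
@[simp] theorem mkq_imK (a b c d : A) : (mkq a b c d).imK = d := rfl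

theorem qdecomp : ∃ e0 e1 e2 e3 : Quaternion A, ∀ x : Quaternion A,
    x = cq 0 x • e0 + cq 1 x • e1 + cq 2 x • e2 + cq 3 x • e3 := by
  refine ⟨mkq 1 0 0 0, mkq 0 1 0 0, mkq 0 0 1 0, mkq 0 0 0 1, fun x => ?_⟩
  ext <;> simp [cq]

theorem key_mul (I : Ideal (Mt n A)) (p : Ideal (A)) (D : Mt n A)
    (hD : ∀ c ∈ p, c • D ∈ I) (X : Mt n A) (hX : ∀ i j l, cq l (X i j) ∈ p) : X * D ∈ I := by
  have hs : ∀ i j (c : A) (q : Quaternion (A)), c ∈ p → Matrix.single i j (c • q) * D ∈ I := by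
    intro i j c q hc
    have : Matrix.single i j (c • q) * D = Matrix.single i j q * (c • D) := by
      rw [← Matrix.smul_single, smul_mul_assoc, mul_smul_comm]
    rw [this]
    exact I.mul_mem_left _ (hD c hc)
  rw [Matrix.matrix_eq_sum_single X, Finset.sum_mul]
  refine I.sum_mem fun i _ => ?_
  rw [Finset.sum_mul]
  refine I.sum_mem fun j _ => ?_
  have hx := hX i j
  generalize X i j = x at hx
  obtain ⟨e0, e1, e2, e3, he⟩ := qdecomp (A := A)
  have hadd : ∀ y z : Quaternion A, Matrix.single i j y * D ∈ I → Matrix.single i j z * D ∈ I →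
      Matrix.single i j (y + z) * D ∈ I := by
    intro y z hy hz
    rw [Matrix.single_add, add_mul]
    exact I.add_mem hy hz
  rw [he x]
  exact hadd _ _ (hadd _ _ (hadd _ _ (hs _ _ _ _ (hx 0)) (hs _ _ _ _ (hx 1)))
    (hs _ _ _ _ (hx 2))) (hs _ _ _ _ (hx 3))

theorem key_not (I : Ideal (Mt n A)) (hI : I.IsRealLeftIdealH) (Q T : Mt n A) (hT : T ∈ I)
    (s : A) (hs : s ∉ colon I Q) : ∃ i j l, cq l ((s • Q - T) i j) ∉ colon I Q := by
  by_contra hcon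
  push Not at hcon
  apply hs
  have hD : ∀ c ∈ colon I Q, c • (s • Q - T) ∈ I := by
    intro c hc
    rw [smul_sub, smul_comm]
    exact I.sub_mem (smul_mem_I I s hc) (smul_mem_I I c hT)
  have h1 : (s • Q - T)ᴴ * (s • Q - T) ∈ I := by
    refine key_mul I (colon I Q) _ hD _ fun i j l => ?_
    have h2 := hcon j i
    rw [Matrix.conjTranspose_apply]
    generalize (s • Q - T) j i = x at h2
    fin_cases l
    · simpa [cq] using h2 0
    · simpa [cq] using h2 1
    · simpa [cq] using h2 2
    · simpa [cq] using h2 3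
  have h2 := hI 1 (fun _ => s • Q - T) (by simpa using h1) 0
  have := I.add_mem h2 hT
  rwa [sub_add_cancel] at this

end final

section abs
variable {n : ℕ}
variable {A : Type} [CommRing A]

/-- the functional -/
def phi (w : Fin n × Fin n × Fin 4 → A) (M : Mt n A) : A :=
  ∑ x, w x * cq x.2.2 (M x.1 x.2.1)

theorem phi_smul (w : Fin n × Fin n × Fin 4 → A) (r : A) (M : Mt n A) :
    phi w (r • M) = r * phi w M := by
  unfold phi
  rw [Finset.mul_sum]
  refine Finset.sum_congr rfl fun x _ => ?_
  rw [Matrix.smul_apply, cq_smul]; ring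

theorem cq_zero (l : Fin 4) : cq l (0 : Quaternion A) = 0 := by fin_cases l <;> rfl

theorem abstract_fn [IsNoetherianRing A] (I : Ideal (Mt n A)) (hI : I.IsRealLeftIdealH)
    (Q : Mt n A) (hQ : Q ∉ I) : ∃ p : Ideal A, p.IsPrime ∧
      (∀ β γ, IsSumSq γ → β * β + γ ∈ p → β ∈ p) ∧
      ∃ w : Fin n × Fin n × Fin 4 → A, (∀ T ∈ I, phi w T ∈ p) ∧ phi w Q ∉ p := by
  obtain ⟨c, hc, hp⟩ := exists_prime I Q hQ
  have hkey := fun T hT s hs => key_not I hI (c • Q) T hT s hs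
  have hreal := colon_real I hI (c • Q)
  generalize hpp : colon I (c • Q) = p at hp hkey hreal
  refine ⟨p, hp, hreal, ?_⟩
  obtain ⟨K, _, θ, hθ, hfrac⟩ := exists_frac p hp
  let π : Mt n A → (Fin n × Fin n × Fin 4 → K) := fun M x => θ (cq x.2.2 (M x.1 x.2.1))
  have π_add : ∀ M N, π (M + N) = π M + π N := by
    intro M N; funext x
    simp only [π, Matrix.add_apply, cq_add, map_add, Pi.add_apply]
  have π_smul : ∀ (r : A) M, π (r • M) = θ r • π M := by
    intro r M; funext x
    simp only [π, Matrix.smul_apply, cq_smul, map_mul, Pi.smul_apply, smul_eq_mul]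
  have hspan : ∀ z ∈ Submodule.span K (π '' (I : Set (Mt n A))), ∃ s, s ∉ p ∧ ∃ T ∈ I,
      θ s • z = π T := by
    intro z hz
    induction hz using Submodule.span_induction with
    | mem z hz =>
      obtain ⟨T, hT, rfl⟩ := hz
      exact ⟨1, fun h => hp.ne_top ((Ideal.eq_top_iff_one _).mpr h), T, hT, by simp⟩
    | zero =>
      refine ⟨1, fun h => hp.ne_top ((Ideal.eq_top_iff_one _).mpr h), 0, I.zero_mem, ?_⟩
      funext x
      simp only [π, Matrix.zero_apply, cq_zero, map_zero, smul_zero, Pi.zero_apply]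
    | add y z _ _ hy hz =>
      obtain ⟨s, hs, T, hT, h1⟩ := hy
      obtain ⟨t, ht, U, hU, h2⟩ := hz
      refine ⟨s * t, fun h => (hp.mem_or_mem h).elim hs ht, t • T + s • U,
        I.add_mem (smul_mem_I I t hT) (smul_mem_I I s hU), ?_⟩
      rw [π_add, π_smul, π_smul, ← h1, ← h2, smul_add, map_mul, smul_smul, smul_smul,
        mul_comm (θ t)]
    | smul a z _ hz =>
      obtain ⟨s, hs, T, hT, h1⟩ := hz
      obtain ⟨u, v, hv, h2⟩ := hfrac a
      refine ⟨v * s, fun h => (hp.mem_or_mem h).elim hv hs, u • T, smul_mem_I I u hT, ?_⟩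
      rw [π_smul, ← h1, ← h2, map_mul, smul_smul, smul_smul]
      congr 1; ring
  have hnot : π (c • Q) ∉ Submodule.span K (π '' (I : Set (Mt n A))) := by
    intro h
    obtain ⟨s, hs, T, hT, h1⟩ := hspan _ h
    obtain ⟨i, j, l, h2⟩ := hkey T hT s hs
    apply h2
    rw [← hθ]
    have h3 : π (s • (c • Q) - T) + π T = π T := by
      rw [← π_add, sub_add_cancel, π_smul, h1]
    have h4 : π (s • (c • Q) - T) = 0 := by simpa using h3
    exact congrFun h4 (i, j, l)
  obtain ⟨f, hf1, hf2⟩ := Submodule.exists_le_ker_of_notMem hnot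
  choose u v hv huv using fun x : Fin n × Fin n × Fin 4 => hfrac (f (Pi.single x 1))
  let w : Fin n × Fin n × Fin 4 → A := fun x => u x * ∏ y ∈ Finset.univ.erase x, v y
  have hw : ∀ x, θ (w x) = θ (∏ y, v y) * f (Pi.single x 1) := by
    intro x
    rw [← Finset.mul_prod_erase Finset.univ v (Finset.mem_univ x), map_mul, map_mul, ← huv]
    ring
  have hphi : ∀ M, θ (phi w M) = θ (∏ y, v y) * f (π M) := by
    intro M
    unfold phi
    rw [map_sum]
    have : f (π M) = ∑ x, π M x * f (Pi.single x 1) := by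
      conv_lhs => rw [← LinearMap.sum_single_apply (fun _ => K) (π M), map_sum]
      refine Finset.sum_congr rfl fun x _ => ?_
      have : (Pi.single x (π M x) : Fin n × Fin n × Fin 4 → K) = π M x • Pi.single x 1 := by
        rw [← Pi.single_smul, smul_eq_mul, mul_one]
      change f (Pi.single x (π M x)) = _
      rw [this, map_smul, smul_eq_mul]
    rw [this, Finset.mul_sum]
    refine Finset.sum_congr rfl fun x _ => ?_
    rw [map_mul, hw]
    simp only [π]
    ring
  refine ⟨w, fun T hT => ?_, fun h => ?_⟩
  · rw [← hθ, hphi]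
    have : f (π T) = 0 := hf2 (Submodule.subset_span ⟨T, hT, rfl⟩)
    rw [this, mul_zero]
  · have h1 : phi w (c • Q) ∈ p := by rw [phi_smul]; exact p.mul_mem_left _ h
    rw [← hθ, hphi] at h1
    rcases mul_eq_zero.mp h1 with h2 | h2
    · rw [hθ, hp.prod_mem_iff] at h2
      obtain ⟨y, _, hy⟩ := h2
      exact hv y hy
    · exact hf1 h2

end abs

section ev
variable {n : ℕ}
variable {A B : Type} [CommRing A] [CommRing B]

/-- componentwise map -/
def qmap (e : A →+* B) : Quaternion A →+* Quaternion B where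
  toFun q := mkq (e q.re) (e q.imI) (e q.imJ) (e q.imK)
  map_one' := by
    ext
    · exact map_one e
    · exact map_zero e
    · exact map_zero e
    · exact map_zero e
  map_zero' := by
    ext
    · exact map_zero e
    · exact map_zero e
    · exact map_zero e
    · exact map_zero e
  map_add' x y := by ext <;> simp
  map_mul' x y := by ext <;> simp

theorem qmap_re (e : A →+* B) (q : Quaternion A) : (qmap e q).re = e q.re := rfl

theorem qmap_star (e : A →+* B) (q : Quaternion A) : qmap e (star q) = star (qmap e q) := by
  ext <;> simp [qmap]

theorem re_sum {ι : Type} (s : Finset ι) (f : ι → Quaternion A) :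
    (∑ i ∈ s, f i).re = ∑ i ∈ s, (f i).re := by
  classical
  induction s using Finset.induction_on with
  | empty => rfl
  | insert a s ha ih => rw [Finset.sum_insert ha, Finset.sum_insert ha, Quaternion.re_add, ih]

theorem normsq_re (q : Quaternion ℝ) : (star q * q).re = Quaternion.normSq q := by
  rw [Quaternion.star_mul_self]; rfl

/-- vanishing ideal -/
def vanId (e : A →+* ℝ) (v : Fin n → Quaternion ℝ) : Ideal (Mt n A) where
  carrier := {M | (qmap e).mapMatrix M *ᵥ v = 0}
  add_mem' {M N} hM hN := by
    change (qmap e).mapMatrix (M + N) *ᵥ v = 0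
    rw [map_add, Matrix.add_mulVec, hM, hN, add_zero]
  zero_mem' := by
    change (qmap e).mapMatrix 0 *ᵥ v = 0
    rw [map_zero, Matrix.zero_mulVec]
  smul_mem' M N hN := by
    change (qmap e).mapMatrix (M * N) *ᵥ v = 0
    rw [map_mul, ← Matrix.mulVec_mulVec, hN, Matrix.mulVec_zero]

theorem mem_vanId {e : A →+* ℝ} {v : Fin n → Quaternion ℝ} {M : Mt n A} :
    M ∈ vanId e v ↔ (qmap e).mapMatrix M *ᵥ v = 0 := Iff.rfl

theorem conj_map (e : A →+* B) (M : Mt n A) :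
    (qmap e).mapMatrix Mᴴ = ((qmap e).mapMatrix M)ᴴ := by
  ext1 i j
  exact qmap_star e (M j i)

theorem vanId_real (e : A →+* ℝ) (v : Fin n → Quaternion ℝ) :
    (vanId e v : Ideal (Mt n A)).IsRealLeftIdealH := by
  intro k M hM i
  rw [mem_vanId, map_sum] at hM
  rw [mem_vanId]
  have h1 : star v ⬝ᵥ ((∑ i, (qmap e).mapMatrix ((M i)ᴴ * M i)) *ᵥ v) = 0 := by
    rw [hM, dotProduct_zero]
  have h2 : ∀ i, star v ⬝ᵥ ((qmap e).mapMatrix ((M i)ᴴ * M i) *ᵥ v)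
      = ∑ j, star (((qmap e).mapMatrix (M i) *ᵥ v) j) * ((qmap e).mapMatrix (M i) *ᵥ v) j := by
    intro i
    rw [map_mul, conj_map, ← Matrix.mulVec_mulVec, Matrix.dotProduct_mulVec, ← Matrix.star_mulVec]
    rfl
  rw [Matrix.sum_mulVec, dotProduct_sum] at h1
  have h3 := congrArg (fun q : Quaternion ℝ => q.re) h1
  simp only [h2, re_sum, normsq_re] at h3
  change _ = (0 : ℝ) at h3
  rw [Finset.sum_eq_zero_iff_of_nonneg
    (fun i _ => Finset.sum_nonneg fun j _ => Quaternion.normSq_nonneg)] at h3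
  have h4 := h3 i (Finset.mem_univ i)
  rw [Finset.sum_eq_zero_iff_of_nonneg (fun j _ => Quaternion.normSq_nonneg)] at h4
  funext j
  exact Quaternion.normSq_eq_zero.mp (h4 j (Finset.mem_univ j))

/-- vectors representing the functional -/
def uvec (e : A →+* ℝ) (w : Fin n × Fin n × Fin 4 → A) (i : Fin n) : Fin n → Quaternion ℝ :=
  fun j => mkq (e (w (i, j, 0))) (-e (w (i, j, 1))) (-e (w (i, j, 2))) (-e (w (i, j, 3)))

theorem e_phi (e : A →+* ℝ) (w : Fin n × Fin n × Fin 4 → A) (M : Mt n A) :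
    e (phi w M) = ∑ i, (((qmap e).mapMatrix M *ᵥ uvec e w i) i).re := by
  unfold phi
  rw [map_sum, Fintype.sum_prod_type]
  refine Finset.sum_congr rfl fun i _ => ?_
  rw [Fintype.sum_prod_type, Matrix.mulVec, dotProduct, re_sum]
  refine Finset.sum_congr rfl fun j _ => ?_
  rw [Fin.sum_univ_four, Quaternion.re_mul]
  simp [uvec, cq, qmap]
  ring

theorem exists_vec [IsNoetherianRing A] (e : A →+* ℝ) (ct : ℝ → A) (hct : ∀ r, e (ct r) = r)
    (I : Ideal (Mt n A)) (w : Fin n × Fin n × Fin 4 → A) (Q : Mt n A)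
    (hI : ∀ T ∈ I, e (phi w T) = 0) (hQ : e (phi w Q) ≠ 0) :
    ∃ v : Fin n → Quaternion ℝ, (∀ T ∈ I, (qmap e).mapMatrix T *ᵥ v = 0) ∧
      (qmap e).mapMatrix Q *ᵥ v ≠ 0 := by
  rw [e_phi] at hQ
  obtain ⟨i, _, hi⟩ := Finset.exists_ne_zero_of_sum_ne_zero hQ
  refine ⟨uvec e w i, fun T hT => ?_, fun h => hi ?_⟩
  · funext k
    generalize hq : ((qmap e).mapMatrix T *ᵥ uvec e w i) k = q
    let h : Quaternion A := mkq (ct q.re) (ct (-q.imI)) (ct (-q.imJ)) (ct (-q.imK))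
    have hh : qmap e h = star q := by ext <;> simp [qmap, h, hct]
    have h1 := hI (Matrix.single i k h * T) (I.mul_mem_left _ hT)
    have h2 : (qmap e).mapMatrix (Matrix.single i k h) = Matrix.single i k (star q) := by
      rw [RingHom.mapMatrix_apply, Matrix.map_single, hh]
    rw [e_phi, map_mul, h2, Finset.sum_eq_single i] at h1
    · rw [← Matrix.mulVec_mulVec, Matrix.single_mulVec] at h1
      simp only [Function.update_self, hq, normsq_re] at h1
      exact Quaternion.normSq_eq_zero.mp h1
    · intro j _ hj
      rw [← Matrix.mulVec_mulVec, Matrix.single_mulVec, Function.update_of_ne hj]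
      rfl
    · simp
  · rw [h]; rfl

end ev

theorem main_aux (d n m : ℕ)
    (P : Fin m → Matrix (Fin n) (Fin n) (Quaternion (MvPolynomial (Fin d) ℝ)))
    (Q : Matrix (Fin n) (Fin n) (Quaternion (MvPolynomial (Fin d) ℝ))) :
    (∀ (a : Fin d → ℝ) (v : Fin n → Quaternion ℝ),
        (∀ i, (evalMatQ a (P i)).mulVec v = 0) → (evalMatQ a Q).mulVec v = 0) ↔
      (∀ I : Ideal (Matrix (Fin n) (Fin n) (Quaternion (MvPolynomial (Fin d) ℝ))),
        I.IsRealLeftIdealH → (∀ i, P i ∈ I) → Q ∈ I) := by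
  constructor
  · intro h I hI hP
    by_contra hQ
    obtain ⟨p, hp, hreal, w, h1, h2⟩ := abstract_fn I hI Q hQ
    obtain ⟨a, ha, hs⟩ := real_null p hp hreal _ h2
    obtain ⟨v, hv1, hv2⟩ := exists_vec (eval a) (C : ℝ → MvPolynomial (Fin d) ℝ)
      (fun r => eval_C r) I w Q (fun T hT => ha _ (h1 T hT)) hs
    exact hv2 (h a v fun i => hv1 _ (hP i))
  · intro h a v hP
    exact h (vanId (eval a) v) (vanId_real (eval a) v) hP

end RN

/-- **First Matricial Quaternionic Nullstellensatz (Theorem E).** -/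
theorem matricial_quaternionic_nullstellensatz_central (d n m : ℕ)
    (P : Fin m → Matrix (Fin n) (Fin n) (Quaternion (MvPolynomial (Fin d) ℝ)))
    (Q : Matrix (Fin n) (Fin n) (Quaternion (MvPolynomial (Fin d) ℝ))) :
    (∀ (a : Fin d → ℝ) (v : Fin n → Quaternion ℝ),
        (∀ i, (evalMatQ a (P i)).mulVec v = 0) → (evalMatQ a Q).mulVec v = 0) ↔
      (∀ I : Ideal (Matrix (Fin n) (Fin n) (Quaternion (MvPolynomial (Fin d) ℝ))),
        I.IsRealLeftIdealH → (∀ i, P i ∈ I) → Q ∈ I) := by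
  exact RN.main_aux d n m P Q
end

section
/- (Corollary 1, for real matrix polynomials) A left ideal I of the ring A = M_n(ℝ[x₁, …, x_d]), equipped with the transpose involution P* = Pᵀ, is real if and only if it is strongly real, i.e., whenever A₁, …, A_k ∈ A satisfy A₁*A₁ + ⋯ + A_k*A_k ∈ I + I*, where I* = {X* : X ∈ I}, then A₁, …, A_k ∈ I. -/
open MvPolynomial Matrix

/-- A left ideal `I` of `Mₙ(ℝ[x₁,…,x_d])` with the transpose involution is *strongly real*
if whenever `(A 0)ᵀ * A 0 + ⋯ + (A (k-1))ᵀ * A (k-1) ∈ I + I*` (where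
`I* = {Xᵀ : X ∈ I}`), each `A i` lies in `I`. -/
def Ideal.IsStronglyRealLeftIdealT {R : Type*} [CommRing R] {n : ℕ}
    (I : Ideal (Matrix (Fin n) (Fin n) R)) : Prop :=
  ∀ (k : ℕ) (A : Fin k → Matrix (Fin n) (Fin n) R),
    (∃ X ∈ I, ∃ Y ∈ I, (∑ i, (A i)ᵀ * A i) = X + Yᵀ) → ∀ i, A i ∈ I

theorem rowKey {R : Type*} [CommRing R] [IsNoetherianRing R] {n : ℕ}
    (N : Submodule R (Fin n → R))
    (hN : ∀ (ι : Type) [Fintype ι] (u : ι → Fin n → R),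
      (∀ j, ∑ i, u i j • u i ∈ N) → ∀ i, u i ∈ N)
    (r : Fin n → R) (hr : r ∉ N) :
    ∃ p : Ideal R, (∀ (ι : Type) [Fintype ι] (a : ι → R), ∑ i, a i ^ 2 ∈ p → ∀ i, a i ∈ p) ∧
      ∃ v : Fin n → R, (∀ m ∈ N, m ⬝ᵥ v ∈ p) ∧ r ⬝ᵥ v ∉ p := by
  classical
  let ann : (Fin n → R) → Ideal R := fun u => N.comap (LinearMap.toSpanSingleton R _ u)
  have hann : ∀ u a, a ∈ ann u ↔ a • u ∈ N := fun u a => by simp [ann]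
  obtain ⟨p, ⟨s, hs, rfl⟩, hmax⟩ := set_has_maximal_iff_noetherian.mpr
    (inferInstance : IsNoetherian R R)
    {J | ∃ s : R, s • r ∉ N ∧ J = ann (s • r)} ⟨ann ((1 : R) • r), 1, by simpa using hr, rfl⟩
  set t := s • r with ht
  have hprime : (ann t).IsPrime := by
    refine ⟨fun h => hs ?_, fun {a b} hab => ?_⟩
    · have := (hann t 1).1 (h ▸ trivial)
      simpa using this
    · by_contra! hcon
      obtain ⟨ha, hb⟩ := hcon
      rw [hann] at ha hb hab
      have hb' : (b * s) • r ∉ N := by rwa [mul_smul]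
      have := hmax _ ⟨b * s, hb', rfl⟩
      refine this (lt_of_le_of_ne ?_ ?_)
      · intro c hc
        rw [hann] at hc ⊢
        rw [mul_smul, ← ht, smul_comm]
        exact N.smul_mem _ hc
      · intro h
        apply ha
        rw [← hann, h, hann, mul_smul, ← ht, ← mul_smul]
        exact hab
  have hreal : ∀ (ι : Type) [Fintype ι] (a : ι → R), ∑ i, a i ^ 2 ∈ ann t → ∀ i, a i ∈ ann t := by
    intro ι _ a ha i
    rw [hann] at ha ⊢
    refine hN ι (fun i => a i • t) (fun j => ?_) i
    have : ∑ i, (a i • t) j • (a i • t) = t j • ((∑ i, a i ^ 2) • t) := by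
      rw [Finset.sum_smul, Finset.smul_sum]
      refine Finset.sum_congr rfl fun i _ => ?_
      ext b
      simp only [Pi.smul_apply, smul_eq_mul]
      ring
    rw [this]
    exact N.smul_mem _ ha
  refine ⟨ann t, hreal, ?_⟩
  -- key: a t ∈ N + p R^n implies a ∈ p
  have hkey : ∀ (a : R) (m : Fin n → R), m ∈ N → (∀ j, (a • t - m) j ∈ ann t) → a ∈ ann t := by
    intro a m hm hq
    have hqN : a • t - m ∈ N := by
      refine hN Unit (fun _ => a • t - m) (fun j => ?_) ()
      have h1 := (hann _ _).1 (hq j)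
      simp only [Finset.univ_unique, Finset.sum_const, Finset.card_singleton, one_smul]
      rw [smul_sub, smul_comm]
      exact N.sub_mem (N.smul_mem _ h1) (N.smul_mem _ hm)
    rw [hann]
    simpa using N.add_mem hqN hm
  set p := ann t with hp
  let K := FractionRing (R ⧸ p)
  let f : R →+* K := (algebraMap (R ⧸ p) K).comp (Ideal.Quotient.mk p)
  have hf : ∀ a, f a = 0 ↔ a ∈ p := by
    intro a
    simp only [f, RingHom.comp_apply]
    rw [map_eq_zero_iff _ (IsFractionRing.injective (R ⧸ p) K), Ideal.Quotient.eq_zero_iff_mem]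
  let F : (Fin n → R) → (Fin n → K) := fun u j => f (u j)
  let W : Submodule K (Fin n → K) := Submodule.span K (F '' N)
  have hclear : ∀ w ∈ W, ∃ a : R, a ∉ p ∧ ∃ m ∈ N, f a • w = F m := by
    intro w hw
    induction hw using Submodule.span_induction with
    | mem x hx =>
      obtain ⟨m, hm, rfl⟩ := hx
      exact ⟨1, fun h => hprime.ne_top ((Ideal.eq_top_iff_one _).2 h), m, hm, by simp⟩
    | zero => exact ⟨1, fun h => hprime.ne_top ((Ideal.eq_top_iff_one _).2 h), 0, N.zero_mem, by
        ext j; simp [F]⟩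
    | add x y _ _ hx hy =>
      obtain ⟨a, ha, m, hm, h1⟩ := hx
      obtain ⟨b, hb, l, hl, h2⟩ := hy
      refine ⟨a * b, fun h => (hprime.mem_or_mem h).elim ha hb, b • m + a • l,
        N.add_mem (N.smul_mem _ hm) (N.smul_mem _ hl), ?_⟩
      ext j
      have e1 := congrFun h1 j
      have e2 := congrFun h2 j
      simp only [F, Pi.smul_apply, Pi.add_apply, smul_eq_mul, map_mul, map_add] at e1 e2 ⊢
      rw [← e1, ← e2]; ring
    | smul c x _ hx =>
      obtain ⟨a, ha, m, hm, h1⟩ := hx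
      obtain ⟨y, z, hz, hc⟩ := IsFractionRing.div_surjective (A := R ⧸ p) c
      obtain ⟨y, rfl⟩ := Ideal.Quotient.mk_surjective y
      obtain ⟨z, rfl⟩ := Ideal.Quotient.mk_surjective z
      have hz0 : z ∉ p := fun h => nonZeroDivisors.ne_zero hz (Ideal.Quotient.eq_zero_iff_mem.2 h)
      have hfz : f z ≠ 0 := fun h => hz0 ((hf z).1 h)
      have hc' : f y / f z = c := hc
      refine ⟨z * a, fun h => (hprime.mem_or_mem h).elim hz0 ha, y • m, N.smul_mem _ hm, ?_⟩
      ext j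
      have e1 := congrFun h1 j
      simp only [F, Pi.smul_apply, smul_eq_mul, map_mul] at e1 ⊢
      rw [← e1, ← hc']
      rw [show f z * f a * (f y / f z * x j) = (f y / f z * f z) * (f a * x j) by ring,
        div_mul_cancel₀ _ hfz]
  have htW : F t ∉ W := by
    intro h
    obtain ⟨a, ha, m, hm, h1⟩ := hclear _ h
    refine ha (hkey a m hm fun j => ?_)
    rw [← hf]
    have e1 := congrFun h1 j
    simp only [F, Pi.smul_apply, smul_eq_mul] at e1
    simp [e1]
  obtain ⟨φ, hφ, hφW⟩ := Submodule.exists_le_ker_of_notMem htW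
  let w : Fin n → K := fun j => φ (Pi.single j 1)
  have hφw : ∀ x, φ x = ∑ j, x j * w j := by
    intro x
    conv_lhs => rw [pi_eq_sum_univ' x]
    simp [w, map_sum]
  obtain ⟨b, hb⟩ := IsLocalization.exist_integer_multiples_of_finite (nonZeroDivisors (R ⧸ p)) w
  choose v' hv' using hb
  choose v hv using fun j => Ideal.Quotient.mk_surjective (v' j)
  have hfv : ∀ u : Fin n → R, f (u ⬝ᵥ v) = algebraMap (R ⧸ p) K b * φ (F u) := by
    intro u
    rw [hφw, dotProduct, map_sum, Finset.mul_sum]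
    refine Finset.sum_congr rfl fun j _ => ?_
    have : f (v j) = algebraMap (R ⧸ p) K b * w j := by
      have := hv' j
      simp only [f, RingHom.comp_apply, hv, this]
      rw [Algebra.smul_def]
    rw [map_mul, this]
    simp only [F]
    ring
  have hb0 : algebraMap (R ⧸ p) K b ≠ 0 := by
    rw [Ne, map_eq_zero_iff _ (IsFractionRing.injective (R ⧸ p) K)]
    exact nonZeroDivisors.ne_zero b.2
  refine ⟨v, fun m hm => ?_, fun h => ?_⟩
  · rw [← hf, hfv]
    have : φ (F m) = 0 := hφW (Submodule.subset_span ⟨m, hm, rfl⟩)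
    rw [this, mul_zero]
  · have h2 : t ⬝ᵥ v ∈ p := by
      rw [ht, smul_dotProduct]
      exact p.mul_mem_left _ h
    rw [← hf, hfv] at h2
    exact (mul_ne_zero hb0 hφ) h2

theorem real_to_strong {R : Type*} [CommRing R] [IsNoetherianRing R] {n : ℕ}
    (I : Ideal (Matrix (Fin n) (Fin n) R)) (hI : I.IsRealLeftIdealT) :
    I.IsStronglyRealLeftIdealT := by
  classical
  let N : Submodule R (Fin n → R) :=
    { carrier := {u | ∀ l, vecMulVec (Pi.single l 1) u ∈ I}
      add_mem' := fun {a b} ha hb l => by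
        rw [vecMulVec_add]; exact I.add_mem (ha l) (hb l)
      zero_mem' := fun l => by rw [vecMulVec_zero]; exact I.zero_mem
      smul_mem' := fun c u hu l => by
        have : vecMulVec (Pi.single l 1) (c • u)
            = (Matrix.scalar (Fin n) c) * vecMulVec (Pi.single l 1) u := by
          ext i j; simp [vecMulVec_apply]; ring
        rw [this]; exact I.mul_mem_left _ (hu l) }
  have hNdef : ∀ u, u ∈ N ↔ ∀ l, vecMulVec (Pi.single l 1) u ∈ I := fun u => Iff.rfl
  have hNI : ∀ A : Matrix (Fin n) (Fin n) R, A ∈ I ↔ ∀ i, A i ∈ N := by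
    intro A
    constructor
    · intro hA i l
      have : vecMulVec (Pi.single l 1) (A i) = Matrix.single l i (1 : R) * A := by
        ext a b
        simp [vecMulVec_apply, Matrix.mul_apply, Matrix.single_apply, Pi.single_apply, ite_and,
          eq_comm]
      rw [this]; exact I.mul_mem_left _ hA
    · intro h
      have : A = ∑ i, vecMulVec (Pi.single i 1) (A i) := by
        ext a b
        simp [Matrix.sum_apply, vecMulVec_apply, Pi.single_apply]
      rw [this]
      exact I.sum_mem fun i _ => h i i
  have hN : ∀ (ι : Type) [Fintype ι] (u : ι → Fin n → R),
      (∀ j, ∑ i, u i j • u i ∈ N) → ∀ i, u i ∈ N := by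
    intro ι _ u hu i
    rw [hNdef]
    intro l
    let e := Fintype.equivFin ι
    have := hI (Fintype.card ι) (fun k => vecMulVec (Pi.single l 1) (u (e.symm k))) ?_ (e i)
    · simpa using this
    · rw [e.symm.sum_comp (fun i => (vecMulVec (Pi.single l 1) (u i))ᵀ
        * vecMulVec (Pi.single l (1 : R)) (u i)), hNI]
      intro j
      convert hu j using 1
      ext b
      simp [Matrix.sum_apply, Matrix.mul_apply, vecMulVec_apply, Pi.single_apply]
  rintro k A ⟨X, hX, Y, hY, hS⟩ i0
  rw [hNI]
  intro l0
  by_contra hr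
  obtain ⟨p, hp, v, hv, hrv⟩ := rowKey N hN _ hr
  refine hrv (hp (Fin k × Fin n) (fun q => A q.1 q.2 ⬝ᵥ v) ?_ (i0, l0))
  have h1 : ∑ q : Fin k × Fin n, (A q.1 q.2 ⬝ᵥ v) ^ 2 = v ⬝ᵥ ((∑ i, (A i)ᵀ * A i) *ᵥ v) := by
    rw [Fintype.sum_prod_type, Matrix.sum_mulVec, dotProduct_sum]
    refine Finset.sum_congr rfl fun i _ => ?_
    rw [← Matrix.mulVec_mulVec, Matrix.dotProduct_mulVec, Matrix.vecMul_transpose]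
    simp [dotProduct, mulVec, sq]
  rw [h1, hS, Matrix.add_mulVec, dotProduct_add, Matrix.dotProduct_mulVec v Yᵀ,
    Matrix.vecMul_transpose, dotProduct_comm _ v]
  have h2 : ∀ Z ∈ I, v ⬝ᵥ (Z *ᵥ v) ∈ p := fun Z hZ =>
    p.sum_mem fun j _ => p.mul_mem_left _ (hv _ ((hNI Z).1 hZ j))
  exact p.add_mem (h2 X hX) (h2 Y hY)

/-- **Corollary 1 (real matrix polynomial case):** a left ideal of
`Mₙ(ℝ[x₁,…,x_d])` is real iff it is strongly real. -/
theorem real_iff_stronglyReal_matrix_poly (d n : ℕ)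
    (I : Ideal (Matrix (Fin n) (Fin n) (MvPolynomial (Fin d) ℝ))) :
    I.IsRealLeftIdealT ↔ I.IsStronglyRealLeftIdealT := by
  refine ⟨real_to_strong I, fun h k A hA => h k A ⟨_, hA, 0, I.zero_mem, by simp⟩⟩
end
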